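/- arXiv:1409.6433 — 4 statements merged into one kernel-verified Lean document; each statement's English description precedes it below -/
import Mathlib

section
/- Let d ≥ 2 and let B : ℝ^d → ℝ^{d×d} be a smooth map whose values are skew-symmetric matrices, satisfying the closedness condition ∂_j B_{kl}(x) + ∂_k B_{lj}(x) + ∂_l B_{jk}(x) = 0 for all indices j,k,l and all x ∈ ℝ^d, and assume B is not identically zero. Then there exists a constant c > 0 such that for every smooth A : ℝ^d → ℝ^d with ∂_j A_k − ∂_k A_j = B_{jk} on ℝ^d and every ψ ∈ C_c^∞(ℝ^d, ℂ), one has ∫_{ℝ^d} |∇ψ(x) − iA(x)ψ(x)|² dx − ((d−2)/2)² ∫_{ℝ^d} |ψ(x)|²/|x|² dx ≥ c ∫_{ℝ^d} |ψ(x)|²/(1 + |x|² (log|x|)²) dx. -/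
open MeasureTheory Real

/-- The magnetic energy density `|∇ψ(x) − iA(x)ψ(x)|²`. -/
noncomputable def magEnergy (d : ℕ)
    (A : EuclideanSpace ℝ (Fin d) → EuclideanSpace ℝ (Fin d))
    (ψ : EuclideanSpace ℝ (Fin d) → ℂ) (x : EuclideanSpace ℝ (Fin d)) : ℝ :=
  ∑ j, ‖fderiv ℝ ψ x (EuclideanSpace.single j (1:ℝ)) - Complex.I * (A x j : ℝ) * ψ x‖ ^ 2

/-!
For a vector field `X`, expanding the square gives the ground state identity
`∫ |(∇ - iA) ψ + X ψ|² = ∫ |(∇ - iA) ψ|² + ∫ |ψ|² (|X|² - div X)`. For `X` the logarithmic gradient,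
up to sign, of the regularized Hardy ground state `(|x|² + ε) ^ (-(d - 2) / 4)`, it bounds the
integral `S` of the shifted energy by the left-hand side of the inequality, up to an error that
vanishes as `ε → 0`. So it suffices to bound the logarithmically weighted mass `I` of `ψ` by a
multiple of `S`, uniformly in `ε`.

Replacing `X` by `X - θ W` keeps the square nonnegative, whence
`∫ |ψ|² (2 ⟨X, W⟩ - div W) ≤ θ ∫ |ψ|² |W|² + S / θ`. A field `W` which is radial and of size
`1 / (|x| log |x|)` at infinity, and which is turned by a tangential field on a spherical shell
through a point `p`, makes the factor on the left at least half the logarithmic weight except on a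
small ball around `p`; since `|W|²` is controlled by the weight, this bounds `I` by `θ I + S / θ`
plus the mass `L` of `ψ` in that ball.

The ball is where the magnetic field enters: near a point `p ≠ 0` with `B_{jk}(p) > 0`, the mass is
controlled by the curl `2 Im (conj (D_j ψ) (D_k ψ)) - B_{jk} |ψ|²` of the current
`Im (conj ψ (∇ - iA) ψ)`, which gives `L ≤ C S / θ + C θ I`. A small `θ` absorbs both copies of `I`.
-/

open scoped InnerProductSpace Topology

section CompactComparison

variable {X : Type*} [TopologicalSpace X] {f g : X → ℝ}

theorem exists_forall_le_mul_of_isCompact {s : Set X} (hs : IsCompact s) (hf : ContinuousOn f s)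
    (hg : ContinuousOn g s) (hpos : ∀ x ∈ s, 0 < g x) : ∃ C > 0, ∀ x ∈ s, f x ≤ C * g x := by
  obtain ⟨C, hC⟩ := hs.bddAbove_image (hf.div hg fun x hx => (hpos x hx).ne')
  refine ⟨max C 1, by positivity, fun x hx => ?_⟩
  rw [← div_le_iff₀ (hpos x hx)]
  exact (hC (Set.mem_image_of_mem _ hx)).trans (le_max_left _ _)

theorem exists_forall_le_mul_of_hasCompactSupport (hf : Continuous f) (hs : HasCompactSupport f)
    (hg : Continuous g) (hpos : ∀ x, 0 < g x) : ∃ C > 0, ∀ x, f x ≤ C * g x := by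
  obtain ⟨C, hC, hle⟩ := exists_forall_le_mul_of_isCompact hs.isCompact hf.continuousOn
    hg.continuousOn fun x _ => hpos x
  refine ⟨C, hC, fun x => ?_⟩
  by_cases hx : x ∈ tsupport f
  · exact hle x hx
  · rw [image_eq_zero_of_notMem_tsupport hx]
    exact (mul_pos hC (hpos x)).le

end CompactComparison

section LogWeight

/-- The weight `1 / ((2 + t) log² (2 + t))`. It is evaluated at `t = |x|²`, where it is a positive
smooth substitute for `1 / (1 + |x|² log² |x|)`. -/
noncomputable def logWeight (t : ℝ) : ℝ := 1 / ((2 + t) * log (2 + t) ^ 2)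

variable {t : ℝ}

theorem log_two_add_pos (ht : 0 ≤ t) : 0 < log (2 + t) := log_pos (by linarith)

theorem logWeight_pos (ht : 0 ≤ t) : 0 < logWeight t := by
  have := log_two_add_pos ht
  unfold logWeight
  positivity

theorem logWeight_le_two (ht : 0 ≤ t) : logWeight t ≤ 2 := by
  have hlog : 1 / 2 ≤ log (2 + t) := by
    linarith [log_two_gt_d9, log_le_log two_pos (by linarith : 2 ≤ 2 + t)]
  have hsq : (1 / 2) ^ 2 ≤ log (2 + t) ^ 2 := by gcongr
  rw [logWeight, div_le_iff₀ (by positivity)]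
  nlinarith

theorem continuousOn_logWeight : ContinuousOn logWeight (Set.Ici 0) := fun t ht => by
  have hlog := log_two_add_pos ht
  have ht : 0 ≤ t := ht
  have hcont : ContinuousAt (fun t : ℝ => log (2 + t)) t :=
    ContinuousAt.log (by fun_prop) (by positivity)
  exact (ContinuousAt.div (by fun_prop) (by fun_prop) (by positivity)).continuousWithinAt

theorem hasDerivAt_inv_log_two_add (ht : 0 ≤ t) :
    HasDerivAt (fun s => (log (2 + s))⁻¹) (-logWeight t) t := by
  have hlog := log_two_add_pos ht
  have hd := (((hasDerivAt_id t).const_add 2).log (by simp only [id]; positivity)).fun_inv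
    (by simpa using hlog.ne')
  refine hd.congr_deriv ?_
  simp only [logWeight, id]
  field_simp

theorem inv_one_add_sq_mul_log_sq_le (r : ℝ) :
    1 / (1 + r ^ 2 * log r ^ 2) ≤ 32 * logWeight (r ^ 2) := by
  have hlog := log_two_add_pos (sq_nonneg r)
  rw [logWeight, mul_one_div, div_le_div_iff₀ (by positivity) (by positivity), one_mul]
  rcases le_total (r ^ 2) 2 with h | h
  · have hle : log (2 + r ^ 2) ≤ 1.4 := by
      have : log (2 + r ^ 2) ≤ log (2 ^ 2) := log_le_log (by positivity) (by linarith)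
      rw [log_pow] at this
      push_cast at this
      linarith [log_two_lt_d9]
    have hsq : log (2 + r ^ 2) ^ 2 ≤ 1.4 ^ 2 := by gcongr
    have hnonneg : 0 ≤ r ^ 2 * log r ^ 2 := by positivity
    calc (2 + r ^ 2) * log (2 + r ^ 2) ^ 2 ≤ (2 + 2) * 1.4 ^ 2 := by gcongr
      _ ≤ 32 * (1 + r ^ 2 * log r ^ 2) := by linarith
  · have hle : log (2 + r ^ 2) ≤ 4 * log r := by
      have : log (2 + r ^ 2) ≤ log (r ^ 4) := log_le_log (by positivity) (by nlinarith)
      rw [log_pow] at this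
      exact_mod_cast this
    calc (2 + r ^ 2) * log (2 + r ^ 2) ^ 2 ≤ (r ^ 2 + r ^ 2) * (4 * log r) ^ 2 := by gcongr
      _ ≤ 32 * (1 + r ^ 2 * log r ^ 2) := by linarith

variable {E : Type*} [NormedAddCommGroup E]

theorem logWeight_norm_sq_pos (x : E) : 0 < logWeight (‖x‖ ^ 2) := logWeight_pos (sq_nonneg _)

theorem continuous_logWeight_norm_sq : Continuous fun x : E => logWeight (‖x‖ ^ 2) :=
  continuousOn_logWeight.comp_continuous (by fun_prop) fun x => sq_nonneg ‖x‖

end LogWeight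

section RadialProfile

/-- A smooth step from `0` on `(-∞, t₁]` to `1` on `[t₂, ∞)`, where `t₁ < t₂`. It glues the two
pieces of `radialProfile`. -/
noncomputable def smoothStep (t₁ t₂ t : ℝ) : ℝ := smoothTransition ((t - t₁) / (t₂ - t₁))

/-- The coefficient `n` of the radial field `n(|x|²) x`: a sink at the origin for `t ≤ t₁`, and an
outward flow with `-(t n)' = logWeight t` for `t ≥ t₂`. -/
noncomputable def radialProfile (t₁ t₂ t : ℝ) : ℝ :=
  smoothStep t₁ t₂ t * (t * log (2 + t))⁻¹ - (1 - smoothStep t₁ t₂ t)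

variable {t₁ t₂ t : ℝ}

theorem smoothStep_nonneg (t₁ t₂ t : ℝ) : 0 ≤ smoothStep t₁ t₂ t := smoothTransition.nonneg _

theorem smoothStep_le_one (t₁ t₂ t : ℝ) : smoothStep t₁ t₂ t ≤ 1 := smoothTransition.le_one _

theorem smoothStep_of_le (h₁₂ : t₁ < t₂) (ht : t ≤ t₁) : smoothStep t₁ t₂ t = 0 :=
  smoothTransition.zero_of_nonpos (div_nonpos_of_nonpos_of_nonneg (by linarith) (by linarith))

theorem smoothStep_of_ge (h₁₂ : t₁ < t₂) (ht : t₂ ≤ t) : smoothStep t₁ t₂ t = 1 :=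
  smoothTransition.one_of_one_le (by rw [le_div_iff₀ (by linarith)]; linarith)

theorem contDiff_smoothStep : ContDiff ℝ 1 (smoothStep t₁ t₂) :=
  smoothTransition.contDiff.comp (by fun_prop)

theorem deriv_smoothStep_eq_zero (h₁₂ : t₁ < t₂) (ht : t ∉ Set.Icc t₁ t₂) :
    deriv (smoothStep t₁ t₂) t = 0 := by
  rcases lt_or_ge t t₁ with h | h
  · have hloc : smoothStep t₁ t₂ =ᶠ[nhds t] fun _ => 0 := by
      filter_upwards [Iio_mem_nhds h] with s hs using smoothStep_of_le h₁₂ hs.le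
    rw [hloc.deriv_eq, deriv_const]
  · have hloc : smoothStep t₁ t₂ =ᶠ[nhds t] fun _ => 1 := by
      filter_upwards [Ioi_mem_nhds (not_le.1 fun h' => ht ⟨h, h'⟩)] with s hs
        using smoothStep_of_ge h₁₂ hs.le
    rw [hloc.deriv_eq, deriv_const]

theorem contDiff_radialProfile (h₁ : 0 < t₁) (h₁₂ : t₁ < t₂) :
    ContDiff ℝ 1 (radialProfile t₁ t₂) := by
  refine contDiff_iff_contDiffAt.2 fun t => ?_
  rcases lt_or_ge t t₁ with h | h
  · refine (contDiffAt_const (c := (-1 : ℝ))).congr_of_eventuallyEq ?_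
    filter_upwards [Iio_mem_nhds h] with s hs
    simp [radialProfile, smoothStep_of_le h₁₂ hs.le]
  · have ht : 0 < t := h₁.trans_le h
    have hlog := log_two_add_pos ht.le
    have hsmooth : ContDiffAt ℝ 1 (fun t : ℝ => log (2 + t)) t :=
      ContDiffAt.log (by fun_prop) (by positivity)
    have hσ := (contDiff_smoothStep (t₁ := t₁) (t₂ := t₂)).contDiffAt (x := t)
    exact (hσ.mul ((contDiffAt_id.mul hsmooth).inv (mul_pos ht hlog).ne')).sub
      (contDiffAt_const.sub hσ)

theorem mul_radialProfile (h₁ : 0 < t₁) (h₁₂ : t₁ < t₂) (t : ℝ) :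
    t * radialProfile t₁ t₂ t =
      smoothStep t₁ t₂ t * (log (2 + t))⁻¹ - t * (1 - smoothStep t₁ t₂ t) := by
  rcases eq_or_ne t 0 with rfl | ht
  · simp [smoothStep_of_le h₁₂ h₁.le]
  · rw [radialProfile, mul_inv]
    field_simp

theorem radialProfile_add_mul_deriv (h₁ : 0 < t₁) (h₁₂ : t₁ < t₂) (ht : 0 ≤ t) :
    radialProfile t₁ t₂ t + t * deriv (radialProfile t₁ t₂) t =
      deriv (smoothStep t₁ t₂) t * ((log (2 + t))⁻¹ + t) -
        (smoothStep t₁ t₂ t * logWeight t + (1 - smoothStep t₁ t₂ t)) := by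
  have hσ := (contDiff_smoothStep (t₁ := t₁) (t₂ := t₂)).differentiable one_ne_zero t |>.hasDerivAt
  have hprod := (hasDerivAt_id t).mul
    ((contDiff_radialProfile h₁ h₁₂).differentiable one_ne_zero t).hasDerivAt
  have hformula := (hσ.mul (hasDerivAt_inv_log_two_add ht)).sub
    ((hasDerivAt_id t).mul (hσ.const_sub 1))
  have heq := hprod.unique (hformula.congr_of_eventuallyEq
    (Filter.Eventually.of_forall (mul_radialProfile h₁ h₁₂)))
  simp only [id] at heq
  linarith

theorem radialProfile_of_le (h₁₂ : t₁ < t₂) (ht : t ≤ t₁) : radialProfile t₁ t₂ t = -1 := by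
  simp [radialProfile, smoothStep_of_le h₁₂ ht]

theorem radialProfile_of_ge (h₁₂ : t₁ < t₂) (ht : t₂ ≤ t) :
    radialProfile t₁ t₂ t = (t * log (2 + t))⁻¹ := by
  simp [radialProfile, smoothStep_of_ge h₁₂ ht]

theorem radialProfile_le (h₁ : 0 < t₁) (h₁₂ : t₁ < t₂) :
    ∃ C > 0, ∀ t, 0 ≤ t → radialProfile t₁ t₂ t ≤ C * (t * logWeight t) := by
  set K := (2 + t₁) / t₁ with hK
  refine ⟨K ^ 2, by positivity, fun t ht => ?_⟩
  have hlog := log_two_add_pos ht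
  have hw := logWeight_pos ht
  rcases le_total t t₁ with h | h
  · rw [radialProfile_of_le h₁₂ h]
    linarith [show 0 ≤ K ^ 2 * (t * logWeight t) by positivity]
  have htpos : 0 < t := h₁.trans_le h
  have hKt : 2 + t ≤ K * t := by
    rw [hK, div_mul_eq_mul_div, le_div_iff₀ h₁]
    linarith
  have hlogKt : log (2 + t) ≤ K * t := (log_le_self (by positivity)).trans hKt
  have hσ := smoothStep_le_one t₁ t₂ t
  calc radialProfile t₁ t₂ t ≤ 1 * (t * log (2 + t))⁻¹ - 0 := by
        unfold radialProfile
        gcongr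
        linarith
    _ ≤ K ^ 2 * (t * logWeight t) := by
        rw [one_mul, sub_zero, logWeight, mul_one_div, ← mul_div_assoc, inv_eq_one_div,
          div_le_div_iff₀ (by positivity) (by positivity)]
        calc 1 * ((2 + t) * log (2 + t) ^ 2) = (2 + t) * log (2 + t) * log (2 + t) := by ring
          _ ≤ K * t * (K * t) * log (2 + t) := by gcongr
          _ = K ^ 2 * t * (t * log (2 + t)) := by ring

theorem mul_radialProfile_sq_le (h₁ : 0 < t₁) (h₁₂ : t₁ < t₂) :
    ∃ C > 0, ∀ t, 0 ≤ t → t * radialProfile t₁ t₂ t ^ 2 ≤ C * logWeight t := by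
  have h₂ : 0 < t₂ := h₁.trans h₁₂
  obtain ⟨C, hC, hle⟩ := exists_forall_le_mul_of_isCompact (isCompact_Icc (a := 0) (b := t₂))
    (f := fun t => t * radialProfile t₁ t₂ t ^ 2)
    (by have := (contDiff_radialProfile h₁ h₁₂).continuous; fun_prop)
    (continuousOn_logWeight.mono Set.Icc_subset_Ici_self) fun t ht => logWeight_pos ht.1
  refine ⟨C + (2 + t₂) / t₂, by positivity, fun t ht => ?_⟩
  have hw := logWeight_pos ht
  have hlog := log_two_add_pos ht
  rcases le_total t t₂ with h | h
  · refine (hle t ⟨ht, h⟩).trans ?_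
    gcongr
    exact le_add_of_nonneg_right (by positivity)
  · have htpos : 0 < t := h₂.trans_le h
    have htail : t * radialProfile t₁ t₂ t ^ 2 ≤ (2 + t₂) / t₂ * logWeight t := by
      rw [radialProfile_of_ge h₁₂ h, logWeight]
      field_simp
      linarith
    exact htail.trans (by gcongr; exact le_add_of_nonneg_left hC.le)

theorem logWeight_le_neg_radialProfile_add_mul_deriv (h₁ : 0 < t₁) (h₁₂ : t₁ < t₂) (ht : 0 ≤ t)
    (hout : t ∉ Set.Icc t₁ t₂) :
    logWeight t ≤ -(2 * (radialProfile t₁ t₂ t + t * deriv (radialProfile t₁ t₂) t)) := by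
  have hw := logWeight_pos ht
  have hσ0 := smoothStep_nonneg t₁ t₂ t
  have hcore := mul_nonneg (sub_nonneg.2 (smoothStep_le_one t₁ t₂ t))
    (sub_nonneg.2 (logWeight_le_two ht))
  rw [radialProfile_add_mul_deriv h₁ h₁₂ ht, deriv_smoothStep_eq_zero h₁₂ hout]
  nlinarith

theorem exists_forall_logWeight_sub_le (h₁ : 0 < t₁) (h₁₂ : t₁ < t₂) :
    ∃ M > 0, ∀ t, 0 ≤ t →
      logWeight t - M ≤ -(2 * (radialProfile t₁ t₂ t + t * deriv (radialProfile t₁ t₂) t)) := by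
  have hn := contDiff_radialProfile h₁ h₁₂
  have hcont := hn.continuous
  have := hn.continuous_deriv_one
  obtain ⟨M, hM, hle⟩ := exists_forall_le_mul_of_isCompact (isCompact_Icc (a := t₁) (b := t₂))
    (f := fun t => logWeight t + 2 * (radialProfile t₁ t₂ t + t * deriv (radialProfile t₁ t₂) t))
    (g := fun _ => 1)
    (.add (continuousOn_logWeight.mono fun t ht => h₁.le.trans ht.1) (by fun_prop))
    continuousOn_const fun _ _ => one_pos
  refine ⟨M, hM, fun t ht => ?_⟩
  by_cases hmem : t ∈ Set.Icc t₁ t₂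
  · linarith [hle t hmem]
  · linarith [logWeight_le_neg_radialProfile_add_mul_deriv h₁ h₁₂ ht hmem]

end RadialProfile
section Divergence

variable {E : Type*} [NormedAddCommGroup E] [NormedSpace ℝ E]

/-- The divergence of a vector field, as the trace of its derivative. -/
noncomputable def divergence (W : E → E) (x : E) : ℝ := LinearMap.trace ℝ E (fderiv ℝ W x)

variable {V W : E → E} {f : E → ℝ} {x : E}

theorem hasCompactSupport_divergence (hs : HasCompactSupport W) :
    HasCompactSupport (divergence W) :=
  (hs.fderiv (𝕜 := ℝ)).comp_left (g := fun L : E →L[ℝ] E => LinearMap.trace ℝ E L) (by simp)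

theorem divergence_add (hV : DifferentiableAt ℝ V x) (hW : DifferentiableAt ℝ W x) :
    divergence (fun y => V y + W y) x = divergence V x + divergence W x := by
  simp only [divergence, fderiv_fun_add hV hW, ContinuousLinearMap.toLinearMap_add, map_add]

theorem divergence_sub (hV : DifferentiableAt ℝ V x) (hW : DifferentiableAt ℝ W x) :
    divergence (fun y => V y - W y) x = divergence V x - divergence W x := by
  simp only [divergence, fderiv_fun_sub hV hW, ContinuousLinearMap.toLinearMap_sub, map_sub]

variable [FiniteDimensional ℝ E]

theorem divergence_id : divergence (fun y : E => y) x = Module.finrank ℝ E := by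
  simp [divergence]

theorem divergence_smul (hf : DifferentiableAt ℝ f x) (hW : DifferentiableAt ℝ W x) :
    divergence (fun y => f y • W y) x = fderiv ℝ f x (W x) + f x * divergence W x := by
  have htrace : LinearMap.trace ℝ E ((fderiv ℝ f x).smulRight (W x)) = fderiv ℝ f x (W x) :=
    LinearMap.trace_smulRight (fderiv ℝ f x : E →ₗ[ℝ] ℝ) (W x)
  simp only [divergence, fderiv_fun_smul hf hW, ContinuousLinearMap.toLinearMap_add, map_add,
    htrace, ContinuousLinearMap.toLinearMap_smul, map_smul, smul_eq_mul]
  ring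

theorem divergence_const_smul (c : ℝ) (hW : DifferentiableAt ℝ W x) :
    divergence (fun y => c • W y) x = c * divergence W x := by
  simp [divergence_smul (differentiableAt_const c) hW]

theorem divergence_smul_const (v : E) (hf : DifferentiableAt ℝ f x) :
    divergence (fun y => f y • v) x = fderiv ℝ f x v := by
  rw [divergence_smul hf (differentiableAt_const v)]
  simp [divergence]

theorem continuous_divergence (hW : ContDiff ℝ 1 W) : Continuous (divergence W) :=
  (((LinearMap.trace ℝ E).comp (ContinuousLinearMap.coeLM ℝ)).continuous_of_finiteDimensional).comp
    (hW.continuous_fderiv one_ne_zero)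

end Divergence

section RadialField

variable {E : Type*} [NormedAddCommGroup E] [InnerProductSpace ℝ E] {n : ℝ → ℝ} {x : E}

theorem differentiableAt_comp_norm_sq (hn : DifferentiableAt ℝ n (‖x‖ ^ 2)) :
    DifferentiableAt ℝ (fun y : E => n (‖y‖ ^ 2)) x :=
  hn.comp x ((contDiff_norm_sq ℝ).differentiable one_ne_zero x)

theorem fderiv_comp_norm_sq (hn : DifferentiableAt ℝ n (‖x‖ ^ 2)) (v : E) :
    fderiv ℝ (fun y => n (‖y‖ ^ 2)) x v = 2 * deriv n (‖x‖ ^ 2) * ⟪x, v⟫_ℝ := by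
  have h := hn.hasDerivAt.comp_hasFDerivAt x (hasStrictFDerivAt_norm_sq x).hasFDerivAt
  calc fderiv ℝ (fun y => n (‖y‖ ^ 2)) x v = deriv n (‖x‖ ^ 2) * (2 * ⟪x, v⟫_ℝ) := by
        simpa [Function.comp_def] using DFunLike.congr_fun h.fderiv v
    _ = 2 * deriv n (‖x‖ ^ 2) * ⟪x, v⟫_ℝ := by ring

theorem divergence_comp_norm_sq_smul [FiniteDimensional ℝ E] (hn : DifferentiableAt ℝ n (‖x‖ ^ 2)) :
    divergence (fun y : E => n (‖y‖ ^ 2) • y) x =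
      Module.finrank ℝ E * n (‖x‖ ^ 2) + 2 * ‖x‖ ^ 2 * deriv n (‖x‖ ^ 2) := by
  rw [divergence_smul (differentiableAt_comp_norm_sq hn) differentiableAt_fun_id,
    fderiv_comp_norm_sq hn, divergence_id, real_inner_self_eq_norm_sq]
  ring

end RadialField

section HardyField

variable {E : Type*} [NormedAddCommGroup E] [InnerProductSpace ℝ E]

/-- The logarithmic gradient, up to sign, of the regularized Hardy ground state
`(|x|² + ε) ^ (-(d - 2) / 4)`. -/
noncomputable def hardyField (ε : ℝ) (x : E) : E :=
  (((Module.finrank ℝ E : ℝ) - 2) / 2 / (‖x‖ ^ 2 + ε)) • x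

/-- The divergence `div W - 2 ⟨X, W⟩` of `W` with respect to the density `φ²`, where
`∇φ = -X φ`. -/
noncomputable def twistedDivergence (X W : E → E) (x : E) : ℝ :=
  divergence W x - 2 * ⟪X x, W x⟫_ℝ

theorem contDiff_hardyField {ε : ℝ} (hε : 0 < ε) : ContDiff ℝ 1 (hardyField (E := E) ε) :=
  (contDiff_const.div ((contDiff_norm_sq ℝ).add contDiff_const)
    fun x => by positivity).smul contDiff_id

theorem norm_sq_hardyField_le {ε : ℝ} (hε : 0 ≤ ε) (x : E) :
    ‖hardyField ε x‖ ^ 2 ≤ (((Module.finrank ℝ E : ℝ) - 2) / 2) ^ 2 / ‖x‖ ^ 2 := by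
  rcases eq_or_ne x 0 with rfl | hx
  · simp [hardyField]
  · have hx2 : 0 < ‖x‖ ^ 2 := by positivity
    rw [hardyField, norm_smul, mul_pow, norm_eq_abs, sq_abs, div_pow, div_mul_eq_mul_div,
      div_le_div_iff₀ (by positivity) hx2, mul_assoc, ← sq]
    gcongr
    linarith

variable {X V W : E → E} {n : ℝ → ℝ} {ε : ℝ} {x : E}

theorem twistedDivergence_hardyField_of_inner_eq_zero (hW : ⟪x, W x⟫_ℝ = 0) :
    twistedDivergence (hardyField ε) W x = divergence W x := by
  simp [twistedDivergence, hardyField, inner_smul_left, hW]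

variable [FiniteDimensional ℝ E]

theorem twistedDivergence_add_const_smul (c : ℝ) (hV : DifferentiableAt ℝ V x)
    (hW : DifferentiableAt ℝ W x) :
    twistedDivergence X (fun y => V y + c • W y) x =
      twistedDivergence X V x + c * twistedDivergence X W x := by
  rw [twistedDivergence, divergence_add hV (hW.fun_const_smul c), divergence_const_smul c hW,
    inner_add_right, real_inner_smul_right, twistedDivergence, twistedDivergence]
  ring

theorem twistedDivergence_hardyField_radial (hε : 0 < ε) (hn : DifferentiableAt ℝ n (‖x‖ ^ 2)) :
    twistedDivergence (hardyField ε) (fun y : E => n (‖y‖ ^ 2) • y) x =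
      2 * (n (‖x‖ ^ 2) + ‖x‖ ^ 2 * deriv n (‖x‖ ^ 2)) +
        ((Module.finrank ℝ E : ℝ) - 2) * (ε / (‖x‖ ^ 2 + ε)) * n (‖x‖ ^ 2) := by
  have hden : ‖x‖ ^ 2 + ε ≠ 0 := by positivity
  rw [twistedDivergence, divergence_comp_norm_sq_smul hn, hardyField, real_inner_smul_left,
    real_inner_smul_right, real_inner_self_eq_norm_sq]
  field_simp
  ring

theorem norm_sq_sub_divergence_sub_const_smul (c : ℝ) (hX : DifferentiableAt ℝ X x)
    (hW : DifferentiableAt ℝ W x) :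
    ‖X x - c • W x‖ ^ 2 - divergence (fun y => X y - c • W y) x =
      ‖X x‖ ^ 2 - divergence X x + c * (c * ‖W x‖ ^ 2 - -twistedDivergence X W x) := by
  rw [divergence_sub hX (hW.fun_const_smul c), divergence_const_smul c hW, norm_sub_sq_real,
    real_inner_smul_right, norm_smul, mul_pow, norm_eq_abs, sq_abs, twistedDivergence]
  ring

theorem continuous_twistedDivergence (hX : Continuous X) (hW : ContDiff ℝ 1 W) :
    Continuous (twistedDivergence X W) :=
  (continuous_divergence hW).sub (continuous_const.mul (hX.inner hW.continuous))

theorem norm_sq_hardyField_sub_divergence_le (hd : 2 ≤ Module.finrank ℝ E) (hε : 0 < ε) (x : E) :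
    ‖hardyField ε x‖ ^ 2 - divergence (hardyField ε) x ≤
      -((((Module.finrank ℝ E : ℝ) - 2) / 2) ^ 2 * (‖x‖ ^ 2 / (‖x‖ ^ 2 + ε) ^ 2)) := by
  have hd' : (2 : ℝ) ≤ Module.finrank ℝ E := by exact_mod_cast hd
  set κ := ((Module.finrank ℝ E : ℝ) - 2) / 2 with hκ
  have : 0 ≤ κ := by linarith
  have hden : ‖x‖ ^ 2 + ε ≠ 0 := by positivity
  have hderiv : HasDerivAt (fun t => κ / (t + ε)) (-κ / (‖x‖ ^ 2 + ε) ^ 2) (‖x‖ ^ 2) := by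
    simpa [neg_div] using (hasDerivAt_const (‖x‖ ^ 2) κ).fun_div
      ((hasDerivAt_id (‖x‖ ^ 2)).add_const ε) hden
  have hdiv : divergence (hardyField ε) x =
      (2 * κ + 2) * (κ / (‖x‖ ^ 2 + ε)) + 2 * ‖x‖ ^ 2 * (-κ / (‖x‖ ^ 2 + ε) ^ 2) := by
    rw [← hderiv.deriv, show 2 * κ + 2 = Module.finrank ℝ E by rw [hκ]; ring]
    exact divergence_comp_norm_sq_smul hderiv.differentiableAt
  have hexact : ‖hardyField ε x‖ ^ 2 - divergence (hardyField ε) x =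
      -(κ ^ 2 * (‖x‖ ^ 2 / (‖x‖ ^ 2 + ε) ^ 2)) -
        κ * (2 * κ + 2) * (ε / (‖x‖ ^ 2 + ε) ^ 2) := by
    rw [hdiv, hardyField, norm_smul, mul_pow, norm_eq_abs, sq_abs]
    field_simp
    ring
  rw [hexact]
  exact sub_le_self _ (by positivity)

theorem exists_radial_field (hd : 2 ≤ Module.finrank ℝ E) {t₁ t₂ : ℝ} (h₁ : 0 < t₁)
    (h₁₂ : t₁ < t₂) :
    ∃ W : E → E, ContDiff ℝ 1 W ∧ ∃ C > 0, ∃ ε₀ > 0,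
      (∀ x, ‖W x‖ ^ 2 ≤ C * logWeight (‖x‖ ^ 2)) ∧
      ∀ ε, 0 < ε → ε ≤ ε₀ → ∀ x,
        logWeight (‖x‖ ^ 2) / 2 - C ≤ -twistedDivergence (hardyField ε) W x ∧
        (‖x‖ ^ 2 ∉ Set.Icc t₁ t₂ →
          logWeight (‖x‖ ^ 2) / 2 ≤ -twistedDivergence (hardyField ε) W x) := by
  have hd' : (0 : ℝ) ≤ (Module.finrank ℝ E : ℝ) - 2 := sub_nonneg.2 (by exact_mod_cast hd)
  obtain ⟨C₁, hC₁, hle⟩ := radialProfile_le h₁ h₁₂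
  obtain ⟨C₂, hC₂, hsq⟩ := mul_radialProfile_sq_le h₁ h₁₂
  obtain ⟨M, hM, hdrift⟩ := exists_forall_logWeight_sub_le h₁ h₁₂
  have hn := contDiff_radialProfile h₁ h₁₂
  refine ⟨fun x => radialProfile t₁ t₂ (‖x‖ ^ 2) • x,
    (hn.comp (contDiff_norm_sq ℝ)).smul contDiff_id, C₂ + M, by positivity,
    1 / (2 * (((Module.finrank ℝ E : ℝ) - 2) * C₁ + 1)), by positivity,
    fun x => ?_, fun ε hε hε₀ x => ?_⟩
  · have hw := logWeight_norm_sq_pos x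
    calc ‖radialProfile t₁ t₂ (‖x‖ ^ 2) • x‖ ^ 2
        = ‖x‖ ^ 2 * radialProfile t₁ t₂ (‖x‖ ^ 2) ^ 2 := by
          rw [norm_smul, mul_pow, norm_eq_abs, sq_abs, mul_comm]
      _ ≤ C₂ * logWeight (‖x‖ ^ 2) := hsq _ (sq_nonneg _)
      _ ≤ (C₂ + M) * logWeight (‖x‖ ^ 2) := by gcongr; exact le_add_of_nonneg_right hM.le
  · have ht := sq_nonneg ‖x‖
    have hw := logWeight_norm_sq_pos x
    have herror : ((Module.finrank ℝ E : ℝ) - 2) * (ε / (‖x‖ ^ 2 + ε)) *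
        radialProfile t₁ t₂ (‖x‖ ^ 2) ≤ logWeight (‖x‖ ^ 2) / 2 := by
      have hfrac : ε / (‖x‖ ^ 2 + ε) * ‖x‖ ^ 2 ≤ ε := by
        rw [div_mul_eq_mul_div, div_le_iff₀ (by positivity)]
        nlinarith
      rw [le_div_iff₀ (by positivity)] at hε₀
      calc _ ≤ ((Module.finrank ℝ E : ℝ) - 2) * (ε / (‖x‖ ^ 2 + ε)) *
            (C₁ * (‖x‖ ^ 2 * logWeight (‖x‖ ^ 2))) := by gcongr; exact hle _ ht
        _ = ((Module.finrank ℝ E : ℝ) - 2) * C₁ * (ε / (‖x‖ ^ 2 + ε) * ‖x‖ ^ 2) *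
            logWeight (‖x‖ ^ 2) := by ring
        _ ≤ ((Module.finrank ℝ E : ℝ) - 2) * C₁ * ε * logWeight (‖x‖ ^ 2) := by gcongr
        _ ≤ logWeight (‖x‖ ^ 2) / 2 := by nlinarith
    rw [twistedDivergence_hardyField_radial hε (hn.differentiable one_ne_zero _)]
    refine ⟨by linarith [hdrift _ ht], fun hout => ?_⟩
    linarith [logWeight_le_neg_radialProfile_add_mul_deriv h₁ h₁₂ ht hout]

end HardyField

section AngularField

variable {E : Type*} [NormedAddCommGroup E] [InnerProductSpace ℝ E]

/-- A field tangent to the spheres about the origin, pointing away from the pole `e` (a unit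
vector) towards `-e`. The factor `exp (L ⟨e, x⟩)` makes it strictly convergent away from the pole
when `L` is large. -/
noncomputable def angularField (e : E) (L : ℝ) (x : E) : E :=
  exp (L * ⟪e, x⟫_ℝ) • (⟪e, x⟫_ℝ • x - ‖x‖ ^ 2 • e)

variable {W : E → E} {χ : ℝ → ℝ} {e x : E} {L : ℝ}

theorem contDiff_angularField : ContDiff ℝ 1 (angularField e L) := by
  have hinner : ContDiff ℝ 1 fun x : E => ⟪e, x⟫_ℝ := contDiff_const.inner ℝ contDiff_id
  exact (contDiff_const.mul hinner).exp.smul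
    ((hinner.smul contDiff_id).sub ((contDiff_norm_sq ℝ).smul contDiff_const))

theorem inner_angularField (e : E) (L : ℝ) (x : E) : ⟪x, angularField e L x⟫_ℝ = 0 := by
  rw [angularField, real_inner_smul_right, inner_sub_right, real_inner_smul_right,
    real_inner_smul_right, real_inner_self_eq_norm_sq, real_inner_comm]
  ring

variable [FiniteDimensional ℝ E]

theorem divergence_comp_norm_sq_smul_of_inner_eq_zero (hχ : DifferentiableAt ℝ χ (‖x‖ ^ 2))
    (hW : DifferentiableAt ℝ W x) (hx : ⟪x, W x⟫_ℝ = 0) :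
    divergence (fun y => χ (‖y‖ ^ 2) • W y) x = χ (‖x‖ ^ 2) * divergence W x := by
  rw [divergence_smul (differentiableAt_comp_norm_sq hχ) hW,
    fderiv_comp_norm_sq hχ, hx]
  ring

theorem divergence_angularField (he : ‖e‖ = 1) (L : ℝ) (x : E) :
    divergence (angularField e L) x = -(exp (L * ⟪e, x⟫_ℝ) *
      (L * (‖x‖ ^ 2 - ⟪e, x⟫_ℝ ^ 2) - ((Module.finrank ℝ E : ℝ) - 1) * ⟪e, x⟫_ℝ)) := by
  have hinner : HasFDerivAt (fun y : E => ⟪e, y⟫_ℝ) (innerSL ℝ e) x := (innerSL ℝ e).hasFDerivAt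
  have hexp : HasFDerivAt (fun y : E => exp (L * ⟪e, y⟫_ℝ))
      (exp (L * ⟪e, x⟫_ℝ) • L • innerSL ℝ e) x := (hinner.const_mul L).exp
  have hsq : HasFDerivAt (fun y : E => ‖y‖ ^ 2) (2 • innerSL ℝ x) x :=
    (hasStrictFDerivAt_norm_sq x).hasFDerivAt
  have htangent : divergence (fun y => ⟪e, y⟫_ℝ • y - ‖y‖ ^ 2 • e) x =
      ((Module.finrank ℝ E : ℝ) - 1) * ⟪e, x⟫_ℝ := by
    rw [divergence_sub (hinner.differentiableAt.fun_smul differentiableAt_fun_id)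
      (hsq.differentiableAt.smul_const e), divergence_smul_const e hsq.differentiableAt,
      divergence_smul hinner.differentiableAt differentiableAt_fun_id, divergence_id,
      hinner.fderiv, hsq.fderiv]
    simp only [smul_apply, innerSL_apply_apply, real_inner_comm x e]
    ring
  have hdiff : DifferentiableAt ℝ (fun y : E => ⟪e, y⟫_ℝ • y - ‖y‖ ^ 2 • e) x :=
    (hinner.differentiableAt.fun_smul differentiableAt_fun_id).sub
      (hsq.differentiableAt.smul_const e)
  unfold angularField
  rw [divergence_smul hexp.differentiableAt hdiff, htangent, hexp.fderiv]
  simp only [smul_apply, innerSL_apply_apply, smul_eq_mul, inner_sub_right,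
    real_inner_smul_right, real_inner_self_eq_norm_sq, he]
  ring

/-- With `P = |p|`, `t = |x|²` and `y = ⟨p, x⟩ / |p|`, the last hypothesis says `ρ ≤ |x - p|`. -/
theorem half_le_mul_sub_sq_sub_mul {P ρ D t y : ℝ} (hP : 0 < P) (hρ : 0 < ρ) (hρP : ρ ≤ P)
    (hD : 1 ≤ D) (ht : |t - P ^ 2| ≤ ρ ^ 2 / 4) (hyt : y ^ 2 ≤ t)
    (hout : ρ ^ 2 ≤ t - 2 * P * y + P ^ 2) :
    P / 2 ≤ 8 * (D + 1) * P / ρ ^ 2 * (t - y ^ 2) - D * y := by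
  obtain ⟨hlow, hup⟩ := abs_le.1 ht
  have hρ2 : ρ ^ 2 ≤ P ^ 2 := by gcongr
  set L := 8 * (D + 1) * P / ρ ^ 2 with hL
  have hL0 : 0 ≤ L := by positivity
  rcases le_total y (-(P / 2)) with h | h
  · have hnonneg : 0 ≤ L * (t - y ^ 2) := mul_nonneg hL0 (by linarith)
    linarith [mul_le_mul_of_nonneg_left h (zero_le_one.trans hD),
      mul_le_mul_of_nonneg_right hD hP.le]
  · have hgap : ρ ^ 2 / 8 ≤ t - y ^ 2 := by
      rcases le_total y 0 with h' | h' <;> nlinarith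
    have hmain : (D + 1) * P ≤ L * (t - y ^ 2) := by
      calc (D + 1) * P = L * (ρ ^ 2 / 8) := by rw [hL]; field_simp
        _ ≤ L * (t - y ^ 2) := by gcongr
    have hyP : y ≤ P := by nlinarith
    linarith [mul_le_mul_of_nonneg_left hyP (zero_le_one.trans hD)]

theorem exists_forall_le_neg_divergence_angularField (hd : 2 ≤ Module.finrank ℝ E) {p : E} {ρ : ℝ}
    (hρ : 0 < ρ) (hρp : ρ ≤ ‖p‖) :
    ∃ L, ∃ b > 0, ∀ x ∉ Metric.closedBall p ρ, |‖x‖ ^ 2 - ‖p‖ ^ 2| ≤ ρ ^ 2 / 4 →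
      b ≤ -divergence (angularField (‖p‖⁻¹ • p) L) x := by
  have hp : 0 < ‖p‖ := hρ.trans_le hρp
  set D : ℝ := (Module.finrank ℝ E : ℝ) - 1 with hD
  have hD1 : 1 ≤ D := by
    have : (2 : ℝ) ≤ Module.finrank ℝ E := by exact_mod_cast hd
    linarith
  set e := ‖p‖⁻¹ • p with he
  have he1 : ‖e‖ = 1 := norm_smul_inv_norm (norm_pos_iff.1 hp)
  set L := 8 * (D + 1) * ‖p‖ / ρ ^ 2
  have : 0 ≤ L := by positivity
  refine ⟨L, exp (L * -(2 * ‖p‖)) * (‖p‖ / 2), by positivity, fun x hx hshell => ?_⟩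
  have hy : ⟪e, x⟫_ℝ = ‖p‖⁻¹ * ⟪x, p⟫_ℝ := by
    rw [he, real_inner_smul_left, real_inner_comm]
  have hyx : |⟪e, x⟫_ℝ| ≤ ‖x‖ := by simpa [he1] using abs_real_inner_le_norm e x
  have hout : ρ ^ 2 ≤ ‖x‖ ^ 2 - 2 * ‖p‖ * ⟪e, x⟫_ℝ + ‖p‖ ^ 2 := by
    have hdist : ρ < ‖x - p‖ := by simpa [dist_eq_norm] using hx
    have hexpand : ‖x - p‖ ^ 2 = ‖x‖ ^ 2 - 2 * ‖p‖ * ⟪e, x⟫_ℝ + ‖p‖ ^ 2 := by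
      rw [norm_sub_sq_real, hy]
      field_simp
    rw [← hexpand]
    gcongr
  have hx2 : ‖x‖ ≤ 2 * ‖p‖ := by
    have := (abs_le.1 hshell).2
    nlinarith [norm_nonneg x]
  rw [divergence_angularField he1, neg_neg]
  gcongr
  · linarith [neg_le_of_abs_le hyx]
  · refine half_le_mul_sub_sq_sub_mul hp hρ hρp hD1 hshell ?_ hout
    exact sq_le_sq.2 (by rwa [abs_norm])

theorem exists_angular_field (hd : 2 ≤ Module.finrank ℝ E) {p : E} {ρ : ℝ} (hρ : 0 < ρ)
    (hρp : ρ ≤ ‖p‖) :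
    ∃ V : E → E, ContDiff ℝ 1 V ∧ HasCompactSupport V ∧ (∀ x, ⟪x, V x⟫_ℝ = 0) ∧
      ∀ x ∉ Metric.closedBall p ρ, 0 ≤ -divergence V x ∧
        (‖x‖ ^ 2 ∈ Set.Icc (‖p‖ ^ 2 - ρ ^ 2 / 8) (‖p‖ ^ 2 + ρ ^ 2 / 8) → 1 ≤ -divergence V x) := by
  obtain ⟨L, b, hb, hdrift⟩ := exists_forall_le_neg_divergence_angularField hd hρ hρp
  set T := angularField (‖p‖⁻¹ • p) L
  let χ : ContDiffBump (‖p‖ ^ 2) :=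
    ⟨ρ ^ 2 / 8, ρ ^ 2 / 4, by positivity, by linarith [pow_pos hρ 2]⟩
  have hχ : ContDiff ℝ 1 χ := χ.contDiff
  have hdiv (x : E) : -divergence (fun y => (b⁻¹ * χ (‖y‖ ^ 2)) • T y) x =
      b⁻¹ * χ (‖x‖ ^ 2) * -divergence T x := by
    rw [divergence_comp_norm_sq_smul_of_inner_eq_zero (χ := fun t => b⁻¹ * χ t)
      ((hχ.differentiable one_ne_zero _).const_mul _)
      (contDiff_angularField.differentiable one_ne_zero x) (inner_angularField _ L x), mul_neg]
  refine ⟨fun x => (b⁻¹ * χ (‖x‖ ^ 2)) • T x,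
    (contDiff_const.mul (hχ.comp (contDiff_norm_sq ℝ))).smul contDiff_angularField, ?_,
    fun x => by rw [real_inner_smul_right, inner_angularField, mul_zero], fun x hx => ?_⟩
  · refine .intro (isCompact_closedBall (0 : E) (2 * ‖p‖)) fun x hx => ?_
    have hfar : 2 * ‖p‖ < ‖x‖ := by simpa using hx
    have hzero : χ (‖x‖ ^ 2) = 0 := χ.zero_of_le_dist <| by
      calc ρ ^ 2 / 4 ≤ ‖x‖ ^ 2 - ‖p‖ ^ 2 := by nlinarith
        _ ≤ dist (‖x‖ ^ 2) (‖p‖ ^ 2) := le_abs_self _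
    rw [hzero, mul_zero, zero_smul]
  · rw [hdiv]
    by_cases hshell : |‖x‖ ^ 2 - ‖p‖ ^ 2| ≤ ρ ^ 2 / 4
    · have hle := hdrift x hx hshell
      refine ⟨mul_nonneg (mul_nonneg (by positivity) χ.nonneg) (hb.le.trans hle), fun hmem => ?_⟩
      rw [χ.one_of_mem_closedBall (by rwa [closedBall_eq_Icc]), mul_one]
      exact (le_inv_mul_iff₀ hb).2 (by rwa [mul_one])
    · rw [χ.zero_of_le_dist (not_le.1 hshell).le]
      refine ⟨by simp, fun hmem => absurd ?_ hshell⟩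
      rw [abs_le]
      constructor <;> linarith [hmem.1, hmem.2, sq_nonneg ρ]

end AngularField

section EscapeField

variable {E : Type*} [NormedAddCommGroup E] [InnerProductSpace ℝ E] [FiniteDimensional ℝ E]

theorem exists_escape_field (hd : 2 ≤ Module.finrank ℝ E) {p : E} {ρ : ℝ} (hρ : 0 < ρ)
    (hρp : ρ ≤ ‖p‖) :
    ∃ W : E → E, ContDiff ℝ 1 W ∧ ∃ C > 0, ∃ ε₀ > 0,
      (∀ x, ‖W x‖ ^ 2 ≤ C * logWeight (‖x‖ ^ 2)) ∧
      ∀ ε, 0 < ε → ε ≤ ε₀ → ∀ x,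
        logWeight (‖x‖ ^ 2) / 2 - C ≤ -twistedDivergence (hardyField ε) W x ∧
        (x ∉ Metric.closedBall p ρ →
          logWeight (‖x‖ ^ 2) / 2 ≤ -twistedDivergence (hardyField ε) W x) := by
  have hρ2 := pow_pos hρ 2
  obtain ⟨V, hV, hVs, htan, hVdrift⟩ := exists_angular_field hd hρ hρp
  obtain ⟨R, hR, C₁, hC₁, ε₀, hε₀, hRsq, hRdrift⟩ := exists_radial_field (E := E) hd
    (t₁ := ‖p‖ ^ 2 - ρ ^ 2 / 8) (t₂ := ‖p‖ ^ 2 + ρ ^ 2 / 8) (by nlinarith) (by linarith)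
  obtain ⟨C₂, hC₂, hVsq⟩ := exists_forall_le_mul_of_hasCompactSupport (f := fun x => ‖V x‖ ^ 2)
    (hV.continuous.norm.pow 2) (hVs.comp_left (g := fun v => ‖v‖ ^ 2) (by simp))
    continuous_logWeight_norm_sq logWeight_norm_sq_pos
  obtain ⟨C₃, hC₃, hVdiv⟩ := exists_forall_le_mul_of_isCompact (g := fun _ => 1)
    (isCompact_closedBall p ρ) (continuous_divergence hV).continuousOn continuousOn_const
    fun _ _ => one_pos
  refine ⟨fun x => R x + C₁ • V x, hR.add (contDiff_const.smul hV),
    2 * C₁ + 2 * C₁ ^ 2 * C₂ + (C₁ + C₁ * C₃), by positivity, ε₀, hε₀, fun x => ?_,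
    fun ε hε hle x => ?_⟩
  · have hw := logWeight_norm_sq_pos x
    calc ‖R x + C₁ • V x‖ ^ 2 ≤ 2 * (‖R x‖ ^ 2 + ‖C₁ • V x‖ ^ 2) :=
          (pow_le_pow_left₀ (norm_nonneg _) (norm_add_le _ _) 2).trans add_sq_le
      _ = 2 * ‖R x‖ ^ 2 + 2 * C₁ ^ 2 * ‖V x‖ ^ 2 := by
          rw [norm_smul, mul_pow, norm_eq_abs, sq_abs]
          ring
      _ ≤ 2 * (C₁ * logWeight (‖x‖ ^ 2)) + 2 * C₁ ^ 2 * (C₂ * logWeight (‖x‖ ^ 2)) := by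
          gcongr
          exacts [hRsq x, hVsq x]
      _ = (2 * C₁ + 2 * C₁ ^ 2 * C₂) * logWeight (‖x‖ ^ 2) := by ring
      _ ≤ _ := mul_le_mul_of_nonneg_right (le_add_of_nonneg_right (by positivity)) hw.le
  · obtain ⟨hRglobal, hRout⟩ := hRdrift ε hε hle x
    rw [twistedDivergence_add_const_smul C₁ (hR.differentiable one_ne_zero x)
      (hV.differentiable one_ne_zero x), twistedDivergence_hardyField_of_inner_eq_zero (htan x)]
    have hout (hx : x ∉ Metric.closedBall p ρ) : logWeight (‖x‖ ^ 2) / 2 ≤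
        -(twistedDivergence (hardyField ε) R x + C₁ * divergence V x) := by
      obtain ⟨hnonneg, hshell⟩ := hVdrift x hx
      by_cases hmem : ‖x‖ ^ 2 ∈ Set.Icc (‖p‖ ^ 2 - ρ ^ 2 / 8) (‖p‖ ^ 2 + ρ ^ 2 / 8)
      · nlinarith [hshell hmem]
      · nlinarith [hRout hmem]
    refine ⟨?_, hout⟩
    by_cases hx : x ∈ Metric.closedBall p ρ
    · nlinarith [mul_le_mul_of_nonneg_left (hVdiv x hx) hC₁.le, show 0 ≤ C₁ ^ 2 * C₂ by positivity]
    · linarith [hout hx, show 0 ≤ 2 * C₁ + 2 * C₁ ^ 2 * C₂ + (C₁ + C₁ * C₃) by positivity]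

end EscapeField

section IntegrationByParts

variable {E : Type*} [NormedAddCommGroup E] [NormedSpace ℝ E] [MeasurableSpace E] [BorelSpace E]
  {μ : Measure E}

theorem integrable_fderiv_apply [IsFiniteMeasureOnCompacts μ] {f : E → ℝ} (hf : ContDiff ℝ 1 f)
    (hs : HasCompactSupport f) (v : E) : Integrable (fun x => fderiv ℝ f x v) μ :=
  ((hf.continuous_fderiv one_ne_zero).clm_apply continuous_const).integrable_of_hasCompactSupport
    (hs.fderiv_apply (𝕜 := ℝ) v)

variable [FiniteDimensional ℝ E] [μ.IsAddHaarMeasure]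

theorem integral_fderiv_apply_eq_zero {f : E → ℝ} (hf : ContDiff ℝ 1 f) (hs : HasCompactSupport f)
    (v : E) : ∫ x, fderiv ℝ f x v ∂μ = 0 := by
  have h := integral_mul_fderiv_eq_neg_fderiv_mul_of_integrable (μ := μ) (𝕜 := ℝ) (v := v)
    (f := fun _ : E => (1 : ℝ)) (g := f) (by simp) (by simpa using integrable_fderiv_apply hf hs v)
    (by simpa using hf.continuous.integrable_of_hasCompactSupport hs) (by fun_prop)
    fun x _ => hf.differentiable one_ne_zero x
  simpa using h

end IntegrationByParts

section DivergenceTheorem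

variable {E : Type*} [NormedAddCommGroup E] [InnerProductSpace ℝ E] [FiniteDimensional ℝ E]
  [MeasurableSpace E] [BorelSpace E] {μ : Measure E} [μ.IsAddHaarMeasure]

theorem integral_divergence_eq_zero {W : E → E} (hW : ContDiff ℝ 1 W) (hs : HasCompactSupport W) :
    ∫ x, divergence W x ∂μ = 0 := by
  set b := stdOrthonormalBasis ℝ E
  have hcomp (i) : ContDiff ℝ 1 fun x => ⟪b i, W x⟫_ℝ := contDiff_const.inner ℝ hW
  have hcomp_supp (i) : HasCompactSupport fun x => ⟪b i, W x⟫_ℝ :=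
    hs.comp_left (g := fun v => ⟪b i, v⟫_ℝ) (inner_zero_right _)
  have hdiv (x : E) : divergence W x = ∑ i, fderiv ℝ (fun y => ⟪b i, W y⟫_ℝ) x (b i) := by
    rw [divergence, LinearMap.trace_eq_sum_inner _ b]
    refine Finset.sum_congr rfl fun i _ => ?_
    rw [fderiv_inner_apply ℝ (differentiableAt_const _) (hW.differentiable one_ne_zero x)]
    simp
  simp_rw [hdiv]
  rw [integral_finsetSum _ fun i _ => integrable_fderiv_apply (hcomp i) (hcomp_supp i) (b i)]
  exact Finset.sum_eq_zero fun i _ => integral_fderiv_apply_eq_zero (hcomp i) (hcomp_supp i) (b i)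

end DivergenceTheorem

section ComplexInner

theorem real_inner_I_mul_left (z w : ℂ) : ⟪Complex.I * z, w⟫_ℝ = -⟪z, Complex.I * w⟫_ℝ := by
  rw [Complex.inner, Complex.inner, map_mul, Complex.conj_I, ← Complex.neg_re]
  congr 1
  ring

theorem real_inner_I_mul_self (z : ℂ) : ⟪Complex.I * z, z⟫_ℝ = 0 := by
  linarith [real_inner_I_mul_left z z, real_inner_comm z (Complex.I * z)]

end ComplexInner

section CovariantDerivative

variable {d : ℕ} {F : Type*} [NormedAddCommGroup F] [NormedSpace ℝ F]

/-- The partial derivative `∂_j f`, as the Fréchet derivative applied to the `j`-th unit vector. -/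
noncomputable def partialDeriv (j : Fin d) (f : EuclideanSpace ℝ (Fin d) → F)
    (x : EuclideanSpace ℝ (Fin d)) : F :=
  fderiv ℝ f x (EuclideanSpace.single j 1)

/-- The `j`-th component `∂_j ψ - i A_j ψ` of the covariant derivative `(∇ - iA) ψ`. -/
noncomputable def covDeriv (A : EuclideanSpace ℝ (Fin d) → EuclideanSpace ℝ (Fin d)) (j : Fin d)
    (ψ : EuclideanSpace ℝ (Fin d) → ℂ) (x : EuclideanSpace ℝ (Fin d)) : ℂ :=
  partialDeriv j ψ x - Complex.I * (A x j : ℝ) * ψ x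

/-- The component `B_{jk} = ∂_j A_k - ∂_k A_j` of the magnetic tensor generated by `A`. -/
noncomputable def magneticTensor (A : EuclideanSpace ℝ (Fin d) → EuclideanSpace ℝ (Fin d))
    (j k : Fin d) (x : EuclideanSpace ℝ (Fin d)) : ℝ :=
  partialDeriv j (fun y => A y k) x - partialDeriv k (fun y => A y j) x

/-- The `k`-th component of the current `Im (conj ψ (∇ - iA) ψ)`, written with the real inner
product of `ℂ`. -/
noncomputable def magneticCurrent (A : EuclideanSpace ℝ (Fin d) → EuclideanSpace ℝ (Fin d))
    (ψ : EuclideanSpace ℝ (Fin d) → ℂ) (k : Fin d) (x : EuclideanSpace ℝ (Fin d)) : ℝ :=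
  ⟪Complex.I * ψ x, covDeriv A k ψ x⟫_ℝ

variable {A : EuclideanSpace ℝ (Fin d) → EuclideanSpace ℝ (Fin d)}
  {φ χ ψ : EuclideanSpace ℝ (Fin d) → ℂ} {x : EuclideanSpace ℝ (Fin d)} {j k : Fin d}

theorem partialDeriv_smul {f : EuclideanSpace ℝ (Fin d) → ℝ}
    {u : EuclideanSpace ℝ (Fin d) → F} (hf : DifferentiableAt ℝ f x)
    (hu : DifferentiableAt ℝ u x) :
    partialDeriv j (fun y => f y • u y) x =
      partialDeriv j f x • u x + f x • partialDeriv j u x := by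
  rw [partialDeriv, fderiv_fun_smul hf hu, add_comm]
  rfl

theorem partialDeriv_comm {f : EuclideanSpace ℝ (Fin d) → F} (hf : ContDiff ℝ 2 f)
    (x : EuclideanSpace ℝ (Fin d)) (j k : Fin d) :
    partialDeriv j (partialDeriv k f) x = partialDeriv k (partialDeriv j f) x := by
  have hdiff : DifferentiableAt ℝ (fderiv ℝ f) x :=
    (hf.fderiv_right (m := 1) (by norm_num)).differentiable one_ne_zero x
  have hcomp (v w : EuclideanSpace ℝ (Fin d)) :
      fderiv ℝ (fun y => fderiv ℝ f y v) x w = fderiv ℝ (fderiv ℝ f) x w v := by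
    rw [fderiv_clm_apply hdiff (differentiableAt_const v)]
    simp
  have hsymm : IsSymmSndFDerivAt ℝ f x := hf.contDiffAt.isSymmSndFDerivAt (by simp)
  exact (hcomp _ _).trans ((hsymm _ _).trans (hcomp _ _).symm)

theorem contDiff_partialDeriv {f : EuclideanSpace ℝ (Fin d) → F} (hf : ContDiff ℝ 2 f)
    (j : Fin d) : ContDiff ℝ 1 (partialDeriv j f) :=
  (hf.fderiv_right (by norm_num)).clm_apply contDiff_const

theorem covDeriv_eq_sub_smul (A : EuclideanSpace ℝ (Fin d) → EuclideanSpace ℝ (Fin d)) (j : Fin d)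
    (ψ : EuclideanSpace ℝ (Fin d) → ℂ) :
    covDeriv A j ψ = fun x => partialDeriv j ψ x - A x j • (Complex.I * ψ x) := by
  ext x
  rw [covDeriv, Complex.real_smul]
  ring

theorem contDiff_covDeriv (hA : ContDiff ℝ 1 A) (hψ : ContDiff ℝ 2 ψ) (j : Fin d) :
    ContDiff ℝ 1 (covDeriv A j ψ) := by
  have hAj : ContDiff ℝ 1 fun x => (A x j : ℂ) :=
    Complex.ofRealCLM.contDiff.comp ((contDiff_euclidean.1 hA) j)
  exact (contDiff_partialDeriv hψ j).sub ((contDiff_const.mul hAj).mul (hψ.of_le one_le_two))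

theorem continuous_covDeriv (hA : Continuous A) (hψ : ContDiff ℝ 1 ψ) (j : Fin d) :
    Continuous (covDeriv A j ψ) := by
  have hderiv : Continuous (partialDeriv j ψ) :=
    (hψ.continuous_fderiv one_ne_zero).clm_apply continuous_const
  have hcont := hψ.continuous
  unfold covDeriv
  fun_prop

theorem covDeriv_of_notMem_tsupport (hx : x ∉ tsupport ψ) : covDeriv A j ψ x = 0 := by
  simp [covDeriv, partialDeriv, fderiv_of_notMem_tsupport (𝕜 := ℝ) hx,
    image_eq_zero_of_notMem_tsupport hx]

theorem contDiff_magneticCurrent (hA : ContDiff ℝ 1 A) (hψ : ContDiff ℝ 2 ψ) (k : Fin d) :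
    ContDiff ℝ 1 (magneticCurrent A ψ k) :=
  (contDiff_const.mul (hψ.of_le one_le_two)).inner ℝ (contDiff_covDeriv hA hψ k)

theorem partialDeriv_inner (A : EuclideanSpace ℝ (Fin d) → EuclideanSpace ℝ (Fin d))
    (hφ : DifferentiableAt ℝ φ x) (hχ : DifferentiableAt ℝ χ x) (j : Fin d) :
    partialDeriv j (fun y => ⟪φ y, χ y⟫_ℝ) x =
      ⟪covDeriv A j φ x, χ x⟫_ℝ + ⟪φ x, covDeriv A j χ x⟫_ℝ := by
  rw [partialDeriv, fderiv_inner_apply ℝ hφ hχ, covDeriv_eq_sub_smul, covDeriv_eq_sub_smul,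
    inner_sub_left, inner_sub_right, real_inner_smul_left, real_inner_smul_right,
    real_inner_I_mul_left, partialDeriv, partialDeriv]
  ring

theorem partialDeriv_norm_sq (A : EuclideanSpace ℝ (Fin d) → EuclideanSpace ℝ (Fin d))
    (hψ : DifferentiableAt ℝ ψ x) (j : Fin d) :
    partialDeriv j (fun y => ‖ψ y‖ ^ 2) x = 2 * ⟪covDeriv A j ψ x, ψ x⟫_ℝ := by
  simp_rw [← real_inner_self_eq_norm_sq]
  rw [partialDeriv_inner A hψ hψ, real_inner_comm]
  ring

theorem covDeriv_I_mul (hψ : DifferentiableAt ℝ ψ x) :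
    covDeriv A j (fun y => Complex.I * ψ y) x = Complex.I * covDeriv A j ψ x := by
  simp only [covDeriv, partialDeriv, fderiv_const_mul hψ, smul_apply, smul_eq_mul]
  ring

theorem covDeriv_covDeriv_sub (hA : DifferentiableAt ℝ A x) (hψ : ContDiff ℝ 2 ψ) :
    covDeriv A j (covDeriv A k ψ) x - covDeriv A k (covDeriv A j ψ) x =
      -(magneticTensor A j k x • (Complex.I * ψ x)) := by
  have hψ' : DifferentiableAt ℝ ψ x := hψ.differentiable two_ne_zero x
  have hexpand (l m : Fin d) : partialDeriv l (covDeriv A m ψ) x =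
      partialDeriv l (partialDeriv m ψ) x -
        (partialDeriv l (fun y => A y m) x • (Complex.I * ψ x) +
          A x m • (Complex.I * partialDeriv l ψ x)) := by
    have hAm : DifferentiableAt ℝ (fun y => A y m) x := (differentiableAt_euclidean.1 hA) m
    have hm := (contDiff_partialDeriv hψ m).differentiable one_ne_zero x
    have hI : partialDeriv l (fun y => Complex.I * ψ y) x = Complex.I * partialDeriv l ψ x := by
      simp only [partialDeriv, fderiv_const_mul hψ', smul_apply, smul_eq_mul]
    rw [← hI, ← partialDeriv_smul hAm (hψ'.const_mul _), covDeriv_eq_sub_smul,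
      partialDeriv, fderiv_fun_sub hm (hAm.fun_smul (hψ'.const_mul _))]
    rfl
  rw [covDeriv, hexpand, covDeriv, covDeriv, hexpand, covDeriv, partialDeriv_comm hψ x j k]
  simp only [magneticTensor, Complex.real_smul, Complex.ofReal_sub]
  ring

theorem partialDeriv_magneticCurrent_sub (hA : ContDiff ℝ 1 A) (hψ : ContDiff ℝ 2 ψ) :
    partialDeriv j (magneticCurrent A ψ k) x - partialDeriv k (magneticCurrent A ψ j) x =
      2 * ⟪Complex.I * covDeriv A j ψ x, covDeriv A k ψ x⟫_ℝ -
        magneticTensor A j k x * ‖ψ x‖ ^ 2 := by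
  have hψ' : DifferentiableAt ℝ ψ x := hψ.differentiable two_ne_zero x
  have hexpand (l m : Fin d) : partialDeriv l (magneticCurrent A ψ m) x =
      ⟪Complex.I * covDeriv A l ψ x, covDeriv A m ψ x⟫_ℝ +
        ⟪Complex.I * ψ x, covDeriv A l (covDeriv A m ψ) x⟫_ℝ := by
    rw [← covDeriv_I_mul hψ']
    exact partialDeriv_inner A (hψ'.const_mul _)
      ((contDiff_covDeriv hA hψ m).differentiable one_ne_zero x) l
  have hcomm := covDeriv_covDeriv_sub (j := j) (k := k) (hA.differentiable one_ne_zero x) hψ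
  have hfield : ⟪Complex.I * ψ x, covDeriv A j (covDeriv A k ψ) x⟫_ℝ -
      ⟪Complex.I * ψ x, covDeriv A k (covDeriv A j ψ) x⟫_ℝ =
        -(magneticTensor A j k x * ‖ψ x‖ ^ 2) := by
    rw [← inner_sub_right, hcomm, inner_neg_right, real_inner_smul_right,
      real_inner_self_eq_norm_sq, norm_mul, Complex.norm_I, one_mul]
  rw [hexpand, hexpand, real_inner_I_mul_left (covDeriv A k ψ x), real_inner_comm]
  linarith

end CovariantDerivative

section ShiftedEnergy

variable {d : ℕ}

/-- The density `|(∇ - iA) ψ + X ψ|²`. If `X = -∇φ / φ` it equals `φ² |(∇ - iA) (ψ / φ)|²`. -/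
noncomputable def shiftedEnergy (A X : EuclideanSpace ℝ (Fin d) → EuclideanSpace ℝ (Fin d))
    (ψ : EuclideanSpace ℝ (Fin d) → ℂ) (x : EuclideanSpace ℝ (Fin d)) : ℝ :=
  ∑ j, ‖covDeriv A j ψ x + X x j • ψ x‖ ^ 2

variable {A X W : EuclideanSpace ℝ (Fin d) → EuclideanSpace ℝ (Fin d)}
  {ψ : EuclideanSpace ℝ (Fin d) → ℂ} {g : EuclideanSpace ℝ (Fin d) → ℝ}
  {x : EuclideanSpace ℝ (Fin d)}

theorem shiftedEnergy_nonneg : 0 ≤ shiftedEnergy A X ψ x :=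
  Finset.sum_nonneg fun _ _ => sq_nonneg _

theorem shiftedEnergy_zero : shiftedEnergy A 0 ψ = magEnergy d A ψ := by
  ext x
  simp [shiftedEnergy, magEnergy, covDeriv, partialDeriv]

theorem integrable_shiftedEnergy (hA : Continuous A) (hX : Continuous X) (hψ : ContDiff ℝ 1 ψ)
    (hs : HasCompactSupport ψ) : Integrable (shiftedEnergy A X ψ) := by
  have hD := continuous_covDeriv hA hψ
  have hψ' := hψ.continuous
  refine Continuous.integrable_of_hasCompactSupport (by unfold shiftedEnergy; fun_prop) ?_
  refine .intro hs fun x hx => Finset.sum_eq_zero fun j _ => ?_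
  rw [covDeriv_of_notMem_tsupport hx, image_eq_zero_of_notMem_tsupport hx]
  simp

theorem hasCompactSupport_norm_sq (hs : HasCompactSupport ψ) :
    HasCompactSupport fun x => ‖ψ x‖ ^ 2 :=
  hs.comp_left (g := fun z => ‖z‖ ^ 2) (by simp)

theorem integrable_norm_sq_mul (hψ : Continuous ψ) (hs : HasCompactSupport ψ) (hg : Continuous g) :
    Integrable fun x => ‖ψ x‖ ^ 2 * g x :=
  Continuous.integrable_of_hasCompactSupport (by fun_prop) (hasCompactSupport_norm_sq hs).mul_right

theorem fderiv_apply_eq_sum_partialDeriv (f : EuclideanSpace ℝ (Fin d) → ℝ)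
    (x v : EuclideanSpace ℝ (Fin d)) : fderiv ℝ f x v = ∑ j, v j * partialDeriv j f x := by
  conv_lhs => rw [← (EuclideanSpace.basisFun (Fin d) ℝ).sum_repr v]
  simp [partialDeriv]

theorem shiftedEnergy_eq (hψ : DifferentiableAt ℝ ψ x) (hX : DifferentiableAt ℝ X x) :
    shiftedEnergy A X ψ x = magEnergy d A ψ x + divergence (fun y => ‖ψ y‖ ^ 2 • X y) x +
      ‖ψ x‖ ^ 2 * (‖X x‖ ^ 2 - divergence X x) := by
  have hcross : fderiv ℝ (fun y => ‖ψ y‖ ^ 2) x (X x) =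
      ∑ j, X x j * (2 * ⟪covDeriv A j ψ x, ψ x⟫_ℝ) := by
    simp only [fderiv_apply_eq_sum_partialDeriv, partialDeriv_norm_sq A hψ]
  have hmag : magEnergy d A ψ x = ∑ j, ‖covDeriv A j ψ x‖ ^ 2 := rfl
  have hX_sq : ‖ψ x‖ ^ 2 * ‖X x‖ ^ 2 = ∑ j, ‖X x j • ψ x‖ ^ 2 := by
    simp only [EuclideanSpace.norm_sq_eq, norm_smul, mul_pow, Finset.mul_sum, mul_comm]
  rw [divergence_smul (hψ.norm_sq ℝ) hX, hcross, mul_sub, hX_sq, hmag]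
  have hsplit : shiftedEnergy A X ψ x = ∑ j, ‖covDeriv A j ψ x‖ ^ 2 +
      ∑ j, X x j * (2 * ⟪covDeriv A j ψ x, ψ x⟫_ℝ) + ∑ j, ‖X x j • ψ x‖ ^ 2 := by
    rw [← Finset.sum_add_distrib, ← Finset.sum_add_distrib]
    refine Finset.sum_congr rfl fun j _ => ?_
    rw [norm_add_sq_real, real_inner_smul_right]
    ring
  rw [hsplit]
  ring

theorem integral_shiftedEnergy (hA : Continuous A) (hX : ContDiff ℝ 1 X) (hψ : ContDiff ℝ 1 ψ)
    (hs : HasCompactSupport ψ) :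
    ∫ x, shiftedEnergy A X ψ x =
      (∫ x, magEnergy d A ψ x) + ∫ x, ‖ψ x‖ ^ 2 * (‖X x‖ ^ 2 - divergence X x) := by
  have hfield : ContDiff ℝ 1 fun x => ‖ψ x‖ ^ 2 • X x := (hψ.norm_sq ℝ).smul hX
  have hfield_supp : HasCompactSupport fun x => ‖ψ x‖ ^ 2 • X x :=
    (hasCompactSupport_norm_sq hs).smul_right
  have hmag : Integrable (magEnergy d A ψ) :=
    shiftedEnergy_zero (A := A) ▸ integrable_shiftedEnergy hA continuous_zero hψ hs
  have hdiv : Integrable (divergence fun x => ‖ψ x‖ ^ 2 • X x) :=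
    (continuous_divergence hfield).integrable_of_hasCompactSupport
      (hasCompactSupport_divergence hfield_supp)
  have hpot : Integrable fun x => ‖ψ x‖ ^ 2 * (‖X x‖ ^ 2 - divergence X x) :=
    integrable_norm_sq_mul hψ.continuous hs
      ((hX.continuous.norm.pow 2).sub (continuous_divergence hX))
  simp_rw [shiftedEnergy_eq (hψ.differentiable one_ne_zero _) (hX.differentiable one_ne_zero _)]
  rw [integral_add (by exact hmag.add hdiv) hpot, integral_add hmag hdiv,
    integral_divergence_eq_zero hfield hfield_supp, add_zero]

theorem integral_shiftedEnergy_hardyField_le (hd : 2 ≤ d) {ε : ℝ} (hε : 0 < ε) (hA : Continuous A)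
    (hψ : ContDiff ℝ 1 ψ) (hs : HasCompactSupport ψ) :
    ∫ x, shiftedEnergy A (hardyField ε) ψ x ≤ (∫ x, magEnergy d A ψ x) -
      ((d - 2 : ℝ) / 2) ^ 2 * ∫ x, ‖ψ x‖ ^ 2 * (‖x‖ ^ 2 / (‖x‖ ^ 2 + ε) ^ 2) := by
  have hX := contDiff_hardyField (E := EuclideanSpace ℝ (Fin d)) hε
  have hbound (x : EuclideanSpace ℝ (Fin d)) :=
    norm_sq_hardyField_sub_divergence_le (by simpa using hd) hε x
  rw [finrank_euclideanSpace_fin] at hbound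
  rw [integral_shiftedEnergy hA hX hψ hs, sub_eq_add_neg, ← integral_const_mul, ← integral_neg]
  gcongr
  · exact integrable_norm_sq_mul hψ.continuous hs
      ((hX.continuous.norm.pow 2).sub (continuous_divergence hX))
  · have hquot : Continuous fun x : EuclideanSpace ℝ (Fin d) => ‖x‖ ^ 2 / (‖x‖ ^ 2 + ε) ^ 2 := by
      fun_prop (disch := intro x; positivity)
    exact ((integrable_norm_sq_mul hψ.continuous hs hquot).const_mul _).neg
  · intro x
    linarith [mul_le_mul_of_nonneg_left (hbound x) (sq_nonneg ‖ψ x‖)]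

theorem integral_neg_twistedDivergence_le {θ : ℝ} (hθ : 0 < θ) (hA : Continuous A)
    (hX : ContDiff ℝ 1 X) (hW : ContDiff ℝ 1 W) (hψ : ContDiff ℝ 1 ψ) (hs : HasCompactSupport ψ) :
    ∫ x, ‖ψ x‖ ^ 2 * -twistedDivergence X W x ≤
      θ * (∫ x, ‖ψ x‖ ^ 2 * ‖W x‖ ^ 2) + θ⁻¹ * ∫ x, shiftedEnergy A X ψ x := by
  have hY : ContDiff ℝ 1 fun x => X x - θ • W x := hX.sub (hW.const_smul θ)
  have hpot : Integrable fun x => ‖ψ x‖ ^ 2 * (‖X x‖ ^ 2 - divergence X x) :=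
    integrable_norm_sq_mul hψ.continuous hs
      ((hX.continuous.norm.pow 2).sub (continuous_divergence hX))
  have hW2 : Integrable fun x => ‖ψ x‖ ^ 2 * ‖W x‖ ^ 2 :=
    integrable_norm_sq_mul hψ.continuous hs (hW.continuous.norm.pow 2)
  have htw : Integrable fun x => ‖ψ x‖ ^ 2 * -twistedDivergence X W x :=
    integrable_norm_sq_mul hψ.continuous hs (continuous_twistedDivergence hX.continuous hW).neg
  have hpoint (x : EuclideanSpace ℝ (Fin d)) :
      ‖ψ x‖ ^ 2 * (‖X x - θ • W x‖ ^ 2 - divergence (fun y => X y - θ • W y) x) =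
        ‖ψ x‖ ^ 2 * (‖X x‖ ^ 2 - divergence X x) +
          θ * (θ * (‖ψ x‖ ^ 2 * ‖W x‖ ^ 2) - ‖ψ x‖ ^ 2 * -twistedDivergence X W x) := by
    rw [norm_sq_sub_divergence_sub_const_smul θ (hX.differentiable one_ne_zero x)
      (hW.differentiable one_ne_zero x)]
    ring
  have hexpand : ∫ x, shiftedEnergy A (fun y => X y - θ • W y) ψ x =
      (∫ x, shiftedEnergy A X ψ x) +
        θ * (θ * (∫ x, ‖ψ x‖ ^ 2 * ‖W x‖ ^ 2) - ∫ x, ‖ψ x‖ ^ 2 * -twistedDivergence X W x) := by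
    rw [integral_shiftedEnergy hA hY hψ hs, integral_shiftedEnergy hA hX hψ hs, add_assoc]
    simp_rw [hpoint]
    rw [integral_add hpot (by exact ((hW2.const_mul θ).sub htw).const_mul θ), integral_const_mul,
      integral_sub (hW2.const_mul θ) htw, integral_const_mul]
  have hnonneg : 0 ≤ ∫ x, shiftedEnergy A (fun y => X y - θ • W y) ψ x :=
    integral_nonneg fun _ => shiftedEnergy_nonneg
  have hscaled := mul_nonneg (inv_nonneg.2 hθ.le) (hexpand ▸ hnonneg)
  rw [mul_add, inv_mul_cancel_left₀ hθ.ne'] at hscaled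
  linarith

end ShiftedEnergy

section CurrentEstimate

variable {d : ℕ} {A X : EuclideanSpace ℝ (Fin d) → EuclideanSpace ℝ (Fin d)}
  {ψ : EuclideanSpace ℝ (Fin d) → ℂ} {η : EuclideanSpace ℝ (Fin d) → ℝ}
  {x : EuclideanSpace ℝ (Fin d)} {j k : Fin d} {θ : ℝ}

theorem continuous_magneticTensor (hA : ContDiff ℝ 1 A) (j k : Fin d) :
    Continuous (magneticTensor A j k) := by
  have hcomp (l m : Fin d) : Continuous (partialDeriv l fun y => A y m) :=
    ((contDiff_euclidean.1 hA m).continuous_fderiv one_ne_zero).clm_apply continuous_const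
  exact (hcomp j k).sub (hcomp k j)

theorem hasCompactSupport_magneticCurrent (hs : HasCompactSupport ψ) (k : Fin d) :
    HasCompactSupport (magneticCurrent A ψ k) :=
  .intro hs fun x hx => by
    rw [magneticCurrent, covDeriv_of_notMem_tsupport hx, inner_zero_right]

theorem norm_sq_le_shiftedEnergy (k : Fin d) :
    ‖covDeriv A k ψ x + X x k • ψ x‖ ^ 2 ≤ shiftedEnergy A X ψ x :=
  Finset.single_le_sum (f := fun j => ‖covDeriv A j ψ x + X x j • ψ x‖ ^ 2)
    (fun _ _ => sq_nonneg _) (Finset.mem_univ k)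

theorem partialDeriv_mul_magneticCurrent_sub (hA : ContDiff ℝ 1 A) (hψ : ContDiff ℝ 2 ψ)
    (hη : DifferentiableAt ℝ η x) :
    partialDeriv j (fun y => η y • magneticCurrent A ψ k y) x -
        partialDeriv k (fun y => η y • magneticCurrent A ψ j y) x =
      (partialDeriv j η x - 2 * (η x * X x j)) *
          ⟪Complex.I * ψ x, covDeriv A k ψ x + X x k • ψ x⟫_ℝ -
        (partialDeriv k η x - 2 * (η x * X x k)) *
          ⟪Complex.I * ψ x, covDeriv A j ψ x + X x j • ψ x⟫_ℝ +
        η x * (2 * ⟪Complex.I * (covDeriv A j ψ x + X x j • ψ x),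
          covDeriv A k ψ x + X x k • ψ x⟫_ℝ) -
        ‖ψ x‖ ^ 2 * (η x * magneticTensor A j k x) := by
  have hcurrent (i : Fin d) : DifferentiableAt ℝ (magneticCurrent A ψ i) x :=
    (contDiff_magneticCurrent hA hψ i).differentiable one_ne_zero x
  have hcurl := partialDeriv_magneticCurrent_sub (x := x) (j := j) (k := k) hA hψ
  have hshift (i : Fin d) :
      ⟪Complex.I * ψ x, covDeriv A i ψ x + X x i • ψ x⟫_ℝ = magneticCurrent A ψ i x := by
    rw [inner_add_right, real_inner_smul_right, real_inner_I_mul_self, mul_zero, add_zero]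
    rfl
  have hcross : ⟪Complex.I * (covDeriv A j ψ x + X x j • ψ x),
      covDeriv A k ψ x + X x k • ψ x⟫_ℝ = ⟪Complex.I * covDeriv A j ψ x, covDeriv A k ψ x⟫_ℝ +
        X x j * magneticCurrent A ψ k x - X x k * magneticCurrent A ψ j x := by
    rw [mul_add, mul_smul_comm, inner_add_left, inner_add_right, real_inner_smul_left, hshift,
      real_inner_smul_right, real_inner_I_mul_left _ (ψ x), real_inner_comm (Complex.I * ψ x)]
    simp only [magneticCurrent]
    ring
  rw [partialDeriv_smul hη (hcurrent k), partialDeriv_smul hη (hcurrent j), hcross, hshift, hshift]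
  simp only [smul_eq_mul]
  linear_combination η x * hcurl

theorem mul_inner_I_mul_le (hθ : 0 < θ) (a : ℝ) (z w : ℂ) :
    a * ⟪Complex.I * z, w⟫_ℝ ≤ θ / 2 * (‖z‖ ^ 2 * a ^ 2) + θ⁻¹ / 2 * ‖w‖ ^ 2 := by
  have hI : ‖Complex.I * z‖ = ‖z‖ := by rw [norm_mul, Complex.norm_I, one_mul]
  have hnonneg : 0 ≤ ‖(θ * a) • (Complex.I * z) - w‖ ^ 2 := sq_nonneg _
  rw [norm_sub_sq_real, real_inner_smul_left, norm_smul, hI, mul_pow, norm_eq_abs,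
    sq_abs] at hnonneg
  have hscaled := mul_nonneg (inv_nonneg.2 hθ.le) hnonneg
  field_simp at hscaled ⊢
  linarith

theorem norm_sq_mul_magneticTensor_le {q : ℝ} (hθ : 0 < θ) (hA : ContDiff ℝ 1 A)
    (hψ : ContDiff ℝ 2 ψ) (hη : DifferentiableAt ℝ η x) (hη_mem : η x ∈ Set.Icc 0 1)
    (hq : ∀ i, (partialDeriv i η x - 2 * (η x * X x i)) ^ 2 ≤ q) :
    ‖ψ x‖ ^ 2 * (η x * magneticTensor A j k x) ≤
      partialDeriv k (fun y => η y • magneticCurrent A ψ j y) x -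
          partialDeriv j (fun y => η y • magneticCurrent A ψ k y) x +
        ((2 + θ⁻¹) * shiftedEnergy A X ψ x + θ * (‖ψ x‖ ^ 2 * q)) := by
  set S := shiftedEnergy A X ψ x
  set g := fun i => covDeriv A i ψ x + X x i • ψ x
  have hg (i : Fin d) : ‖g i‖ ^ 2 ≤ S := norm_sq_le_shiftedEnergy i
  have hquadratic : η x * (2 * ⟪Complex.I * g j, g k⟫_ℝ) ≤ 2 * S := by
    have hinner : 2 * ⟪Complex.I * g j, g k⟫_ℝ ≤ 2 * S := by
      have := real_inner_le_norm (Complex.I * g j) (g k)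
      rw [norm_mul, Complex.norm_I, one_mul] at this
      nlinarith [hg j, hg k, sq_nonneg (‖g j‖ - ‖g k‖)]
    exact (mul_le_mul_of_nonneg_left hinner hη_mem.1).trans
      (mul_le_of_le_one_left (by linarith [sq_nonneg ‖g j‖, hg j]) hη_mem.2)
  have hlinear (a : ℝ) (i : Fin d) (ha : a ^ 2 ≤ q) :
      a * ⟪Complex.I * ψ x, g i⟫_ℝ ≤ θ / 2 * (‖ψ x‖ ^ 2 * q) + θ⁻¹ / 2 * S := by
    refine (mul_inner_I_mul_le hθ a (ψ x) (g i)).trans ?_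
    gcongr
    exact hg i
  have hj := hlinear _ k (hq j)
  have hk := hlinear _ j ((neg_sq _).trans_le (hq k))
  have hcurl := partialDeriv_mul_magneticCurrent_sub (X := X) (j := j) (k := k) hA hψ hη
  linarith

theorem integral_norm_sq_mul_magneticTensor_le {q : EuclideanSpace ℝ (Fin d) → ℝ} (hθ : 0 < θ)
    (hA : ContDiff ℝ 1 A) (hX : Continuous X) (hψ : ContDiff ℝ 2 ψ) (hs : HasCompactSupport ψ)
    (hη : ContDiff ℝ 1 η) (hη_mem : ∀ x, η x ∈ Set.Icc 0 1) (hq : Continuous q)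
    (hηq : ∀ x i, (partialDeriv i η x - 2 * (η x * X x i)) ^ 2 ≤ q x) (j k : Fin d) :
    ∫ x, ‖ψ x‖ ^ 2 * (η x * magneticTensor A j k x) ≤
      (2 + θ⁻¹) * (∫ x, shiftedEnergy A X ψ x) + θ * ∫ x, ‖ψ x‖ ^ 2 * q x := by
  have hcurrent (i : Fin d) : ContDiff ℝ 1 fun y => η y • magneticCurrent A ψ i y :=
    hη.smul (contDiff_magneticCurrent hA hψ i)
  have hcurrent_supp (i : Fin d) : HasCompactSupport fun y => η y • magneticCurrent A ψ i y :=
    HasCompactSupport.smul_left (f := η) (hasCompactSupport_magneticCurrent hs i)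
  have hcurl (l m : Fin d) :
      Integrable (partialDeriv l fun y => η y • magneticCurrent A ψ m y) :=
    integrable_fderiv_apply (hcurrent m) (hcurrent_supp m) _
  have hcurl_zero (l m : Fin d) :
      ∫ x, partialDeriv l (fun y => η y • magneticCurrent A ψ m y) x = 0 :=
    integral_fderiv_apply_eq_zero (hcurrent m) (hcurrent_supp m) _
  have hS := (integrable_shiftedEnergy hA.continuous hX (hψ.of_le one_le_two) hs).const_mul
    (2 + θ⁻¹)
  have hpot := (integrable_norm_sq_mul hψ.continuous hs hq).const_mul θ
  calc ∫ x, ‖ψ x‖ ^ 2 * (η x * magneticTensor A j k x)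
      ≤ ∫ x, partialDeriv k (fun y => η y • magneticCurrent A ψ j y) x -
          partialDeriv j (fun y => η y • magneticCurrent A ψ k y) x +
            ((2 + θ⁻¹) * shiftedEnergy A X ψ x + θ * (‖ψ x‖ ^ 2 * q x)) :=
        integral_mono (integrable_norm_sq_mul hψ.continuous hs
          (hη.continuous.mul (continuous_magneticTensor hA j k)))
          (((hcurl k j).sub (hcurl j k)).add (hS.add hpot)) fun x =>
            norm_sq_mul_magneticTensor_le hθ hA hψ (hη.differentiable one_ne_zero x) (hη_mem x)
              (hηq x)
    _ = _ := by
        rw [integral_add (by exact (hcurl k j).sub (hcurl j k)) (by exact hS.add hpot),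
          integral_sub (hcurl k j) (hcurl j k), hcurl_zero, hcurl_zero, sub_zero, zero_add,
          integral_add hS hpot, integral_const_mul, integral_const_mul]

theorem sq_partialDeriv_le (x : EuclideanSpace ℝ (Fin d)) (i : Fin d) :
    partialDeriv i η x ^ 2 ≤ ‖fderiv ℝ η x‖ ^ 2 := by
  have h := (fderiv ℝ η x).le_opNorm (EuclideanSpace.single i 1)
  rw [PiLp.norm_single, norm_one, mul_one] at h
  exact sq_le_sq' (neg_le_of_abs_le h) (le_of_abs_le h)

theorem exists_sq_partialDeriv_sub_hardyField_le (hη : ContDiff ℝ 1 η) (hs : HasCompactSupport η)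
    (h0 : 0 ∉ tsupport η) :
    ∃ Λ > 0, ∀ ε > 0, ∀ (x : EuclideanSpace ℝ (Fin d)) (i : Fin d),
      (partialDeriv i η x - 2 * (η x * hardyField ε x i)) ^ 2 ≤ Λ * logWeight (‖x‖ ^ 2) := by
  have hne (x) (hx : x ∈ tsupport η) : ‖x‖ ^ 2 ≠ 0 :=
    pow_ne_zero 2 (norm_ne_zero_iff.2 fun h => h0 (h ▸ hx))
  have hcont : ContinuousOn (fun x => 2 * (‖fderiv ℝ η x‖ ^ 2 +
      (2 * η x) ^ 2 * ((((d : ℝ) - 2) / 2) ^ 2 / ‖x‖ ^ 2))) (tsupport η) := by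
    have hη' := hη.continuous
    have := hη.continuous_fderiv one_ne_zero
    fun_prop (disch := exact hne)
  obtain ⟨Λ, hΛ, hbound⟩ := exists_forall_le_mul_of_isCompact hs.isCompact hcont
    continuous_logWeight_norm_sq.continuousOn fun x _ => logWeight_norm_sq_pos x
  refine ⟨Λ, hΛ, fun ε hε x i => ?_⟩
  by_cases hx : x ∈ tsupport η
  · refine le_trans ?_ (hbound x hx)
    have hcoord : hardyField ε x i ^ 2 ≤ (((d : ℝ) - 2) / 2) ^ 2 / ‖x‖ ^ 2 := by
      have h := norm_sq_hardyField_le hε.le x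
      rw [finrank_euclideanSpace_fin] at h
      exact (sq_le_sq.2 (by simpa using PiLp.norm_apply_le (hardyField ε x) i)).trans h
    calc (partialDeriv i η x - 2 * (η x * hardyField ε x i)) ^ 2
        ≤ 2 * (partialDeriv i η x ^ 2 + (2 * η x) ^ 2 * hardyField ε x i ^ 2) := by
          linarith [sq_nonneg (partialDeriv i η x + 2 * (η x * hardyField ε x i))]
      _ ≤ _ := by
          gcongr 2 * (?_ + _ * ?_)
          exact sq_partialDeriv_le x i
  · rw [partialDeriv, fderiv_of_notMem_tsupport (𝕜 := ℝ) hx, image_eq_zero_of_notMem_tsupport hx]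
    simpa using mul_nonneg hΛ.le (logWeight_norm_sq_pos x).le

end CurrentEstimate

section LogarithmicImprovement

theorem exists_cutoff {E : Type*} [NormedAddCommGroup E] [NormedSpace ℝ E]
    [HasContDiffBump E] [FiniteDimensional ℝ E] {β : E → ℝ} (hβ : Continuous β) {p : E} (hp : p ≠ 0)
    (hβp : 0 < β p) :
    ∃ ρ > 0, ρ ≤ ‖p‖ ∧ ∃ η : E → ℝ, ContDiff ℝ 1 η ∧ HasCompactSupport η ∧ 0 ∉ tsupport η ∧
      (∀ x, η x ∈ Set.Icc 0 1) ∧ (∀ x ∈ Metric.closedBall p ρ, η x = 1) ∧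
      ∀ x, β p / 2 * η x ≤ η x * β x := by
  obtain ⟨r, hr, hball⟩ := Metric.eventually_nhds_iff_ball.1
    (hβ.continuousAt.eventually (lt_mem_nhds (half_lt_self hβp)))
  have : 0 < ‖p‖ := norm_pos_iff.2 hp
  set ρ := min r ‖p‖ / 4 with hρ_def
  have hρ : 0 < ρ := by positivity
  have hρr : 4 * ρ ≤ r := by linarith [min_le_left r ‖p‖]
  have hρp : 4 * ρ ≤ ‖p‖ := by linarith [min_le_right r ‖p‖]
  let η : ContDiffBump p := ⟨ρ, 2 * ρ, hρ, by linarith⟩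
  refine ⟨ρ, hρ, by linarith, η, η.contDiff, η.hasCompactSupport, ?_,
    fun x => ⟨η.nonneg, η.le_one⟩, fun x hx => η.one_of_mem_closedBall hx, fun x => ?_⟩
  · rw [η.tsupport_eq, Metric.mem_closedBall, dist_zero_left, not_le]
    linarith
  · rw [mul_comm]
    by_cases hx : x ∈ Metric.ball p r
    · exact mul_le_mul_of_nonneg_left (hball x hx).le η.nonneg
    · rw [η.zero_of_le_dist ((show 2 * ρ ≤ r by linarith).trans (not_lt.1 hx)), zero_mul, zero_mul]

theorem exists_mul_le_of_forall_le {b C Λ : ℝ} (hC : 0 < C) (hΛ : 0 < Λ) (hb : 0 < b) :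
    ∃ c > 0, ∀ I L S : ℝ, (∀ θ > 0, I / 2 ≤ C * L + (θ * (C * I) + θ⁻¹ * S)) →
      (∀ θ > 0, b * L ≤ (2 + θ⁻¹) * S + θ * (Λ * I)) → c * I ≤ S := by
  set K := C / b
  have hK : 0 < K := div_pos hC hb
  set θ := (4 * (K * Λ + C))⁻¹
  have hθ : 0 < θ := by positivity
  have hθ_quarter : θ * (K * Λ + C) = 1 / 4 := by
    simp only [θ]
    field_simp
  refine ⟨(4 * (K * (2 + θ⁻¹) + θ⁻¹))⁻¹, by positivity, fun I L S hI hL => ?_⟩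
  rw [inv_mul_le_iff₀ (by positivity)]
  have hCL : C * L ≤ K * ((2 + θ⁻¹) * S + θ * (Λ * I)) :=
    calc C * L = K * (b * L) := by
          simp only [K]
          field_simp
      _ ≤ K * ((2 + θ⁻¹) * S + θ * (Λ * I)) := mul_le_mul_of_nonneg_left (hL θ hθ) hK.le
  have hquarter : θ * (K * Λ + C) * I = 1 / 4 * I := by rw [hθ_quarter]
  linarith [hI θ hθ]

variable {d : ℕ} {p : EuclideanSpace ℝ (Fin d)} {η : EuclideanSpace ℝ (Fin d) → ℝ} {ρ : ℝ}

theorem exists_integral_logWeight_le_add_integral_cutoff (hd : 2 ≤ d) (hρ : 0 < ρ) (hρp : ρ ≤ ‖p‖)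
    (hη : Continuous η) (hη_nonneg : ∀ x, 0 ≤ η x) (hη_one : ∀ x ∈ Metric.closedBall p ρ, η x = 1) :
    ∃ C > 0, ∃ ε₀ > 0, ∀ A : EuclideanSpace ℝ (Fin d) → EuclideanSpace ℝ (Fin d), Continuous A →
      ∀ ψ : EuclideanSpace ℝ (Fin d) → ℂ, ContDiff ℝ 1 ψ → HasCompactSupport ψ →
      ∀ ε, 0 < ε → ε ≤ ε₀ → ∀ θ > 0,
      (∫ x, ‖ψ x‖ ^ 2 * logWeight (‖x‖ ^ 2)) / 2 ≤ C * (∫ x, ‖ψ x‖ ^ 2 * η x) +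
        (θ * (C * ∫ x, ‖ψ x‖ ^ 2 * logWeight (‖x‖ ^ 2)) +
          θ⁻¹ * ∫ x, shiftedEnergy A (hardyField ε) ψ x) := by
  obtain ⟨W, hW, C, hC, ε₀, hε₀, hWsq, hdrift⟩ :=
    exists_escape_field (E := EuclideanSpace ℝ (Fin d)) (by simpa using hd) hρ hρp
  refine ⟨C, hC, ε₀, hε₀, fun A hA ψ hψ hs ε hε hle θ hθ => ?_⟩
  have hX := contDiff_hardyField (E := EuclideanSpace ℝ (Fin d)) hε
  have hint {g : EuclideanSpace ℝ (Fin d) → ℝ} (hg : Continuous g) :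
      Integrable fun x => ‖ψ x‖ ^ 2 * g x := integrable_norm_sq_mul hψ.continuous hs hg
  have htw : Integrable fun x => ‖ψ x‖ ^ 2 * -twistedDivergence (hardyField ε) W x :=
    hint (continuous_twistedDivergence hX.continuous hW).neg
  have hpoint (x : EuclideanSpace ℝ (Fin d)) :
      logWeight (‖x‖ ^ 2) / 2 ≤ C * η x + -twistedDivergence (hardyField ε) W x := by
    obtain ⟨hin, hout⟩ := hdrift ε hε hle x
    by_cases hx : x ∈ Metric.closedBall p ρ
    · rw [hη_one x hx]
      linarith
    · linarith [hout hx, mul_nonneg hC.le (hη_nonneg x)]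
  have hsplit : (∫ x, ‖ψ x‖ ^ 2 * logWeight (‖x‖ ^ 2)) / 2 ≤ C * (∫ x, ‖ψ x‖ ^ 2 * η x) +
      ∫ x, ‖ψ x‖ ^ 2 * -twistedDivergence (hardyField ε) W x := by
    rw [← integral_div, ← integral_const_mul, ← integral_add ((hint hη).const_mul C) htw]
    refine integral_mono ((hint continuous_logWeight_norm_sq).div_const 2)
      (((hint hη).const_mul C).add htw) fun x => ?_
    linarith [mul_le_mul_of_nonneg_left (hpoint x) (sq_nonneg ‖ψ x‖)]
  have hW_int : ∫ x, ‖ψ x‖ ^ 2 * ‖W x‖ ^ 2 ≤ C * ∫ x, ‖ψ x‖ ^ 2 * logWeight (‖x‖ ^ 2) := by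
    rw [← integral_const_mul]
    refine integral_mono (hint (hW.continuous.norm.pow 2))
      ((hint continuous_logWeight_norm_sq).const_mul C) fun x => ?_
    linarith [mul_le_mul_of_nonneg_left (hWsq x) (sq_nonneg ‖ψ x‖)]
  linarith [integral_neg_twistedDivergence_le hθ hA hX hW hψ hs,
    mul_le_mul_of_nonneg_left hW_int hθ.le]

theorem exists_mul_integral_cutoff_le {β : EuclideanSpace ℝ (Fin d) → ℝ} {b : ℝ}
    (hη : ContDiff ℝ 1 η) (hηs : HasCompactSupport η) (h0 : 0 ∉ tsupport η)
    (hη_mem : ∀ x, η x ∈ Set.Icc 0 1) (hb : ∀ x, b * η x ≤ η x * β x) :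
    ∃ Λ > 0, ∀ A : EuclideanSpace ℝ (Fin d) → EuclideanSpace ℝ (Fin d), ContDiff ℝ 1 A →
      ∀ j k, magneticTensor A j k = β →
      ∀ ψ : EuclideanSpace ℝ (Fin d) → ℂ, ContDiff ℝ 2 ψ → HasCompactSupport ψ →
      ∀ ε > 0, ∀ θ > 0,
      b * (∫ x, ‖ψ x‖ ^ 2 * η x) ≤ (2 + θ⁻¹) * (∫ x, shiftedEnergy A (hardyField ε) ψ x) +
        θ * (Λ * ∫ x, ‖ψ x‖ ^ 2 * logWeight (‖x‖ ^ 2)) := by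
  obtain ⟨Λ, hΛ, hbound⟩ := exists_sq_partialDeriv_sub_hardyField_le hη hηs h0
  refine ⟨Λ, hΛ, fun A hA j k hAβ ψ hψ hs ε hε θ hθ => ?_⟩
  have hβ : Continuous β := hAβ ▸ continuous_magneticTensor hA j k
  have hint {g : EuclideanSpace ℝ (Fin d) → ℝ} (hg : Continuous g) :
      Integrable fun x => ‖ψ x‖ ^ 2 * g x := integrable_norm_sq_mul hψ.continuous hs hg
  have hq : Continuous fun x : EuclideanSpace ℝ (Fin d) => Λ * logWeight (‖x‖ ^ 2) :=
    continuous_const.mul continuous_logWeight_norm_sq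
  have hcurl := integral_norm_sq_mul_magneticTensor_le hθ hA (contDiff_hardyField hε).continuous hψ
    hs hη hη_mem hq (hbound ε hε) j k
  have hpot : ∫ x, ‖ψ x‖ ^ 2 * (Λ * logWeight (‖x‖ ^ 2)) =
      Λ * ∫ x, ‖ψ x‖ ^ 2 * logWeight (‖x‖ ^ 2) := by
    simp_rw [mul_left_comm _ Λ, integral_const_mul]
  rw [hAβ, hpot] at hcurl
  refine le_trans ?_ hcurl
  rw [← integral_const_mul]
  refine integral_mono ((hint hη.continuous).const_mul b) (hint (hη.continuous.mul hβ)) fun x => ?_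
  linarith [mul_le_mul_of_nonneg_left (hb x) (sq_nonneg ‖ψ x‖)]

theorem exists_mul_integral_logWeight_le_integral_shiftedEnergy (hd : 2 ≤ d)
    {β : EuclideanSpace ℝ (Fin d) → ℝ} (hβ : Continuous β) (hp : p ≠ 0) (hβp : 0 < β p) :
    ∃ c > 0, ∃ ε₀ > 0, ∀ A : EuclideanSpace ℝ (Fin d) → EuclideanSpace ℝ (Fin d), ContDiff ℝ 1 A →
      ∀ j k, magneticTensor A j k = β →
      ∀ ψ : EuclideanSpace ℝ (Fin d) → ℂ, ContDiff ℝ 2 ψ → HasCompactSupport ψ →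
      ∀ ε, 0 < ε → ε ≤ ε₀ →
      c * (∫ x, ‖ψ x‖ ^ 2 * logWeight (‖x‖ ^ 2)) ≤ ∫ x, shiftedEnergy A (hardyField ε) ψ x := by
  obtain ⟨ρ, hρ, hρp, η, hη, hηs, h0, hη_mem, hη_one, hb⟩ := exists_cutoff hβ hp hβp
  obtain ⟨C, hC, ε₀, hε₀, hglobal⟩ := exists_integral_logWeight_le_add_integral_cutoff hd hρ hρp
    hη.continuous (fun x => (hη_mem x).1) hη_one
  obtain ⟨Λ, hΛ, hlocal⟩ := exists_mul_integral_cutoff_le hη hηs h0 hη_mem hb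
  obtain ⟨c, hc, habsorb⟩ := exists_mul_le_of_forall_le hC hΛ (half_pos hβp)
  exact ⟨c, hc, ε₀, hε₀, fun A hA j k hAβ ψ hψ hs ε hε hle => habsorb _ _ _
    (hglobal A hA.continuous ψ (hψ.of_le one_le_two) hs ε hε hle)
    (hlocal A hA j k hAβ ψ hψ hs ε hε)⟩

end LogarithmicImprovement

section RemovalOfRegularization

variable {E : Type*} [NormedAddCommGroup E] {f : E → ℝ} {ε : ℝ} {x : E}

theorem norm_sq_div_sq_le_inv (hε : 0 ≤ ε) : ‖x‖ ^ 2 / (‖x‖ ^ 2 + ε) ^ 2 ≤ (‖x‖ ^ 2)⁻¹ := by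
  rcases eq_or_ne x 0 with rfl | hx
  · simp
  · have hx2 : 0 < ‖x‖ ^ 2 := by positivity
    rw [← one_div, div_le_div_iff₀ (by positivity) hx2, one_mul, ← sq]
    gcongr
    linarith

theorem tendsto_norm_sq_div_sq (x : E) :
    Filter.Tendsto (fun ε : ℝ => ‖x‖ ^ 2 / (‖x‖ ^ 2 + ε) ^ 2) (𝓝[>] 0)
      (𝓝 (‖x‖ ^ 2)⁻¹) := by
  rcases eq_or_ne x 0 with rfl | hx
  · simp
  · have hcont : ContinuousAt (fun ε : ℝ => ‖x‖ ^ 2 / (‖x‖ ^ 2 + ε) ^ 2) 0 := by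
      fun_prop (disch := positivity)
    have hlim := hcont.tendsto.mono_left (nhdsWithin_le_nhds (s := Set.Ioi 0))
    rwa [add_zero, sq (‖x‖ ^ 2), div_self_mul_self'] at hlim

variable [MeasurableSpace E] [BorelSpace E] {μ : Measure E}

theorem tendsto_integral_mul_norm_sq_div_sq (hf : AEStronglyMeasurable f μ)
    (hint : Integrable (fun x => f x / ‖x‖ ^ 2) μ) :
    Filter.Tendsto (fun ε : ℝ => ∫ x, f x * (‖x‖ ^ 2 / (‖x‖ ^ 2 + ε) ^ 2) ∂μ)
      (𝓝[>] 0) (𝓝 (∫ x, f x / ‖x‖ ^ 2 ∂μ)) := by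
  refine tendsto_integral_filter_of_dominated_convergence _ ?_ ?_ hint.norm ?_
  · refine .of_forall fun ε => hf.mul (Measurable.aestronglyMeasurable ?_)
    fun_prop
  · filter_upwards [self_mem_nhdsWithin] with ε hε
    refine .of_forall fun x => ?_
    have hle := norm_sq_div_sq_le_inv (x := x) (Set.mem_Ioi.1 hε).le
    rw [div_eq_mul_inv (f x), norm_mul, norm_mul]
    refine mul_le_mul_of_nonneg_left ?_ (norm_nonneg (f x))
    exact abs_le_abs_of_nonneg (by positivity) hle
  · refine .of_forall fun x => ?_
    rw [div_eq_mul_inv]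
    exact (tendsto_norm_sq_div_sq x).const_mul _

theorem mul_integral_div_norm_sq_le (hf : AEStronglyMeasurable f μ) (hf_nonneg : ∀ x, 0 ≤ f x)
    {a b ε₀ : ℝ} (ha : 0 ≤ a) (hε₀ : 0 < ε₀)
    (h : ∀ ε, 0 < ε → ε ≤ ε₀ → a * ∫ x, f x * (‖x‖ ^ 2 / (‖x‖ ^ 2 + ε) ^ 2) ∂μ ≤ b) :
    a * ∫ x, f x / ‖x‖ ^ 2 ∂μ ≤ b := by
  by_cases hint : Integrable (fun x => f x / ‖x‖ ^ 2) μ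
  · refine le_of_tendsto ((tendsto_integral_mul_norm_sq_div_sq hf hint).const_mul a) ?_
    filter_upwards [Ioc_mem_nhdsGT hε₀] with ε hε using h ε hε.1 hε.2
  · rw [integral_undef hint, mul_zero]
    refine le_trans (mul_nonneg ha (integral_nonneg fun x => ?_)) (h ε₀ hε₀ le_rfl)
    exact mul_nonneg (hf_nonneg x) (by positivity)

end RemovalOfRegularization

section MainTheorem

variable {d : ℕ}

theorem integral_div_one_add_sq_mul_log_sq_le {ψ : EuclideanSpace ℝ (Fin d) → ℂ}
    (hψ : Continuous ψ) (hs : HasCompactSupport ψ) :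
    ∫ x, ‖ψ x‖ ^ 2 / (1 + ‖x‖ ^ 2 * log ‖x‖ ^ 2) ≤
      32 * ∫ x, ‖ψ x‖ ^ 2 * logWeight (‖x‖ ^ 2) := by
  rw [← integral_const_mul]
  refine integral_mono_of_nonneg (.of_forall fun x => by positivity)
    ((integrable_norm_sq_mul hψ hs continuous_logWeight_norm_sq).const_mul 32)
    (.of_forall fun x => ?_)
  calc ‖ψ x‖ ^ 2 / (1 + ‖x‖ ^ 2 * log ‖x‖ ^ 2)
      = ‖ψ x‖ ^ 2 * (1 / (1 + ‖x‖ ^ 2 * log ‖x‖ ^ 2)) := (mul_one_div _ _).symm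
    _ ≤ ‖ψ x‖ ^ 2 * (32 * logWeight (‖x‖ ^ 2)) := by
        gcongr
        exact inv_one_add_sq_mul_log_sq_le _
    _ = 32 * (‖ψ x‖ ^ 2 * logWeight (‖x‖ ^ 2)) := mul_left_comm _ _ _

theorem exists_ne_zero_magneticTensor_pos
    {A : EuclideanSpace ℝ (Fin d) → EuclideanSpace ℝ (Fin d)} (hA : ContDiff ℝ 1 A)
    (hne : magneticTensor A ≠ 0) :
    2 ≤ d ∧ ∃ p ≠ 0, ∃ j k, 0 < magneticTensor A j k p := by
  have hskew (j k : Fin d) (x) : magneticTensor A k j x = -magneticTensor A j k x :=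
    (neg_sub _ _).symm
  obtain ⟨x₀, j, k, hpos⟩ : ∃ x j k, 0 < magneticTensor A j k x := by
    by_contra! hle
    refine hne (funext fun j => funext fun k => funext fun x => le_antisymm (hle x j k) ?_)
    change 0 ≤ magneticTensor A j k x
    linarith [hle x k j, hskew j k x]
  have hjk : j ≠ k := by
    rintro rfl
    linarith [hskew j j x₀]
  have : Nontrivial (Fin d) := ⟨j, k, hjk⟩
  obtain ⟨p, hp, hp0⟩ := (dense_compl_singleton (0 : EuclideanSpace ℝ (Fin d))).inter_open_nonempty
    _ (isOpen_lt continuous_const (continuous_magneticTensor hA j k)) ⟨x₀, hpos⟩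
  exact ⟨Fin.nontrivial_iff_two_le.1 this, p, hp0, j, k, hp⟩

theorem stmt0_general (d : ℕ) (B : EuclideanSpace ℝ (Fin d) → Fin d → Fin d → ℝ) (hBne : B ≠ 0) :
    ∃ c > (0 : ℝ), ∀ A : EuclideanSpace ℝ (Fin d) → EuclideanSpace ℝ (Fin d),
      ContDiff ℝ 1 A →
      (∀ x j k, magneticTensor A j k x = B x j k) →
      ∀ ψ : EuclideanSpace ℝ (Fin d) → ℂ, ContDiff ℝ 2 ψ → HasCompactSupport ψ →
      (∫ x, magEnergy d A ψ x) - ((d - 2 : ℝ) / 2) ^ 2 * (∫ x, ‖ψ x‖ ^ 2 / ‖x‖ ^ 2)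
      ≥ c * ∫ x, ‖ψ x‖ ^ 2 / (1 + ‖x‖ ^ 2 * (Real.log ‖x‖) ^ 2) := by
  by_cases hgen : ∃ A₀, ContDiff ℝ 1 A₀ ∧ ∀ x j k, magneticTensor A₀ j k x = B x j k
  swap
  · exact ⟨1, one_pos, fun A hA hAB => absurd ⟨A, hA, hAB⟩ hgen⟩
  obtain ⟨A₀, hA₀, hA₀B⟩ := hgen
  have hne : magneticTensor A₀ ≠ 0 := fun h => hBne <| by
    ext x j k
    rw [← hA₀B, h]
    rfl
  obtain ⟨hd, p, hp, j, k, hpos⟩ := exists_ne_zero_magneticTensor_pos hA₀ hne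
  obtain ⟨c, hc, ε₀, hε₀, hreg⟩ := exists_mul_integral_logWeight_le_integral_shiftedEnergy hd
    (continuous_magneticTensor hA₀ j k) hp hpos
  refine ⟨c / 32, by positivity, fun A hA hAB ψ hψ hs => ?_⟩
  have hψ' : ContDiff ℝ 1 ψ := hψ.of_le one_le_two
  have hhardy : ((d - 2 : ℝ) / 2) ^ 2 * ∫ x, ‖ψ x‖ ^ 2 / ‖x‖ ^ 2 ≤
      (∫ x, magEnergy d A ψ x) - c * ∫ x, ‖ψ x‖ ^ 2 * logWeight (‖x‖ ^ 2) := by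
    refine mul_integral_div_norm_sq_le (f := fun x => ‖ψ x‖ ^ 2)
      (hψ.continuous.norm.pow 2).aestronglyMeasurable (fun _ => sq_nonneg _) (sq_nonneg _)
      hε₀ fun ε hε hle => ?_
    have hAA₀ : magneticTensor A j k = magneticTensor A₀ j k :=
      funext fun x => (hAB x j k).trans (hA₀B x j k).symm
    linarith [hreg A hA j k hAA₀ ψ hψ hs ε hε hle,
      integral_shiftedEnergy_hardyField_le hd hε hA.continuous hψ' hs]
  have hweight := integral_div_one_add_sq_mul_log_sq_le hψ.continuous hs
  linarith [mul_le_mul_of_nonneg_left hweight (show 0 ≤ c / 32 by positivity)]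

end MainTheorem

theorem stmt0 (d : ℕ) (hd : 2 ≤ d)
    (B : EuclideanSpace ℝ (Fin d) → Fin d → Fin d → ℝ)
    (hBsmooth : ∀ j k, ContDiff ℝ (⊤ : ℕ∞) fun x => B x j k)
    (hBskew : ∀ x j k, B x k j = - B x j k)
    (hBclosed : ∀ (x : EuclideanSpace ℝ (Fin d)) (j k l : Fin d),
      fderiv ℝ (fun y => B y k l) x (EuclideanSpace.single j (1:ℝ))
      + fderiv ℝ (fun y => B y l j) x (EuclideanSpace.single k (1:ℝ))
      + fderiv ℝ (fun y => B y j k) x (EuclideanSpace.single l (1:ℝ)) = 0)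
    (hBne : B ≠ 0) :
    ∃ c > (0:ℝ), ∀ A : EuclideanSpace ℝ (Fin d) → EuclideanSpace ℝ (Fin d),
      ContDiff ℝ (⊤ : ℕ∞) A →
      (∀ (x : EuclideanSpace ℝ (Fin d)) (j k : Fin d),
        fderiv ℝ (fun y => A y k) x (EuclideanSpace.single j (1:ℝ))
        - fderiv ℝ (fun y => A y j) x (EuclideanSpace.single k (1:ℝ)) = B x j k) →
      ∀ ψ : EuclideanSpace ℝ (Fin d) → ℂ, ContDiff ℝ (⊤ : ℕ∞) ψ → HasCompactSupport ψ →
      (∫ x, magEnergy d A ψ x) - ((d - 2 : ℝ)/2)^2 * (∫ x, ‖ψ x‖^2 / ‖x‖^2)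
      ≥ c * ∫ x, ‖ψ x‖^2 / (1 + ‖x‖^2 * (Real.log ‖x‖)^2) := by
  obtain ⟨c, hc, h⟩ := stmt0_general d B hBne
  exact ⟨c, hc, fun A hA hAB ψ hψ => h A (contDiff_infty.1 hA 1) hAB ψ (contDiff_infty.1 hψ 2)⟩
end

section
/- Let B : ℝ² → ℝ be a smooth compactly supported function and let Φ_B := (1/(2π)) ∫_{ℝ²} B(x) dx be its total flux. If Φ_B ∉ ℤ, then there exists a constant c > 0 such that for every smooth A : ℝ² → ℝ² with ∂_1 A_2 − ∂_2 A_1 = B on ℝ² and every ψ ∈ C_c^∞(ℝ², ℂ), one has ∫_{ℝ²} |∇ψ(x) − iA(x)ψ(x)|² dx ≥ c ∫_{ℝ²} |ψ(x)|²/(1 + |x|²) dx. -/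
open MeasureTheory Real

/-- The magnetic energy density `|∇ψ(x) − iA(x)ψ(x)|²` in the plane. -/
noncomputable def magEnergy2 (A : EuclideanSpace ℝ (Fin 2) → EuclideanSpace ℝ (Fin 2))
    (ψ : EuclideanSpace ℝ (Fin 2) → ℂ) (x : EuclideanSpace ℝ (Fin 2)) : ℝ :=
  ∑ j, ‖fderiv ℝ ψ x (EuclideanSpace.single j (1:ℝ)) - Complex.I * (A x j : ℝ) * ψ x‖ ^ 2

/-
On a circle about the origin, the gauge factor `exp (i ∫ α)` turns the magnetic derivative
`u' - i α u` into an ordinary one, at the price of replacing periodicity by a jump by the holonomy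
`exp (i ∮ A)`. When the holonomy is not `1` the jump controls `u`, so there is a Poincaré inequality
with a constant depending only on the distance of the holonomy from `1`. By Stokes' theorem the
holonomy of a circle of radius `r` is `exp (i ∫_{|x| < r} B)`, which tends to
`exp (2πi Φ_B) ≠ 1`, hence stays away from `1` for all `r ≥ R`, uniformly in `A`. Integrating over
these circles gives the Hardy inequality on `|x| ≥ R`.

On the disc `|x| < R` one expands `0 ≤ ∫ |(∇ - iA)ψ + F ψ|²` for a real vector field `F`, which
gives `∫ (div F - |F|²) |ψ|² ≤ ∫ |(∇ - iA)ψ|²`. For `F = x / (M (1 + |x|²))` with `M = 1 + R²` the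
weight is positive on the disc, and outside it is compensated by the exterior inequality.
-/

open Set Filter Topology

local notation "ℝ²" => EuclideanSpace ℝ (Fin 2)

section Interval

variable {a b : ℝ}

lemma sq_intervalIntegral_le (hab : a ≤ b) {f : ℝ → ℝ} (hf : Continuous f) :
    (∫ t in a..b, f t) ^ 2 ≤ (b - a) * ∫ t in a..b, f t ^ 2 := by
  rcases hab.eq_or_lt with rfl | hlt
  · simp
  have jensen : (⨍ t in Ioc a b, f t) ^ 2 ≤ ⨍ t in Ioc a b, f t ^ 2 :=
    even_two.convexOn_pow.map_set_average_le (by fun_prop) isClosed_univ (by simp [hlt]) (by simp)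
      (by simp) hf.integrableOn_Ioc (hf.pow 2).integrableOn_Ioc
  rw [setAverage_eq, setAverage_eq, measureReal_def, Real.volume_Ioc,
    ENNReal.toReal_ofReal (sub_nonneg.2 hab), ← intervalIntegral.integral_of_le hab,
    ← intervalIntegral.integral_of_le hab, smul_eq_mul, smul_eq_mul] at jensen
  have hne : b - a ≠ 0 := (sub_pos.2 hlt).ne'
  calc (∫ t in a..b, f t) ^ 2
      = (b - a) ^ 2 * ((b - a)⁻¹ * ∫ t in a..b, f t) ^ 2 := by
        field_simp [hne]
    _ ≤ (b - a) ^ 2 * ((b - a)⁻¹ * ∫ t in a..b, f t ^ 2) := by gcongr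
    _ = (b - a) * ∫ t in a..b, f t ^ 2 := by field_simp

lemma norm_sub_le_intervalIntegral_norm_deriv {E : Type*} [NormedAddCommGroup E]
    [NormedSpace ℝ E] [CompleteSpace E] {v v' : ℝ → E} (hv : ∀ t, HasDerivAt v (v' t) t)
    (hv' : Continuous v') {t : ℝ} (ht : t ∈ Icc a b) :
    ‖v b - v t‖ ≤ ∫ τ in a..b, ‖v' τ‖ :=
  calc ‖v b - v t‖ = ‖∫ τ in t..b, v' τ‖ := by
        rw [intervalIntegral.integral_eq_sub_of_hasDerivAt (fun τ _ => hv τ)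
          (hv'.intervalIntegrable _ _)]
    _ ≤ ∫ τ in t..b, ‖v' τ‖ := intervalIntegral.norm_integral_le_integral_norm ht.2
    _ ≤ ∫ τ in a..b, ‖v' τ‖ :=
        intervalIntegral.integral_mono_interval ht.1 ht.2 le_rfl
          (Eventually.of_forall fun _ => norm_nonneg _) (hv'.norm.intervalIntegrable _ _)

lemma poincare_of_mul_norm_le {E : Type*} [NormedAddCommGroup E] [NormedSpace ℝ E]
    [CompleteSpace E] (hab : a ≤ b) {v v' : ℝ → E} (hv : ∀ t, HasDerivAt v (v' t) t)
    (hv' : Continuous v') {δ : ℝ} (hδ : 0 < δ) (hends : δ * ‖v b‖ ≤ ‖v b - v a‖) :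
    ∫ t in a..b, ‖v t‖ ^ 2 ≤ ((b - a) * (1 / δ + 1)) ^ 2 * ∫ t in a..b, ‖v' t‖ ^ 2 := by
  set m := ∫ t in a..b, ‖v' t‖
  have hend : ‖v b‖ ≤ 1 / δ * m := by
    rw [one_div_mul_eq_div, le_div_iff₀' hδ]
    exact hends.trans (norm_sub_le_intervalIntegral_norm_deriv hv hv' ⟨le_rfl, hab⟩)
  have hsup : ∀ t ∈ Icc a b, ‖v t‖ ^ 2 ≤ ((1 / δ + 1) * m) ^ 2 := fun t ht => by
    gcongr
    calc ‖v t‖ ≤ ‖v b‖ + ‖v b - v t‖ := norm_le_norm_add_norm_sub _ _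
      _ ≤ 1 / δ * m + m :=
        add_le_add hend (norm_sub_le_intervalIntegral_norm_deriv hv hv' ht)
      _ = (1 / δ + 1) * m := by ring
  have hvc : Continuous v := continuous_iff_continuousAt.2 fun t => (hv t).continuousAt
  calc ∫ t in a..b, ‖v t‖ ^ 2 ≤ ∫ _ in a..b, ((1 / δ + 1) * m) ^ 2 :=
        intervalIntegral.integral_mono_on hab ((hvc.norm.pow 2).intervalIntegrable _ _)
          intervalIntegrable_const hsup
    _ = (b - a) * (1 / δ + 1) ^ 2 * m ^ 2 := by
        rw [intervalIntegral.integral_const, smul_eq_mul]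
        ring
    _ ≤ (b - a) * (1 / δ + 1) ^ 2 * ((b - a) * ∫ t in a..b, ‖v' t‖ ^ 2) :=
        mul_le_mul_of_nonneg_left (sq_intervalIntegral_le hab hv'.norm)
          (mul_nonneg (sub_nonneg.2 hab) (sq_nonneg _))
    _ = _ := by ring

lemma magnetic_poincare_of_periodic (hab : a ≤ b) {α : ℝ → ℝ} (hα : Continuous α) {u u' : ℝ → ℂ}
    (hu : ∀ t, HasDerivAt u (u' t) t) (hu' : Continuous u') (hper : u a = u b) {δ : ℝ}
    (hδ : 0 < δ) (hflux : δ ≤ ‖Complex.exp ((∫ t in a..b, α t : ℝ) * Complex.I) - 1‖) :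
    ∫ t in a..b, ‖u t‖ ^ 2 ≤
      ((b - a) * (1 / δ + 1)) ^ 2 * ∫ t in a..b, ‖u' t - Complex.I * α t * u t‖ ^ 2 := by
  let φ : ℝ → ℝ := fun t => ∫ τ in t..b, α τ
  let e : ℝ → ℂ := fun t => Complex.exp (φ t * Complex.I)
  have hφ : ∀ t, HasDerivAt φ (-α t) t := fun t =>
    intervalIntegral.integral_hasDerivAt_left (hα.intervalIntegrable _ _)
      (hα.stronglyMeasurableAtFilter _ _) hα.continuousAt
  have he : ∀ t, HasDerivAt e (e t * (-α t * Complex.I)) t := fun t => by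
    simpa using ((hφ t).ofReal_comp.mul_const Complex.I).cexp
  have hec : Continuous e := continuous_iff_continuousAt.2 fun t => (he t).continuousAt
  have huc : Continuous u := continuous_iff_continuousAt.2 fun t => (hu t).continuousAt
  have hnorm : ∀ t, ‖e t‖ = 1 := fun t => Complex.norm_exp_ofReal_mul_I _
  have hv : ∀ t, HasDerivAt (fun t => e t * u t) (e t * (u' t - Complex.I * α t * u t)) t :=
    fun t => ((he t).mul (hu t)).congr_deriv (by ring)
  have hends : δ * ‖e b * u b‖ ≤ ‖e b * u b - e a * u a‖ := by
    have heb : e b = 1 := by simp [e, φ]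
    rw [hper, ← sub_mul, norm_mul, norm_mul, hnorm, one_mul, heb, norm_sub_rev]
    gcongr
  simpa only [norm_mul, hnorm, one_mul] using
    poincare_of_mul_norm_le hab hv (by fun_prop) hδ hends

end Interval

section PolarCoordinates

/-- The unit vector at angle `θ`, so that `r • radialDir θ` is the point with polar coordinates
`(r, θ)`. -/
noncomputable def radialDir (θ : ℝ) : ℝ² := !₂[cos θ, sin θ]

/-- The unit tangent vector at angle `θ` of circles about the origin, oriented counterclockwise. -/
noncomputable def angularDir (θ : ℝ) : ℝ² := !₂[-sin θ, cos θ]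

@[simp] lemma norm_radialDir (θ : ℝ) : ‖radialDir θ‖ = 1 := by
  simp [radialDir, EuclideanSpace.norm_eq]

@[simp] lemma norm_angularDir (θ : ℝ) : ‖angularDir θ‖ = 1 := by
  simp [angularDir, EuclideanSpace.norm_eq]

@[simp] lemma radialDir_pi : radialDir π = radialDir (-π) := by
  simp [radialDir]

lemma hasDerivAt_radialDir (θ : ℝ) : HasDerivAt radialDir (angularDir θ) θ := by
  refine (PiLp.continuousLinearEquiv 2 ℝ fun _ : Fin 2 => ℝ).symm.hasFDerivAt.comp_hasDerivAt θ
    (hasDerivAt_pi.2 fun i => ?_)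
  fin_cases i
  · exact hasDerivAt_cos θ
  · exact hasDerivAt_sin θ

@[fun_prop]
lemma differentiable_radialDir : Differentiable ℝ radialDir := fun θ =>
  (hasDerivAt_radialDir θ).differentiableAt

@[fun_prop]
lemma differentiable_angularDir : Differentiable ℝ angularDir := by
  rw [differentiable_euclidean]
  intro i
  fin_cases i
  · exact differentiable_sin.neg
  · exact differentiable_cos

@[fun_prop]
lemma continuous_radialDir : Continuous radialDir := differentiable_radialDir.continuous

@[fun_prop]
lemma continuous_angularDir : Continuous angularDir := differentiable_angularDir.continuous

variable {F : Type*} [NormedAddCommGroup F] [NormedSpace ℝ F]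

lemma measurePreserving_finTwoArrow_symm_toLp :
    MeasurePreserving ((MeasurableEquiv.finTwoArrow (α := ℝ)).symm.trans
      (MeasurableEquiv.toLp 2 (Fin 2 → ℝ))) :=
  ((volume_preserving_finTwoArrow ℝ).symm _).trans (PiLp.volume_preserving_toLp (Fin 2))

lemma finTwoArrow_symm_toLp_polarCoord_symm (p : ℝ × ℝ) :
    ((MeasurableEquiv.finTwoArrow (α := ℝ)).symm.trans
      (MeasurableEquiv.toLp 2 (Fin 2 → ℝ))) (polarCoord.symm p) = p.1 • radialDir p.2 := by
  ext i
  fin_cases i <;> rfl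

lemma integrableOn_polarCoord_target_iff {f : ℝ × ℝ → F} :
    IntegrableOn (fun p => p.1 • f (polarCoord.symm p)) polarCoord.target ↔ Integrable f := by
  have hmeas := polarCoord.open_target.measurableSet
  rw [← integrableOn_univ, ← integrableOn_congr_set_ae polarCoord_source_ae_eq_univ,
    ← polarCoord.symm_image_target_eq_source,
    integrableOn_image_iff_integrableOn_abs_det_fderiv_smul volume hmeas
      (fun p _ => (hasFDerivAt_polarCoord_symm p).hasFDerivWithinAt) polarCoord.symm.injOn]
  refine integrableOn_congr_fun (fun p hp => ?_) hmeas
  rw [det_fderivPolarCoordSymm, abs_of_pos hp.1]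

lemma integrableOn_polar_iff {f : ℝ² → F} :
    IntegrableOn (fun p : ℝ × ℝ => p.1 • f (p.1 • radialDir p.2)) (Ioi 0 ×ˢ Ioo (-π) π) ↔
      Integrable f := by
  rw [← measurePreserving_finTwoArrow_symm_toLp.integrable_comp_emb
    (MeasurableEquiv.measurableEmbedding _), ← integrableOn_polarCoord_target_iff]
  simp only [Function.comp_apply, finTwoArrow_symm_toLp_polarCoord_symm, polarCoord_target]

lemma integral_eq_integral_polar (f : ℝ² → F) :
    ∫ x, f x = ∫ p in Ioi (0 : ℝ) ×ˢ Ioo (-π) π, p.1 • f (p.1 • radialDir p.2) := by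
  rw [← measurePreserving_finTwoArrow_symm_toLp.integral_comp
    (MeasurableEquiv.measurableEmbedding _), ← integral_comp_polarCoord_symm, polarCoord_target]
  simp only [finTwoArrow_symm_toLp_polarCoord_symm]

lemma norm_smul_radialDir {r : ℝ} (hr : 0 ≤ r) (θ : ℝ) : ‖r • radialDir θ‖ = r := by
  rw [norm_smul, norm_radialDir, mul_one, norm_of_nonneg hr]

lemma smul_indicator_norm_preimage_polar (s : Set ℝ) (f : ℝ² → F) {p : ℝ × ℝ}
    (hp : p ∈ Ioi (0 : ℝ) ×ˢ Ioo (-π) π) :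
    p.1 • (norm ⁻¹' s).indicator f (p.1 • radialDir p.2) =
      (Prod.fst ⁻¹' s).indicator (fun q => q.1 • f (q.1 • radialDir q.2)) p := by
  have hnorm : ‖p.1 • radialDir p.2‖ = p.1 := norm_smul_radialDir (le_of_lt hp.1) p.2
  by_cases hs : p.1 ∈ s <;> simp [indicator, hnorm, hs]

variable {s : Set ℝ} {f : ℝ² → F}

lemma prod_inter_fst_preimage {α β : Type*} (t s : Set α) (u : Set β) :
    t ×ˢ u ∩ Prod.fst ⁻¹' s = (t ∩ s) ×ˢ u := by
  rw [← prod_univ, prod_inter_prod, inter_univ]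

lemma integrableOn_polar (hs : MeasurableSet s) (hf : IntegrableOn f (norm ⁻¹' s)) :
    IntegrableOn (fun p : ℝ × ℝ => p.1 • f (p.1 • radialDir p.2))
      ((Ioi 0 ∩ s) ×ˢ Ioo (-π) π) := by
  rw [← integrable_indicator_iff (measurable_norm hs), ← integrableOn_polar_iff,
    integrableOn_congr_fun (fun p hp => smul_indicator_norm_preimage_polar s f hp)
      (measurableSet_Ioi.prod measurableSet_Ioo),
    integrableOn_indicator_iff (measurable_fst hs), inter_comm, prod_inter_fst_preimage] at hf
  exact hf

lemma intervalIntegral_pi_eq_setIntegral_Ioo (g : ℝ → F) :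
    ∫ θ in (-π)..π, g θ = ∫ θ in Ioo (-π) π, g θ := by
  rw [intervalIntegral.integral_of_le (neg_le_self pi_pos.le), integral_Ioc_eq_integral_Ioo]

lemma setIntegral_norm_preimage (hs : MeasurableSet s) (hf : IntegrableOn f (norm ⁻¹' s)) :
    ∫ x in norm ⁻¹' s, f x =
      ∫ r in Ioi 0 ∩ s, r • ∫ θ in (-π)..π, f (r • radialDir θ) := by
  have hpolar := integrableOn_polar hs hf
  rw [Measure.volume_eq_prod] at hpolar
  rw [← integral_indicator (measurable_norm hs), integral_eq_integral_polar,
    setIntegral_congr_fun (measurableSet_Ioi.prod measurableSet_Ioo)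
      (fun p hp => smul_indicator_norm_preimage_polar s f hp),
    setIntegral_indicator (measurable_fst hs), prod_inter_fst_preimage, Measure.volume_eq_prod,
    setIntegral_prod _ hpolar]
  simp only [integral_smul, intervalIntegral_pi_eq_setIntegral_Ioo]

lemma integrableOn_polar_radial (hs : MeasurableSet s) (hf : IntegrableOn f (norm ⁻¹' s)) :
    IntegrableOn (fun r => r • ∫ θ in (-π)..π, f (r • radialDir θ)) (Ioi 0 ∩ s) := by
  have hpolar := integrableOn_polar hs hf
  rw [IntegrableOn, Measure.volume_eq_prod, ← Measure.prod_restrict] at hpolar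
  simpa only [integral_smul, intervalIntegral_pi_eq_setIntegral_Ioo, IntegrableOn] using
    hpolar.integral_prod_left

end PolarCoordinates

section Stokes

/-- The magnetic field `∂₁A₂ − ∂₂A₁` of a planar vector potential `A`. -/
noncomputable def curl2 (A : ℝ² → ℝ²) (x : ℝ²) : ℝ :=
  fderiv ℝ (fun y => A y 1) x (EuclideanSpace.single 0 1)
    - fderiv ℝ (fun y => A y 0) x (EuclideanSpace.single 1 1)

/-- The coefficient of `dr` in the pullback of the one-form `A` to polar coordinates
`p = (r, θ)`. -/
noncomputable def radialComponent (A : ℝ² → ℝ²) (p : ℝ × ℝ) : ℝ :=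
  inner ℝ (A (p.1 • radialDir p.2)) (radialDir p.2)

/-- The coefficient of `dθ` in the pullback of the one-form `A` to polar coordinates
`p = (r, θ)`; the weight `r` is included. -/
noncomputable def angularComponent (A : ℝ² → ℝ²) (p : ℝ × ℝ) : ℝ :=
  inner ℝ (A (p.1 • radialDir p.2)) (p.1 • angularDir p.2)

/-- The circulation of `A` along the counterclockwise circle of radius `r` about the origin. -/
noncomputable def circulation (A : ℝ² → ℝ²) (r : ℝ) : ℝ :=
  ∫ θ in (-π)..π, angularComponent A (r, θ)

variable {A : ℝ² → ℝ²} {r : ℝ}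

lemma differentiable_radialComponent (hA : Differentiable ℝ A) :
    Differentiable ℝ (radialComponent A) :=
  Differentiable.inner ℝ (by fun_prop) (by fun_prop)

lemma differentiable_angularComponent (hA : Differentiable ℝ A) :
    Differentiable ℝ (angularComponent A) :=
  Differentiable.inner ℝ (by fun_prop) (by fun_prop)

lemma fderiv_prod_apply_one_zero {F : Type*} [NormedAddCommGroup F] [NormedSpace ℝ F]
    {f : ℝ × ℝ → F} {f' : F} {x y : ℝ}
    (hf : DifferentiableAt ℝ f (x, y)) (hslice : HasDerivAt (fun t => f (t, y)) f' x) :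
    fderiv ℝ f (x, y) (1, 0) = f' :=
  (hf.hasFDerivAt.comp_hasDerivAt x ((hasDerivAt_id x).prodMk (hasDerivAt_const x y))).unique hslice

lemma fderiv_prod_apply_zero_one {F : Type*} [NormedAddCommGroup F] [NormedSpace ℝ F]
    {f : ℝ × ℝ → F} {f' : F} {x y : ℝ}
    (hf : DifferentiableAt ℝ f (x, y)) (hslice : HasDerivAt (fun t => f (x, t)) f' y) :
    fderiv ℝ f (x, y) (0, 1) = f' :=
  (hf.hasFDerivAt.comp_hasDerivAt y ((hasDerivAt_const y x).prodMk (hasDerivAt_id y))).unique hslice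

lemma fderiv_angularComponent_radial (hA : Differentiable ℝ A) (r θ : ℝ) :
    fderiv ℝ (angularComponent A) (r, θ) (1, 0) =
      inner ℝ (A (r • radialDir θ)) (angularDir θ)
        + r * inner ℝ (fderiv ℝ A (r • radialDir θ) (radialDir θ)) (angularDir θ) := by
  have hray : ∀ v : ℝ², HasDerivAt (fun t : ℝ => t • v) v r := fun v => by
    simpa using (hasDerivAt_id r).smul_const v
  have hA_ray : HasDerivAt (fun t => A (t • radialDir θ))
      (fderiv ℝ A (r • radialDir θ) (radialDir θ)) r :=
    (hA (r • radialDir θ)).hasFDerivAt.comp_hasDerivAt r (hray _)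
  refine fderiv_prod_apply_one_zero (differentiable_angularComponent hA _) ?_
  refine (hA_ray.inner ℝ (hray (angularDir θ))).congr_deriv ?_
  rw [real_inner_smul_right, add_comm]

lemma fderiv_radialComponent_angular (hA : Differentiable ℝ A) (r θ : ℝ) :
    fderiv ℝ (radialComponent A) (r, θ) (0, 1) =
      inner ℝ (A (r • radialDir θ)) (angularDir θ)
        + r * inner ℝ (fderiv ℝ A (r • radialDir θ) (angularDir θ)) (radialDir θ) := by
  have hA_circle : HasDerivAt (fun t => A (r • radialDir t))
      (fderiv ℝ A (r • radialDir θ) (r • angularDir θ)) θ :=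
    (hA (r • radialDir θ)).hasFDerivAt.comp_hasDerivAt θ ((hasDerivAt_radialDir θ).const_smul r)
  refine fderiv_prod_apply_zero_one (differentiable_radialComponent hA _) ?_
  refine (hA_circle.inner ℝ (hasDerivAt_radialDir θ)).congr_deriv ?_
  rw [map_smul, real_inner_smul_left]

lemma sum_smul_single {ι : Type*} [Fintype ι] [DecidableEq ι] (v : EuclideanSpace ℝ ι) :
    ∑ j, v j • EuclideanSpace.single j (1 : ℝ) = v := by
  simpa using (EuclideanSpace.basisFun ι ℝ).sum_repr v

lemma fderiv_apply_coord {E : Type*} [NormedAddCommGroup E] [NormedSpace ℝ E] {n : ℕ}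
    {G : E → EuclideanSpace ℝ (Fin n)} {x : E} (hG : DifferentiableAt ℝ G x) (i : Fin n) (v : E) :
    fderiv ℝ (fun y => G y i) x v = fderiv ℝ G x v i :=
  congrArg (· v)
    ((PiLp.proj (𝕜 := ℝ) 2 (fun _ : Fin n => ℝ) i).hasFDerivAt.comp x hG.hasFDerivAt).fderiv

lemma inner_apply_sub_inner_apply (L : ℝ² →L[ℝ] ℝ²) (u v : ℝ²) :
    inner ℝ (L u) v - inner ℝ (L v) u = (u 0 * v 1 - u 1 * v 0) *
      (L (EuclideanSpace.single 0 1) 1 - L (EuclideanSpace.single 1 1) 0) := by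
  have hcoord : ∀ (w : ℝ²) (i : Fin 2), L w i =
      w 0 * L (EuclideanSpace.single 0 1) i + w 1 * L (EuclideanSpace.single 1 1) i := fun w i => by
    conv_lhs => rw [← sum_smul_single w]
    simp
  simp only [PiLp.inner_apply, Fin.sum_univ_two, hcoord u, hcoord v, RCLike.inner_apply,
    RCLike.conj_to_real]
  ring

lemma curl2_eq_inner_sub_inner {x : ℝ²} (hA : DifferentiableAt ℝ A x) (θ : ℝ) :
    curl2 A x = inner ℝ (fderiv ℝ A x (radialDir θ)) (angularDir θ)
      - inner ℝ (fderiv ℝ A x (angularDir θ)) (radialDir θ) := by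
  have hdet : radialDir θ 0 * angularDir θ 1 - radialDir θ 1 * angularDir θ 0 = 1 := by
    simp [radialDir, angularDir, ← sq]
  rw [curl2, fderiv_apply_coord hA, fderiv_apply_coord hA, inner_apply_sub_inner_apply, hdet,
    one_mul]

lemma fderiv_angularComponent_sub_fderiv_radialComponent (hA : Differentiable ℝ A) (p : ℝ × ℝ) :
    fderiv ℝ (angularComponent A) p (1, 0) - fderiv ℝ (radialComponent A) p (0, 1) =
      p.1 * curl2 A (p.1 • radialDir p.2) := by
  rw [fderiv_angularComponent_radial hA, fderiv_radialComponent_angular hA,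
    curl2_eq_inner_sub_inner (hA _) p.2]
  ring

/- Stokes' theorem on a disc: in polar coordinates the disc is the rectangle `[0, r] × [-π, π]`, and
of its four edges only `{r} × [-π, π]` contributes. -/
lemma circulation_eq_setIntegral_curl2 (hA : Differentiable ℝ A) (hr : 0 ≤ r)
    (hcurl : IntegrableOn (curl2 A) (Metric.ball 0 r)) :
    circulation A r = ∫ x in Metric.ball 0 r, curl2 A x := by
  have hf := differentiable_angularComponent hA
  have hg := (differentiable_radialComponent hA).neg
  have hdiv : ∀ p : ℝ × ℝ, fderiv ℝ (angularComponent A) p (1, 0)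
      + fderiv ℝ (-radialComponent A) p (0, 1) = p.1 • curl2 A (p.1 • radialDir p.2) := fun p => by
    rw [fderiv_neg, neg_apply, ← sub_eq_add_neg,
      fderiv_angularComponent_sub_fderiv_radialComponent hA, smul_eq_mul]
  have hball : Metric.ball (0 : ℝ²) r = norm ⁻¹' Iio r := ball_zero_eq r
  rw [hball] at hcurl ⊢
  have hrect : (Ioi 0 ∩ Iio r) ×ˢ Ioo (-π) π =ᵐ[volume] uIcc 0 r ×ˢ uIcc (-π) π := by
    rw [Ioi_inter_Iio, uIcc_of_le hr, uIcc_of_le (neg_le_self pi_pos.le)]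
    exact Measure.set_prod_ae_eq Ioo_ae_eq_Icc Ioo_ae_eq_Icc
  have hint : IntegrableOn (fun p : ℝ × ℝ => p.1 • curl2 A (p.1 • radialDir p.2))
      (uIcc 0 r ×ˢ uIcc (-π) π) :=
    (integrableOn_polar measurableSet_Iio hcurl).congr_set_ae hrect.symm
  have hdivergence := integral2_divergence_prod_of_hasFDerivAt (angularComponent A)
    (-radialComponent A) (fderiv ℝ (angularComponent A)) (fderiv ℝ (-radialComponent A))
    0 (-π) r π hf.continuous.continuousOn hg.continuous.continuousOn
    (fun p _ => (hf p).hasFDerivAt) (fun p _ => (hg p).hasFDerivAt)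
    (by simpa only [hdiv] using hint)
  have hper : ∀ t, (-radialComponent A) (t, π) = (-radialComponent A) (t, -π) := fun t => by
    simp [radialComponent]
  have hzero : ∀ θ, angularComponent A (0, θ) = 0 := fun θ => by simp [angularComponent]
  simp only [hdiv, hper, hzero, sub_self, zero_add, sub_zero, intervalIntegral.integral_zero,
    intervalIntegral.integral_smul] at hdivergence
  rw [setIntegral_norm_preimage measurableSet_Iio hcurl, Ioi_inter_Iio,
    ← integral_Ioc_eq_integral_Ioo, ← intervalIntegral.integral_of_le hr]
  exact hdivergence.symm

end Stokes

section Energy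

variable {A : ℝ² → ℝ²} {ψ : ℝ² → ℂ}

lemma magEnergy2_nonneg (A : ℝ² → ℝ²) (ψ : ℝ² → ℂ) (x : ℝ²) : 0 ≤ magEnergy2 A ψ x :=
  Finset.sum_nonneg fun _ _ => sq_nonneg _

lemma norm_fderiv_sub_sq_le_magEnergy2 (A : ℝ² → ℝ²) (ψ : ℝ² → ℂ) (x v : ℝ²) :
    ‖fderiv ℝ ψ x v - Complex.I * (inner ℝ (A x) v : ℝ) * ψ x‖ ^ 2 ≤
      ‖v‖ ^ 2 * magEnergy2 A ψ x := by
  let D : Fin 2 → ℂ := fun j =>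
    fderiv ℝ ψ x (EuclideanSpace.single j (1 : ℝ)) - Complex.I * (A x j : ℝ) * ψ x
  have hψv : fderiv ℝ ψ x v = ∑ j, v j • fderiv ℝ ψ x (EuclideanSpace.single j (1 : ℝ)) := by
    conv_lhs => rw [← sum_smul_single v]
    simp only [map_sum, map_smul]
  have hD : fderiv ℝ ψ x v - Complex.I * (inner ℝ (A x) v : ℝ) * ψ x = ∑ j, v j • D j := by
    simp only [hψv, D, PiLp.inner_apply, Fin.sum_univ_two, Complex.real_smul, RCLike.inner_apply,
      RCLike.conj_to_real]
    push_cast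
    ring
  calc ‖fderiv ℝ ψ x v - Complex.I * (inner ℝ (A x) v : ℝ) * ψ x‖ ^ 2
      = ‖∑ j, v j • D j‖ ^ 2 := by rw [hD]
    _ ≤ (∑ j, ‖v j‖ * ‖D j‖) ^ 2 := by
        gcongr
        simpa only [norm_smul] using norm_sum_le Finset.univ fun j => v j • D j
    _ ≤ (∑ j, ‖v j‖ ^ 2) * ∑ j, ‖D j‖ ^ 2 := Finset.sum_mul_sq_le_sq_mul_sq _ _ _
    _ = ‖v‖ ^ 2 * magEnergy2 A ψ x := by rw [EuclideanSpace.norm_sq_eq, magEnergy2]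

lemma continuous_magEnergy2 (hA : Continuous A) (hψ : ContDiff ℝ 1 ψ) :
    Continuous (magEnergy2 A ψ) := by
  have := hψ.continuous_fderiv one_ne_zero
  have := hψ.continuous
  unfold magEnergy2
  fun_prop

lemma integrable_magEnergy2 (hA : Continuous A) (hψ : ContDiff ℝ 1 ψ)
    (hψc : HasCompactSupport ψ) : Integrable (magEnergy2 A ψ) :=
  (continuous_magEnergy2 hA hψ).integrable_of_hasCompactSupport <|
    HasCompactSupport.intro hψc fun x hx => by
      simp [magEnergy2, image_eq_zero_of_notMem_tsupport hx, fderiv_of_notMem_tsupport ℝ hx]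

lemma integrable_norm_sq_div {E F : Type*} [NormedAddCommGroup E] [MeasurableSpace E]
    [OpensMeasurableSpace E] {μ : Measure E} [IsFiniteMeasureOnCompacts μ] [NormedAddCommGroup F]
    {ψ : E → F} (hψ : Continuous ψ) (hψc : HasCompactSupport ψ) :
    Integrable (fun x => ‖ψ x‖ ^ 2 / (1 + ‖x‖ ^ 2)) μ :=
  Continuous.integrable_of_hasCompactSupport
    (by fun_prop (disch := intro; positivity))
    (HasCompactSupport.intro hψc fun x hx => by simp [image_eq_zero_of_notMem_tsupport hx])

end Energy

section Exterior

variable {A : ℝ² → ℝ²} {ψ : ℝ² → ℂ} {δ : ℝ}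

lemma integral_circle_norm_sq_le (hA : Continuous A) (hψ : ContDiff ℝ 1 ψ) (hδ : 0 < δ) {r : ℝ}
    (hhol : δ ≤ ‖Complex.exp (circulation A r * Complex.I) - 1‖) :
    ∫ θ in (-π)..π, ‖ψ (r • radialDir θ)‖ ^ 2 ≤
      (2 * π * (1 / δ + 1)) ^ 2 *
        (r ^ 2 * ∫ θ in (-π)..π, magEnergy2 A ψ (r • radialDir θ)) := by
  have := hψ.continuous_fderiv one_ne_zero
  have hψ0 := hψ.continuous
  have hE := continuous_magEnergy2 hA hψ
  have hα : Continuous fun θ => angularComponent A (r, θ) :=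
    Continuous.inner (by fun_prop) (by fun_prop)
  have hu : ∀ θ, HasDerivAt (fun t => ψ (r • radialDir t))
      (fderiv ℝ ψ (r • radialDir θ) (r • angularDir θ)) θ := fun θ =>
    (hψ.differentiable one_ne_zero _).hasFDerivAt.comp_hasDerivAt θ
      ((hasDerivAt_radialDir θ).const_smul r)
  have hpoint : ∀ θ, ‖fderiv ℝ ψ (r • radialDir θ) (r • angularDir θ)
      - Complex.I * (angularComponent A (r, θ) : ℝ) * ψ (r • radialDir θ)‖ ^ 2 ≤
      r ^ 2 * magEnergy2 A ψ (r • radialDir θ) := fun θ => by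
    simpa only [norm_smul, norm_angularDir, mul_one, norm_eq_abs, sq_abs,
      angularComponent] using
      norm_fderiv_sub_sq_le_magEnergy2 A ψ (r • radialDir θ) (r • angularDir θ)
  have hpoincare := magnetic_poincare_of_periodic (neg_le_self pi_pos.le) hα hu (by fun_prop)
    (by rw [radialDir_pi]) hδ hhol
  rw [sub_neg_eq_add, ← two_mul] at hpoincare
  refine hpoincare.trans (mul_le_mul_of_nonneg_left ?_ (sq_nonneg _))
  rw [← intervalIntegral.integral_const_mul]
  exact intervalIntegral.integral_mono_on (neg_le_self pi_pos.le)
    (Continuous.intervalIntegrable (by fun_prop) _ _)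
    (Continuous.intervalIntegrable (by fun_prop) _ _) fun θ _ => hpoint θ

lemma integral_circle_weighted_le (hA : Continuous A) (hψ : ContDiff ℝ 1 ψ) (hδ : 0 < δ) {r : ℝ}
    (hr : 0 < r) (hhol : δ ≤ ‖Complex.exp (circulation A r * Complex.I) - 1‖) :
    r • ∫ θ in (-π)..π, ‖ψ (r • radialDir θ)‖ ^ 2 / (1 + ‖r • radialDir θ‖ ^ 2) ≤
      (2 * π * (1 / δ + 1)) ^ 2 * (r • ∫ θ in (-π)..π, magEnergy2 A ψ (r • radialDir θ)) := by
  have hI : 0 ≤ ∫ θ in (-π)..π, magEnergy2 A ψ (r • radialDir θ) :=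
    intervalIntegral.integral_nonneg (neg_le_self pi_pos.le) fun _ _ => magEnergy2_nonneg _ _ _
  simp only [norm_smul_radialDir hr.le, intervalIntegral.integral_div, smul_eq_mul]
  rw [mul_left_comm]
  gcongr
  rw [div_le_iff₀ (by positivity)]
  refine (integral_circle_norm_sq_le hA hψ hδ hhol).trans ?_
  linarith [mul_nonneg (sq_nonneg (2 * π * (1 / δ + 1))) hI]

lemma exterior_hardy (hA : Continuous A) (hψ : ContDiff ℝ 1 ψ) (hψc : HasCompactSupport ψ)
    (hδ : 0 < δ) {R : ℝ}
    (hhol : ∀ r, 0 < r → R ≤ r → δ ≤ ‖Complex.exp (circulation A r * Complex.I) - 1‖) :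
    ∫ x in norm ⁻¹' Ici R, ‖ψ x‖ ^ 2 / (1 + ‖x‖ ^ 2) ≤
      (2 * π * (1 / δ + 1)) ^ 2 * ∫ x, magEnergy2 A ψ x := by
  set K := (2 * π * (1 / δ + 1)) ^ 2
  have hE := integrable_magEnergy2 hA hψ hψc
  have hW := (integrable_norm_sq_div (μ := volume) hψ.continuous hψc).integrableOn
    (s := norm ⁻¹' Ici R)
  calc ∫ x in norm ⁻¹' Ici R, ‖ψ x‖ ^ 2 / (1 + ‖x‖ ^ 2)
      ≤ ∫ r in Ioi 0 ∩ Ici R, K * (r • ∫ θ in (-π)..π, magEnergy2 A ψ (r • radialDir θ)) := by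
        rw [setIntegral_norm_preimage measurableSet_Ici hW]
        exact setIntegral_mono_on (integrableOn_polar_radial measurableSet_Ici hW)
          ((integrableOn_polar_radial measurableSet_Ici hE.integrableOn).const_mul K)
          (measurableSet_Ioi.inter measurableSet_Ici)
          fun r hr => integral_circle_weighted_le hA hψ hδ hr.1 (hhol r hr.1 hr.2)
    _ = K * ∫ x in norm ⁻¹' Ici R, magEnergy2 A ψ x := by
        rw [integral_const_mul, setIntegral_norm_preimage measurableSet_Ici hE.integrableOn]
    _ ≤ K * ∫ x, magEnergy2 A ψ x :=
        mul_le_mul_of_nonneg_left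
          (setIntegral_le_integral hE (Eventually.of_forall (magEnergy2_nonneg A ψ))) (sq_nonneg _)

end Exterior

section VectorField

lemma neg_two_mul_inner_sub_le {F : Type*} [NormedAddCommGroup F] [InnerProductSpace ℝ F] (a : ℝ)
    (z w : F) : -(2 * a * inner ℝ z w) - a ^ 2 * ‖z‖ ^ 2 ≤ ‖w‖ ^ 2 := by
  have hsq : 0 ≤ ‖w‖ ^ 2 + 2 * (a * inner ℝ z w) + a ^ 2 * ‖z‖ ^ 2 := by
    have := sq_nonneg ‖w + a • z‖
    rwa [norm_add_sq_real, real_inner_smul_right, real_inner_comm, norm_smul, mul_pow,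
      norm_eq_abs, sq_abs] at this
  linarith

lemma inner_I_mul_ofReal_mul_self (α : ℝ) (z : ℂ) : inner ℝ z (Complex.I * α * z) = 0 := by
  simp only [Complex.inner, Complex.mul_re, Complex.mul_im, Complex.conj_re, Complex.conj_im,
    Complex.I_re, Complex.I_im, Complex.ofReal_re, Complex.ofReal_im]
  ring

variable {E : Type*} [NormedAddCommGroup E] [NormedSpace ℝ E]

lemma fderiv_norm_sq_eq_inner_sub_I_mul {ψ : E → ℂ} {x : E} (hψ : DifferentiableAt ℝ ψ x)
    (α : ℝ) (v : E) :
    fderiv ℝ (fun y => ‖ψ y‖ ^ 2) x v =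
      2 * inner ℝ (ψ x) (fderiv ℝ ψ x v - Complex.I * α * ψ x) := by
  rw [hψ.hasFDerivAt.norm_sq.fderiv, inner_sub_right, inner_I_mul_ofReal_mul_self, sub_zero]
  simp only [smul_apply, ContinuousLinearMap.comp_apply, innerSL_apply_apply,
    nsmul_eq_mul, Nat.cast_ofNat]

variable [FiniteDimensional ℝ E] [MeasurableSpace E] [BorelSpace E] {μ : Measure E}
  [μ.IsAddHaarMeasure]

/- In `0 ≤ ‖D + a ψ‖²` with `D = ∂ᵥψ - i α ψ` the cross term is `a ∂ᵥ‖ψ‖²`, as `i α ψ ⟂ ψ`, and an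
integration by parts moves the derivative onto `a`. -/
lemma integral_fderiv_sub_sq_mul_norm_sq_le {a α : E → ℝ} {ψ : E → ℂ} (ha : ContDiff ℝ 1 a)
    (hα : Continuous α) (hψ : ContDiff ℝ 1 ψ) (hψc : HasCompactSupport ψ) (v : E) :
    ∫ x, (fderiv ℝ a x v - a x ^ 2) * ‖ψ x‖ ^ 2 ∂μ ≤
      ∫ x, ‖fderiv ℝ ψ x v - Complex.I * α x * ψ x‖ ^ 2 ∂μ := by
  have ha0 := ha.continuous
  have := ha.continuous_fderiv one_ne_zero
  have hψ0 := hψ.continuous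
  have := hψ.continuous_fderiv one_ne_zero
  have hN' := (hψ.norm_sq ℝ).continuous_fderiv one_ne_zero
  have hint : ∀ f : E → ℝ, Continuous f → (∀ x ∉ tsupport ψ, f x = 0) → Integrable f μ :=
    fun f hf h0 => hf.integrable_of_hasCompactSupport (HasCompactSupport.intro hψc h0)
  have hψ_zero : ∀ x ∉ tsupport ψ, ψ x = 0 := fun x hx => image_eq_zero_of_notMem_tsupport hx
  have hN'_eq := fun x =>
    fderiv_norm_sq_eq_inner_sub_I_mul (hψ.differentiable one_ne_zero x) (α x) v
  have hint_a' : Integrable (fun x => fderiv ℝ a x v * ‖ψ x‖ ^ 2) μ :=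
    hint _ (by fun_prop) fun x hx => by simp [hψ_zero x hx]
  have hint_N' : Integrable (fun x => a x * fderiv ℝ (fun y => ‖ψ y‖ ^ 2) x v) μ :=
    hint _ (by fun_prop) fun x hx => by simp [hN'_eq, hψ_zero x hx]
  have hint_neg : Integrable (fun x => -(a x * fderiv ℝ (fun y => ‖ψ y‖ ^ 2) x v)) μ :=
    hint_N'.neg
  have hint_sq : Integrable (fun x => a x ^ 2 * ‖ψ x‖ ^ 2) μ :=
    hint _ (by fun_prop) fun x hx => by simp [hψ_zero x hx]
  have hparts := integral_mul_fderiv_eq_neg_fderiv_mul_of_integrable hint_a' hint_N'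
    (hint _ (by fun_prop) fun x hx => by simp [hψ_zero x hx])
    (fun x _ => ha.differentiable one_ne_zero x)
    (fun x _ => (hψ.norm_sq ℝ).differentiable one_ne_zero x)
  calc ∫ x, (fderiv ℝ a x v - a x ^ 2) * ‖ψ x‖ ^ 2 ∂μ
      = ∫ x, -(a x * fderiv ℝ (fun y => ‖ψ y‖ ^ 2) x v) - a x ^ 2 * ‖ψ x‖ ^ 2 ∂μ := by
        simp only [sub_mul]
        rw [integral_sub hint_a' hint_sq, integral_sub hint_neg hint_sq, integral_neg, hparts,
          neg_neg]
    _ ≤ ∫ x, ‖fderiv ℝ ψ x v - Complex.I * α x * ψ x‖ ^ 2 ∂μ := by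
        refine integral_mono (hint_neg.sub hint_sq) (hint _ (by fun_prop) fun x hx => ?_)
          fun x => ?_
        · simp [hψ_zero x hx, fderiv_of_notMem_tsupport ℝ hx]
        · rw [hN'_eq, mul_left_comm, ← mul_assoc]
          exact neg_two_mul_inner_sub_le _ _ _

end VectorField

section RadialField

variable {A : ℝ² → ℝ²} {ψ : ℝ² → ℂ}

lemma integral_div_sub_sq_mul_norm_sq_le (hA : Continuous A) (hψ : ContDiff ℝ 1 ψ)
    (hψc : HasCompactSupport ψ) {F : ℝ² → ℝ²} (hF : ContDiff ℝ 1 F) :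
    ∫ x, (∑ j, (fderiv ℝ (fun y => F y j) x (EuclideanSpace.single j 1) - F x j ^ 2)) * ‖ψ x‖ ^ 2 ≤
      ∫ x, magEnergy2 A ψ x := by
  have hF0 := hF.continuous
  have hFj : ∀ j, ContDiff ℝ 1 fun y => F y j := contDiff_euclidean.1 hF
  have := fun j => (hFj j).continuous_fderiv one_ne_zero
  have hψ0 := hψ.continuous
  have := hψ.continuous_fderiv one_ne_zero
  simp only [magEnergy2, Finset.sum_mul]
  rw [integral_finsetSum, integral_finsetSum]
  · exact Finset.sum_le_sum fun j _ =>
      integral_fderiv_sub_sq_mul_norm_sq_le (hFj j) (by fun_prop) hψ hψc _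
  · exact fun j _ => Continuous.integrable_of_hasCompactSupport (by fun_prop) <|
      HasCompactSupport.intro hψc fun x hx => by
        simp [image_eq_zero_of_notMem_tsupport hx, fderiv_of_notMem_tsupport ℝ hx]
  · exact fun j _ => Continuous.integrable_of_hasCompactSupport (by fun_prop) <|
      HasCompactSupport.intro hψc fun x hx => by simp [image_eq_zero_of_notMem_tsupport hx]

/-- The vector field `x / (M (1 + |x|²))`; in the plane its `div F - |F|²` is positive on the disc
`|x|² < 2M`. -/
noncomputable def radialField {E : Type*} [NormedAddCommGroup E] [NormedSpace ℝ E] (M : ℝ) (x : E) :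
    E :=
  (M * (1 + ‖x‖ ^ 2))⁻¹ • x

variable {M : ℝ}

lemma contDiff_radialField {E : Type*} [NormedAddCommGroup E] [InnerProductSpace ℝ E] {n : ℕ∞}
    (hM : 0 < M) : ContDiff ℝ n (radialField M : E → E) :=
  (contDiff_const.mul (contDiff_const.add (contDiff_norm_sq ℝ))).inv (fun x => by positivity)
    |>.smul contDiff_id

lemma fderiv_radialField_coord {ι : Type*} [Fintype ι] [DecidableEq ι] (hM : 0 < M)
    (x : EuclideanSpace ℝ ι) (j : ι) :
    fderiv ℝ (fun y : EuclideanSpace ℝ ι => radialField M y j) x (EuclideanSpace.single j 1) =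
      (M * (1 + ‖x‖ ^ 2))⁻¹ - 2 * M * x j ^ 2 / (M * (1 + ‖x‖ ^ 2)) ^ 2 := by
  have hne : M * (1 + ‖x‖ ^ 2) ≠ 0 := by positivity
  have hden : HasFDerivAt (fun y : EuclideanSpace ℝ ι => M * (1 + ‖y‖ ^ 2))
      (M • 2 • innerSL ℝ x) x :=
    ((hasStrictFDerivAt_norm_sq x).hasFDerivAt.const_add 1).const_mul M
  have hcoord : HasFDerivAt (fun y : EuclideanSpace ℝ ι => y j)
      (PiLp.proj (𝕜 := ℝ) 2 (fun _ : ι => ℝ) j) x :=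
    (PiLp.proj (𝕜 := ℝ) 2 (fun _ : ι => ℝ) j).hasFDerivAt
  have hquot := ((hasDerivAt_inv hne).comp_hasFDerivAt x hden).mul hcoord
  refine (congrArg (· (EuclideanSpace.single j 1)) hquot.fderiv).trans ?_
  simp only [Function.comp_apply, neg_smul, smul_neg, add_apply, smul_apply, PiLp.proj_apply,
    PiLp.single_eq_same, smul_eq_mul, mul_one, neg_apply, coe_innerSL_apply,
    EuclideanSpace.inner_single_right, ringHom_apply, one_mul, nsmul_eq_mul, Nat.cast_ofNat]
  field_simp
  ring

lemma sum_fderiv_radialField_sub_sq (hM : 0 < M) (x : ℝ²) :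
    ∑ j, (fderiv ℝ (fun y : ℝ² => radialField M y j) x (EuclideanSpace.single j 1)
      - radialField M x j ^ 2) = (2 * M - ‖x‖ ^ 2) / (M * (1 + ‖x‖ ^ 2)) ^ 2 := by
  have hnorm : ‖x‖ ^ 2 = x 0 ^ 2 + x 1 ^ 2 := by
    simp [EuclideanSpace.norm_sq_eq, Fin.sum_univ_two]
  simp only [fderiv_radialField_coord hM]
  simp only [radialField, PiLp.smul_apply, smul_eq_mul, Fin.sum_univ_two, hnorm]
  field_simp
  ring

lemma integral_radial_weight_mul_norm_sq_le (hA : Continuous A) (hψ : ContDiff ℝ 1 ψ)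
    (hψc : HasCompactSupport ψ) (hM : 0 < M) :
    ∫ x, (2 * M - ‖x‖ ^ 2) / (M * (1 + ‖x‖ ^ 2)) ^ 2 * ‖ψ x‖ ^ 2 ≤ ∫ x, magEnergy2 A ψ x := by
  simpa only [sum_fderiv_radialField_sub_sq hM] using
    integral_div_sub_sq_mul_norm_sq_le hA hψ hψc (contDiff_radialField hM)

lemma div_le_radial_weight_add_indicator {E : Type*} [SeminormedAddCommGroup E] (R : ℝ) {N : ℝ}
    (hN : 0 ≤ N) (x : E) :
    N / (1 + ‖x‖ ^ 2) ≤
      (1 + R ^ 2) ^ 2 *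
          ((2 * (1 + R ^ 2) - ‖x‖ ^ 2) / ((1 + R ^ 2) * (1 + ‖x‖ ^ 2)) ^ 2 * N)
        + 2 * (norm ⁻¹' Ici R).indicator (fun y => N / (1 + ‖y‖ ^ 2)) x := by
  have hcancel : (1 + R ^ 2) ^ 2 *
      ((2 * (1 + R ^ 2) - ‖x‖ ^ 2) / ((1 + R ^ 2) * (1 + ‖x‖ ^ 2)) ^ 2 * N) =
        (2 * (1 + R ^ 2) - ‖x‖ ^ 2) * N / (1 + ‖x‖ ^ 2) ^ 2 := by
    field_simp
  have hlhs : N / (1 + ‖x‖ ^ 2) = (1 + ‖x‖ ^ 2) * N / (1 + ‖x‖ ^ 2) ^ 2 := by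
    field_simp
  rw [hcancel, hlhs]
  by_cases hx : x ∈ norm ⁻¹' Ici R
  · rw [indicator_of_mem hx, hlhs, mul_div_assoc', ← add_div]
    gcongr
    nlinarith [mul_nonneg (sq_nonneg R) hN]
  · have hxR : ‖x‖ ^ 2 ≤ R ^ 2 := by
      rw [mem_preimage, mem_Ici, not_le] at hx
      gcongr
    rw [indicator_of_notMem hx, mul_zero, add_zero]
    gcongr
    linarith

end RadialField

section Hardy

variable {A : ℝ² → ℝ²} {ψ : ℝ² → ℂ}

lemma magnetic_hardy (hA : Continuous A) (hψ : ContDiff ℝ 1 ψ) (hψc : HasCompactSupport ψ)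
    {δ R : ℝ} (hδ : 0 < δ)
    (hhol : ∀ r, 0 < r → R ≤ r → δ ≤ ‖Complex.exp (circulation A r * Complex.I) - 1‖) :
    ∫ x, ‖ψ x‖ ^ 2 / (1 + ‖x‖ ^ 2) ≤
      ((1 + R ^ 2) ^ 2 + 2 * (2 * π * (1 / δ + 1)) ^ 2) * ∫ x, magEnergy2 A ψ x := by
  set M := 1 + R ^ 2
  have hM : 0 < M := by positivity
  have hmeas : MeasurableSet (norm ⁻¹' Ici R : Set ℝ²) := measurable_norm measurableSet_Ici
  have hW := integrable_norm_sq_div (μ := (volume : Measure ℝ²)) hψ.continuous hψc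
  have hF : Integrable fun x =>
      (2 * M - ‖x‖ ^ 2) / (M * (1 + ‖x‖ ^ 2)) ^ 2 * ‖ψ x‖ ^ 2 := by
    have := hψ.continuous
    refine Continuous.integrable_of_hasCompactSupport (by fun_prop (disch := intro; positivity)) <|
      HasCompactSupport.intro hψc fun x hx => by simp [image_eq_zero_of_notMem_tsupport hx]
  calc ∫ x, ‖ψ x‖ ^ 2 / (1 + ‖x‖ ^ 2)
      ≤ ∫ x, (M ^ 2 * ((2 * M - ‖x‖ ^ 2) / (M * (1 + ‖x‖ ^ 2)) ^ 2 * ‖ψ x‖ ^ 2)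
          + 2 * (norm ⁻¹' Ici R).indicator (fun y => ‖ψ y‖ ^ 2 / (1 + ‖y‖ ^ 2)) x) :=
        integral_mono hW ((hF.const_mul _).add ((hW.indicator hmeas).const_mul 2)) fun x =>
          div_le_radial_weight_add_indicator R (sq_nonneg ‖ψ x‖) x
    _ = M ^ 2 * (∫ x, (2 * M - ‖x‖ ^ 2) / (M * (1 + ‖x‖ ^ 2)) ^ 2 * ‖ψ x‖ ^ 2)
          + 2 * ∫ x in norm ⁻¹' Ici R, ‖ψ x‖ ^ 2 / (1 + ‖x‖ ^ 2) := by
        rw [integral_add (hF.const_mul _) ((hW.indicator hmeas).const_mul 2), integral_const_mul,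
          integral_const_mul, integral_indicator hmeas]
    _ ≤ M ^ 2 * (∫ x, magEnergy2 A ψ x)
          + 2 * ((2 * π * (1 / δ + 1)) ^ 2 * ∫ x, magEnergy2 A ψ x) :=
        add_le_add
          (mul_le_mul_of_nonneg_left (integral_radial_weight_mul_norm_sq_le hA hψ hψc hM)
            (sq_nonneg _))
          (mul_le_mul_of_nonneg_left (exterior_hardy hA hψ hψc hδ hhol) zero_le_two)
    _ = _ := by ring

end Hardy

section Holonomy

lemma exp_flux_mul_I_ne_one {s : ℝ} (hs : ∀ n : ℤ, 1 / (2 * π) * s ≠ n) :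
    Complex.exp (s * Complex.I) ≠ 1 := by
  rw [Ne, Complex.exp_eq_one_iff]
  rintro ⟨n, hn⟩
  have hsn : s = n * (2 * π) := by
    rw [← mul_assoc, mul_left_inj' Complex.I_ne_zero] at hn
    exact_mod_cast hn
  exact hs n (by rw [hsn]; field_simp)

lemma tendsto_setIntegral_ball {X F : Type*} [PseudoMetricSpace X] [MeasurableSpace X]
    [OpensMeasurableSpace X] {μ : Measure X} [NormedAddCommGroup F] [NormedSpace ℝ F] {f : X → F}
    (hf : Integrable f μ) (x₀ : X) :
    Tendsto (fun r : ℝ => ∫ x in Metric.ball x₀ r, f x ∂μ) atTop (𝓝 (∫ x, f x ∂μ)) :=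
  (aecover_ball tendsto_id).integral_tendsto_of_countably_generated hf

lemma exists_eventually_le_norm_exp_sub_one {ι : Type*} {l : Filter ι} {φ : ι → ℝ} {s : ℝ}
    (hφ : Tendsto φ l (𝓝 s)) (hs : Complex.exp (s * Complex.I) ≠ 1) :
    ∃ δ > 0, ∀ᶠ r in l, δ ≤ ‖Complex.exp (φ r * Complex.I) - 1‖ := by
  have hcont : Continuous fun t : ℝ => ‖Complex.exp (t * Complex.I) - 1‖ := by fun_prop
  obtain ⟨δ, hδ, hδs⟩ := exists_between (norm_pos_iff.2 (sub_ne_zero.2 hs))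
  exact ⟨δ, hδ, ((hcont.tendsto s).comp hφ).eventually_const_le hδs⟩

end Holonomy

theorem stmt1_general (B : ℝ² → ℝ) (hflux : ∀ n : ℤ, (1 / (2 * π)) * (∫ x, B x) ≠ n) :
    ∃ c > (0 : ℝ), ∀ A : ℝ² → ℝ², Differentiable ℝ A → curl2 A = B →
      ∀ ψ : ℝ² → ℂ, ContDiff ℝ 1 ψ → HasCompactSupport ψ →
        (∫ x, magEnergy2 A ψ x) ≥ c * ∫ x, ‖ψ x‖ ^ 2 / (1 + ‖x‖ ^ 2) := by
  have hB : Integrable B := Integrable.of_integral_ne_zero fun h0 => hflux 0 (by simp [h0])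
  obtain ⟨δ, hδ, hev⟩ := exists_eventually_le_norm_exp_sub_one (tendsto_setIntegral_ball hB 0)
    (exp_flux_mul_I_ne_one hflux)
  obtain ⟨R, hhol⟩ := eventually_atTop.1 hev
  have hK : 0 < (1 + R ^ 2) ^ 2 + 2 * (2 * π * (1 / δ + 1)) ^ 2 := by positivity
  refine ⟨_, inv_pos.2 hK, ?_⟩
  rintro A hA rfl ψ hψ hψc
  rw [ge_iff_le, inv_mul_le_iff₀ hK]
  refine magnetic_hardy hA.continuous hψ hψc hδ fun r hr hRr => ?_
  rw [circulation_eq_setIntegral_curl2 hA hr.le hB.integrableOn]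
  exact hhol r hRr

theorem stmt1 (B : EuclideanSpace ℝ (Fin 2) → ℝ)
    (hBsmooth : ContDiff ℝ (⊤ : ℕ∞) B) (hBsupp : HasCompactSupport B)
    (hflux : ∀ n : ℤ, (1 / (2 * Real.pi)) * (∫ x, B x) ≠ (n : ℝ)) :
    ∃ c > (0:ℝ), ∀ A : EuclideanSpace ℝ (Fin 2) → EuclideanSpace ℝ (Fin 2),
      ContDiff ℝ (⊤ : ℕ∞) A →
      (∀ x : EuclideanSpace ℝ (Fin 2),
        fderiv ℝ (fun y => A y 1) x (EuclideanSpace.single 0 (1:ℝ))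
        - fderiv ℝ (fun y => A y 0) x (EuclideanSpace.single 1 (1:ℝ)) = B x) →
      ∀ ψ : EuclideanSpace ℝ (Fin 2) → ℂ, ContDiff ℝ (⊤ : ℕ∞) ψ → HasCompactSupport ψ →
      (∫ x, magEnergy2 A ψ x) ≥ c * ∫ x, ‖ψ x‖^2 / (1 + ‖x‖^2) := by
  obtain ⟨c, hc, hardy⟩ := stmt1_general B hflux
  exact ⟨c, hc, fun A hA hAB ψ hψ => hardy A (hA.differentiable (by simp)) (funext hAB) ψ
    (hψ.of_le (by exact_mod_cast le_top))⟩
end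

section
/- Let r₀ > 0. For every smooth compactly supported function f : ℝ → ℂ which vanishes on a neighbourhood of r₀, one has ∫_{r₀}^∞ |f'(r)|² r dr ≥ (1/4) ∫_{r₀}^∞ |f(r)|² / (r² (log(r/r₀))²) · r dr. -/
open MeasureTheory Real Filter

/-!
Let `g > 0` with `g' > 0`. Expanding `g' * ‖f' / g' - f / (2 * g)‖ ^ 2 ≥ 0` gives
`(‖f‖ ^ 2 / (2 * g))' ≤ ‖f'‖ ^ 2 / g' - g' * ‖f‖ ^ 2 / (4 * g ^ 2)`, and integrating from a zero
of `f` yields the weighted Hardy inequality `∫ g' * ‖f‖ ^ 2 / g ^ 2 ≤ 4 * ∫ ‖f'‖ ^ 2 / g'`.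
If `g` vanishes at the left endpoint, apply this to `g + ε`, whose derivative is the same, and let
`ε → 0`. The logarithmic inequality is the case `g r = log (r / r₀)`.
-/

section

open Set Topology

theorem integrable_and_integral_le_of_tendsto {α : Type*} [MeasurableSpace α] {μ : Measure α}
    {F : ℕ → α → ℝ} {G : α → ℝ} {C : ℝ} (hF : ∀ n, Integrable (F n) μ)
    (hF_nonneg : ∀ n, 0 ≤ᵐ[μ] F n) (hF_le : ∀ n, ∫ x, F n x ∂μ ≤ C)
    (hlim : ∀ᵐ x ∂μ, Tendsto (fun n => F n x) atTop (𝓝 (G x))) :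
    Integrable G μ ∧ ∫ x, G x ∂μ ≤ C := by
  have hG_meas : AEStronglyMeasurable G μ :=
    aestronglyMeasurable_of_tendsto_ae atTop (fun n => (hF n).1) hlim
  have hG_nonneg : 0 ≤ᵐ[μ] G := by
    filter_upwards [hlim, ae_all_iff.2 hF_nonneg] with x hx hpos
    exact ge_of_tendsto' hx hpos
  have hF_lintegral (n : ℕ) : ∫⁻ x, ‖F n x‖ₑ ∂μ ≤ ENNReal.ofReal C := by
    rw [← ofReal_integral_norm_eq_lintegral_enorm (hF n)]
    refine ENNReal.ofReal_le_ofReal ((integral_congr_ae ?_).trans_le (hF_le n))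
    filter_upwards [hF_nonneg n] with x hx using norm_of_nonneg hx
  have hG_lintegral : ∫⁻ x, ‖G x‖ₑ ∂μ ≤ ENNReal.ofReal C :=
    calc ∫⁻ x, ‖G x‖ₑ ∂μ
        = ∫⁻ x, liminf (fun n => ‖F n x‖ₑ) atTop ∂μ :=
          lintegral_congr_ae (hlim.mono fun x hx => hx.enorm.liminf_eq.symm)
      _ ≤ liminf (fun n => ∫⁻ x, ‖F n x‖ₑ ∂μ) atTop :=
          lintegral_liminf_le' fun n => (hF n).1.aemeasurable.enorm
      _ ≤ liminf (fun _ : ℕ => ENNReal.ofReal C) atTop :=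
          liminf_le_liminf (Eventually.of_forall hF_lintegral)
      _ = ENNReal.ofReal C := liminf_const _
  have hC : 0 ≤ C := (integral_nonneg_of_ae (hF_nonneg 0)).trans (hF_le 0)
  have hG : Integrable G μ := ⟨hG_meas, hG_lintegral.trans_lt ENNReal.ofReal_lt_top⟩
  refine ⟨hG, ?_⟩
  rw [integral_eq_lintegral_of_nonneg_ae hG_nonneg hG_meas]
  refine ENNReal.toReal_le_of_le_ofReal hC ((lintegral_mono fun x => ?_).trans hG_lintegral)
  exact ofReal_le_enorm (G x)

theorem integrableOn_deriv_mul_norm_sq_div_sq {F : Type*} [SeminormedAddCommGroup F] {f : ℝ → F}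
    {g g' : ℝ → ℝ} {a b : ℝ} (hfc : ContinuousOn f (Icc a b)) (hgc : ContinuousOn g (Icc a b))
    (hg : ∀ x ∈ Ioo a b, HasDerivAt g (g' x) x) (hg' : ∀ x ∈ Ioo a b, 0 ≤ g' x)
    (hg_ne : ∀ x ∈ Icc a b, g x ≠ 0) :
    IntegrableOn (fun x => g' x * ‖f x‖ ^ 2 / g x ^ 2) (Icc a b) := by
  have hg'_int : IntegrableOn g' (Icc a b) := by
    rw [integrableOn_Icc_iff_integrableOn_Ioc]
    exact intervalIntegral.integrableOn_deriv_of_nonneg hgc hg hg'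
  have hcont : ContinuousOn (fun x => ‖f x‖ ^ 2 / g x ^ 2) (Icc a b) :=
    (hfc.norm.pow 2).div (hgc.pow 2) fun x hx => pow_ne_zero 2 (hg_ne x hx)
  simpa only [mul_div_assoc] using hg'_int.mul_continuousOn hcont isCompact_Icc

theorem integrable_norm_deriv_sq_mul {F : Type*} [NormedAddCommGroup F] [NormedSpace ℝ F]
    {f : ℝ → F} {w : ℝ → ℝ} (hf : ContDiff ℝ 1 f) (hsupp : HasCompactSupport f)
    (hw : Continuous w) : Integrable (fun r => ‖deriv f r‖ ^ 2 * w r) :=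
  (((hf.continuous_deriv le_rfl).norm.pow 2).mul hw).integrable_of_hasCompactSupport
    (hsupp.deriv.norm.comp_left (zero_pow two_ne_zero)).mul_right

variable {E : Type*} [NormedAddCommGroup E] [InnerProductSpace ℝ E]

theorem inner_div_sub_le_norm_sq_div_sub (x y : E) {s t : ℝ} (hs : 0 < s) (ht : t ≠ 0) :
    inner ℝ x y / t - s * ‖x‖ ^ 2 / (2 * t ^ 2) ≤
      ‖y‖ ^ 2 / s - s * ‖x‖ ^ 2 / (4 * t ^ 2) := by
  have hsq : 0 ≤ s * ‖(1 / s) • y - (1 / (2 * t)) • x‖ ^ 2 := by positivity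
  rw [norm_sub_sq_real, real_inner_smul_left, inner_smul_right, norm_smul, norm_smul,
    real_inner_comm, mul_pow, mul_pow, norm_eq_abs, norm_eq_abs, sq_abs, sq_abs] at hsq
  refine sub_nonneg.1 (hsq.trans_eq ?_)
  field_simp
  ring

theorem hasDerivAt_norm_sq_div_two_mul {f : ℝ → E} {g : ℝ → ℝ} {f' : E} {g' x : ℝ}
    (hf : HasDerivAt f f' x) (hg : HasDerivAt g g' x) (hx : g x ≠ 0) :
    HasDerivAt (fun y => ‖f y‖ ^ 2 / (2 * g y))
      (inner ℝ (f x) f' / g x - g' * ‖f x‖ ^ 2 / (2 * g x ^ 2)) x := by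
  refine (hf.norm_sq.div (hg.const_mul 2) (mul_ne_zero two_ne_zero hx)).congr_deriv ?_
  field_simp

section Interval

variable {f f' : ℝ → E} {g g' : ℝ → ℝ} {a b : ℝ}

theorem weighted_hardy_inequality_Ioc (hab : a ≤ b)
    (hfc : ContinuousOn f (Icc a b)) (hf : ∀ x ∈ Ioo a b, HasDerivAt f (f' x) x) (hfa : f a = 0)
    (hgc : ContinuousOn g (Icc a b)) (hg : ∀ x ∈ Ioo a b, HasDerivAt g (g' x) x)
    (hg' : ∀ x ∈ Ioo a b, 0 < g' x) (hg_pos : ∀ x ∈ Icc a b, 0 < g x)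
    (hint : IntegrableOn (fun x => ‖f' x‖ ^ 2 / g' x) (Ioc a b)) :
    ∫ x in Ioc a b, g' x * ‖f x‖ ^ 2 / g x ^ 2 ≤ 4 * ∫ x in Ioc a b, ‖f' x‖ ^ 2 / g' x := by
  have hweight : IntegrableOn (fun x => 1 / 4 * (g' x * ‖f x‖ ^ 2 / g x ^ 2)) (Ioc a b) :=
    ((integrableOn_deriv_mul_norm_sq_div_sq hfc hgc hg (fun x hx => (hg' x hx).le)
      fun x hx => (hg_pos x hx).ne').mono_set Ioc_subset_Icc_self).const_mul (1 / 4)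
  have hprim : ContinuousOn (fun x => ‖f x‖ ^ 2 / (2 * g x)) (Icc a b) :=
    (hfc.norm.pow 2).div (hgc.const_mul 2) fun x hx => (mul_pos two_pos (hg_pos x hx)).ne'
  have hprim_deriv : ∀ x ∈ Ioo a b, HasDerivAt (fun y => ‖f y‖ ^ 2 / (2 * g y))
      (inner ℝ (f x) (f' x) / g x - g' x * ‖f x‖ ^ 2 / (2 * g x ^ 2)) x := fun x hx =>
    hasDerivAt_norm_sq_div_two_mul (hf x hx) (hg x hx) (hg_pos x (Ioo_subset_Icc_self hx)).ne'
  have hderiv_le : ∀ x ∈ Ioo a b,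
      inner ℝ (f x) (f' x) / g x - g' x * ‖f x‖ ^ 2 / (2 * g x ^ 2) ≤
        ‖f' x‖ ^ 2 / g' x - 1 / 4 * (g' x * ‖f x‖ ^ 2 / g x ^ 2) := fun x hx =>
    (inner_div_sub_le_norm_sq_div_sub (f x) (f' x) (hg' x hx)
      (hg_pos x (Ioo_subset_Icc_self hx)).ne').trans_eq (by ring)
  have hftc : ‖f b‖ ^ 2 / (2 * g b) - ‖f a‖ ^ 2 / (2 * g a) ≤
      ∫ x in a..b, (‖f' x‖ ^ 2 / g' x - 1 / 4 * (g' x * ‖f x‖ ^ 2 / g x ^ 2)) :=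
    intervalIntegral.sub_le_integral_of_hasDeriv_right_of_le hab hprim
      (fun x hx => (hprim_deriv x hx).hasDerivWithinAt)
      (by rw [integrableOn_Icc_iff_integrableOn_Ioc]; exact hint.sub hweight) hderiv_le
  rw [intervalIntegral.integral_of_le hab, integral_sub hint hweight, integral_const_mul, hfa,
    norm_zero, zero_pow two_ne_zero, zero_div, sub_zero] at hftc
  have hboundary : 0 ≤ ‖f b‖ ^ 2 / (2 * g b) :=
    div_nonneg (sq_nonneg _) (mul_pos two_pos (hg_pos b (right_mem_Icc.2 hab))).le
  linarith

end Interval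

section HalfLine

variable {f f' : ℝ → E} {g g' : ℝ → ℝ} {a : ℝ}

theorem weighted_hardy_inequality_Ioi_of_pos (hfc : ContinuousOn f (Ici a))
    (hf : ∀ x ∈ Ioi a, HasDerivAt f (f' x) x) (hfa : f a = 0)
    (hgc : ContinuousOn g (Ici a)) (hg : ∀ x ∈ Ioi a, HasDerivAt g (g' x) x)
    (hg' : ∀ x ∈ Ioi a, 0 < g' x) (hg_pos : ∀ x ∈ Ici a, 0 < g x)
    (hint : IntegrableOn (fun x => ‖f' x‖ ^ 2 / g' x) (Ioi a)) :
    IntegrableOn (fun x => g' x * ‖f x‖ ^ 2 / g x ^ 2) (Ioi a) ∧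
      ∫ x in Ioi a, g' x * ‖f x‖ ^ 2 / g x ^ 2 ≤ 4 * ∫ x in Ioi a, ‖f' x‖ ^ 2 / g' x := by
  have hweight_nonneg : ∀ x ∈ Ioi a, 0 ≤ g' x * ‖f x‖ ^ 2 / g x ^ 2 := fun x hx =>
    div_nonneg (mul_nonneg (hg' x hx).le (sq_nonneg _)) (sq_nonneg _)
  have henergy_nonneg : ∀ x ∈ Ioi a, 0 ≤ ‖f' x‖ ^ 2 / g' x := fun x hx =>
    div_nonneg (sq_nonneg _) (hg' x hx).le
  have hweight_int (b : ℝ) : IntegrableOn (fun x => g' x * ‖f x‖ ^ 2 / g x ^ 2) (Ioc a b) :=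
    (integrableOn_deriv_mul_norm_sq_div_sq (hfc.mono Icc_subset_Ici_self)
      (hgc.mono Icc_subset_Ici_self) (fun x hx => hg x hx.1) (fun x hx => (hg' x hx.1).le)
      fun x hx => (hg_pos x hx.1).ne').mono_set Ioc_subset_Icc_self
  have hbound : ∀ b, a ≤ b → ∫ x in a..b, g' x * ‖f x‖ ^ 2 / g x ^ 2 ≤
      4 * ∫ x in Ioi a, ‖f' x‖ ^ 2 / g' x := by
    intro b hab
    rw [intervalIntegral.integral_of_le hab]
    refine (weighted_hardy_inequality_Ioc hab (hfc.mono Icc_subset_Ici_self)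
      (fun x hx => hf x hx.1) hfa (hgc.mono Icc_subset_Ici_self) (fun x hx => hg x hx.1)
      (fun x hx => hg' x hx.1) (fun x hx => hg_pos x hx.1)
      (hint.mono_set Ioc_subset_Ioi_self)).trans ?_
    gcongr 4 * ?_
    exact setIntegral_mono_set hint
      ((ae_restrict_iff' measurableSet_Ioi).2 (Eventually.of_forall henergy_nonneg))
      Ioc_subset_Ioi_self.eventuallyLE
  have hweight : IntegrableOn (fun x => g' x * ‖f x‖ ^ 2 / g x ^ 2) (Ioi a) := by
    refine integrableOn_Ioi_of_intervalIntegral_norm_bounded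
      (4 * ∫ x in Ioi a, ‖f' x‖ ^ 2 / g' x) a hweight_int tendsto_id ?_
    filter_upwards [eventually_ge_atTop a] with b hab
    refine (intervalIntegral.integral_congr_ae ?_).trans_le (hbound b hab)
    refine Eventually.of_forall fun x hx => norm_of_nonneg (hweight_nonneg x ?_)
    exact (uIoc_of_le hab ▸ hx).1
  refine ⟨hweight, le_of_tendsto (intervalIntegral_tendsto_integral_Ioi a hweight tendsto_id) ?_⟩
  exact (eventually_ge_atTop a).mono hbound

theorem weighted_hardy_inequality_Ioi (hfc : ContinuousOn f (Ici a))
    (hf : ∀ x ∈ Ioi a, HasDerivAt f (f' x) x) (hfa : f a = 0)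
    (hgc : ContinuousOn g (Ici a)) (hg : ∀ x ∈ Ioi a, HasDerivAt g (g' x) x)
    (hg' : ∀ x ∈ Ioi a, 0 < g' x) (hga : 0 ≤ g a)
    (hint : IntegrableOn (fun x => ‖f' x‖ ^ 2 / g' x) (Ioi a)) :
    IntegrableOn (fun x => g' x * ‖f x‖ ^ 2 / g x ^ 2) (Ioi a) ∧
      ∫ x in Ioi a, g' x * ‖f x‖ ^ 2 / g x ^ 2 ≤ 4 * ∫ x in Ioi a, ‖f' x‖ ^ 2 / g' x := by
  have hg_strictMono : StrictMonoOn g (Ici a) := by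
    refine strictMonoOn_of_hasDerivWithinAt_pos (f' := g') (convex_Ici a) hgc ?_ ?_
    · exact fun x hx => (hg x (interior_Ici (a := a) ▸ hx)).hasDerivWithinAt
    · exact fun x hx => hg' x (interior_Ici (a := a) ▸ hx)
  have hg_pos : ∀ x ∈ Ioi a, 0 < g x := fun x hx =>
    hga.trans_lt (hg_strictMono self_mem_Ici (Ioi_subset_Ici_self hx) hx)
  have hg_nonneg : ∀ x ∈ Ici a, 0 ≤ g x := fun x hx =>
    hga.trans (hg_strictMono.monotoneOn self_mem_Ici hx hx)
  have hshift (n : ℕ) := weighted_hardy_inequality_Ioi_of_pos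
    (g := fun x => g x + 1 / ((n : ℝ) + 1)) hfc hf hfa (hgc.add continuousOn_const)
    (fun x hx => (hg x hx).add_const _) hg'
    (fun x hx => add_pos_of_nonneg_of_pos (hg_nonneg x hx) Nat.one_div_pos_of_nat) hint
  refine integrable_and_integral_le_of_tendsto (fun n => (hshift n).1) (fun n => ?_)
    (fun n => (hshift n).2) ?_
  · filter_upwards [ae_restrict_mem measurableSet_Ioi] with x hx
    exact div_nonneg (mul_nonneg (hg' x hx).le (sq_nonneg _)) (sq_nonneg _)
  · filter_upwards [ae_restrict_mem measurableSet_Ioi] with x hx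
    have hg_lim : Tendsto (fun n : ℕ => g x + 1 / ((n : ℝ) + 1)) atTop (𝓝 (g x)) := by
      simpa only [add_zero] using tendsto_one_div_add_atTop_nhds_zero_nat.const_add (g x)
    exact tendsto_const_nhds.div (hg_lim.pow 2) (pow_ne_zero 2 (hg_pos x hx).ne')

end HalfLine

theorem stmt3_general {r₀ : ℝ} (hr₀ : 0 < r₀) {f : ℝ → E} (hfc : ContinuousOn f (Ici r₀))
    (hfd : DifferentiableOn ℝ f (Ioi r₀)) (hf₀ : f r₀ = 0)
    (hint : IntegrableOn (fun r => ‖deriv f r‖ ^ 2 * r) (Ioi r₀)) :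
    IntegrableOn (fun r => ‖f r‖ ^ 2 / (r ^ 2 * (Real.log (r / r₀)) ^ 2) * r) (Ioi r₀) ∧
      (∫ r in Ioi r₀, ‖deriv f r‖ ^ 2 * r) ≥
        (1 / 4 : ℝ) * ∫ r in Ioi r₀, ‖f r‖ ^ 2 / (r ^ 2 * (Real.log (r / r₀)) ^ 2) * r := by
  have hr_ne : ∀ r ∈ Ici r₀, r ≠ 0 := fun r hr => (hr₀.trans_le hr).ne'
  have hlog : ∀ r ∈ Ici r₀, HasDerivAt (fun s => Real.log (s / r₀)) r⁻¹ r := fun r hr =>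
    (((hasDerivAt_id r).div_const r₀).log (div_ne_zero (hr_ne r hr) hr₀.ne')).congr_deriv
      (by have := hr_ne r hr; simp only [id]; field_simp)
  have hweight : ∀ r ∈ Ioi r₀, r⁻¹ * ‖f r‖ ^ 2 / Real.log (r / r₀) ^ 2 =
      ‖f r‖ ^ 2 / (r ^ 2 * Real.log (r / r₀) ^ 2) * r := fun r hr => by
    have := hr_ne r (Ioi_subset_Ici_self hr)
    field_simp
  have hardy := weighted_hardy_inequality_Ioi (g := fun r => Real.log (r / r₀)) (g' := fun r => r⁻¹)
    hfc (fun r hr => (hfd.differentiableAt (Ioi_mem_nhds hr)).hasDerivAt) hf₀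
    (fun r hr => (hlog r hr).continuousAt.continuousWithinAt)
    (fun r hr => hlog r (Ioi_subset_Ici_self hr)) (fun r hr => inv_pos.2 (hr₀.trans hr))
    (by simp only [div_self hr₀.ne', log_one, le_refl]) (by simpa only [div_inv_eq_mul] using hint)
  rw [integrableOn_congr_fun hweight measurableSet_Ioi,
    setIntegral_congr_fun measurableSet_Ioi hweight] at hardy
  simp only [div_inv_eq_mul] at hardy
  exact ⟨hardy.1, by linarith [hardy.2]⟩

end

theorem stmt3 (r₀ : ℝ) (hr₀ : 0 < r₀)
    (f : ℝ → ℂ) (hf : ContDiff ℝ (⊤ : ℕ∞) f) (hsupp : HasCompactSupport f)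
    (hvan : ∀ᶠ r in nhds r₀, f r = 0) :
    (∫ r in Set.Ioi r₀, ‖deriv f r‖^2 * r)
    ≥ (1/4 : ℝ) * ∫ r in Set.Ioi r₀, ‖f r‖^2 / (r^2 * (Real.log (r / r₀))^2) * r := by
  have hf₁ : ContDiff ℝ 1 f := hf.of_le (by exact_mod_cast le_top)
  exact (stmt3_general hr₀ hf₁.continuous.continuousOn hf₁.differentiable_one.differentiableOn
    hvan.self_of_nhds (integrable_norm_deriv_sq_mul hf₁ hsupp continuous_id).integrableOn).2
end

section
/- Let d ≥ 2 and let A : ℝ^d → ℝ^d be smooth. For every smooth compactly supported g : ℝ^d → ℂ vanishing on a neighbourhood of the origin, setting ψ(x) := |x|^{−(d−2)/2} g(x), one has the identity ∫_{ℝ^d} |∇ψ(x) − iA(x)ψ(x)|² dx − ((d−2)/2)² ∫_{ℝ^d} |ψ(x)|²/|x|² dx = ∫_{ℝ^d} |∇g(x) − iA(x)g(x)|² |x|^{−(d−2)} dx. -/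
open MeasureTheory Real Filter

/-!
Write `ψ = φ g` with `φ` real. Along a direction `v`,
`|(∂ᵥ - iAᵥ)ψ|² = φ² |(∂ᵥ - iAᵥ)g|² + φ ∂ᵥφ ∂ᵥ|g|² + (∂ᵥφ)² |g|²`,
because the potential cancels from `2 Re (conj g · (∂ᵥ - iAᵥ)g) = ∂ᵥ|g|²`. Integrating the middle
term by parts leaves `-φ ∂ᵥ²φ |g|²`, and summing over an orthonormal basis yields
`∫ |(∇ - iA)ψ|² + ∫ φ Δφ |g|² = ∫ φ² |(∇ - iA)g|²`. For `φ = |x|ᵖ` in dimension `d` one has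
`Δφ = p (p + d - 2) φ / |x|²`, and `p = -(d - 2) / 2` minimises `p (p + d - 2)`, with value
`-((d - 2) / 2)²`.
-/

open scoped InnerProductSpace

section NormRpow

variable {E : Type*} [NormedAddCommGroup E] [InnerProductSpace ℝ E] {x : E}

theorem contDiffAt_norm_rpow {n : WithTop ℕ∞} (hx : x ≠ 0) (p : ℝ) :
    ContDiffAt ℝ n (fun y : E => ‖y‖ ^ p) x :=
  (contDiffAt_norm ℝ hx).rpow_const_of_ne (norm_ne_zero_iff.mpr hx)

theorem hasFDerivAt_norm_rpow_of_ne_zero (hx : x ≠ 0) (p : ℝ) :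
    HasFDerivAt (fun y : E => ‖y‖ ^ p) ((p * ‖x‖ ^ (p - 2)) • innerSL ℝ x) x := by
  have hsq := (hasFDerivAt_norm_rpow x one_lt_two).rpow_const (p := p / 2)
    (.inl (rpow_pos_of_pos (norm_pos_iff.mpr hx) 2).ne')
  simp only [← rpow_mul (norm_nonneg _), mul_div_cancel₀ p (two_ne_zero' ℝ)] at hsq
  refine hsq.congr_fderiv ?_
  rw [sub_self, rpow_zero, smul_smul]
  ring_nf

theorem fderiv_fderiv_norm_rpow_apply_apply (hx : x ≠ 0) (p : ℝ) (v w : E) :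
    fderiv ℝ (fderiv ℝ fun y : E => ‖y‖ ^ p) x v w
      = p * ‖x‖ ^ (p - 2) * ⟪v, w⟫_ℝ + p * (p - 2) * ‖x‖ ^ (p - 4) * ⟪x, v⟫_ℝ * ⟪x, w⟫_ℝ := by
  have hfderiv : (fderiv ℝ fun y : E => ‖y‖ ^ p)
      =ᶠ[nhds x] fun y => (p * ‖y‖ ^ (p - 2)) • innerSL ℝ y :=
    (eventually_ne_nhds hx).mono fun y hy => (hasFDerivAt_norm_rpow_of_ne_zero hy p).fderiv
  have hsecond := ((hasFDerivAt_norm_rpow_of_ne_zero hx (p - 2)).const_mul p).fun_smul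
    (innerSL ℝ (E := E)).hasFDerivAt
  have hexp : p - 2 - 2 = p - 4 := by ring
  rw [hfderiv.fderiv_eq, HasFDerivAt.fderiv hsecond]
  simp only [hexp, add_apply, FunLike.coe_smul, Pi.smul_apply,
    ContinuousLinearMap.smulRight_apply, innerSL_apply_apply ℝ, smul_eq_mul]
  ring

theorem laplacian_norm_rpow [FiniteDimensional ℝ E] (hx : x ≠ 0) (p : ℝ) :
    Laplacian.laplacian (fun y : E => ‖y‖ ^ p) x
      = p * (p + Module.finrank ℝ E - 2) * ‖x‖ ^ (p - 2) := by
  let b := stdOrthonormalBasis ℝ E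
  have hpow : ‖x‖ ^ (p - 2) = ‖x‖ ^ (p - 4) * ‖x‖ ^ 2 := by
    rw [← rpow_ofNat, ← rpow_add (norm_pos_iff.mpr hx)]
    ring_nf
  calc Laplacian.laplacian (fun y : E => ‖y‖ ^ p) x
      = ∑ i, (p * ‖x‖ ^ (p - 2) + p * (p - 2) * ‖x‖ ^ (p - 4) * ⟪x, b i⟫_ℝ ^ 2) := by
        simp [InnerProductSpace.laplacian_eq_iteratedFDeriv_orthonormalBasis _ b,
          iteratedFDeriv_two_apply, fderiv_fderiv_norm_rpow_apply_apply hx, mul_assoc, sq]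
    _ = Module.finrank ℝ E * (p * ‖x‖ ^ (p - 2)) + p * (p - 2) * ‖x‖ ^ (p - 4) * ‖x‖ ^ 2 := by
        simp [Finset.sum_add_distrib, ← Finset.mul_sum, b.sum_sq_inner_left]
    _ = p * (p + Module.finrank ℝ E - 2) * ‖x‖ ^ (p - 2) := by
        rw [hpow]
        ring

end NormRpow

theorem tsupport_norm_sq {X F : Type*} [TopologicalSpace X] [NormedAddCommGroup F] (f : X → F) :
    tsupport (fun x => ‖f x‖ ^ 2) = tsupport f :=
  congrArg closure (by ext; simp)

section Integration

variable {X : Type*} [TopologicalSpace X] [MeasurableSpace X] [OpensMeasurableSpace X] [T2Space X]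
  {μ : Measure X} [IsFiniteMeasureOnCompacts μ] {K : Set X}

theorem integrable_of_continuousOn_of_support_subset {f : X → ℝ} (hK : IsCompact K)
    (hf : ContinuousOn f K) (hsupp : Function.support f ⊆ K) : Integrable f μ :=
  (integrableOn_iff_integrable_of_support_subset hsupp).mp
    (hf.integrableOn_compact' hK hK.measurableSet)

theorem integrable_mul_of_continuousOn_of_tsupport_subset {u q : X → ℝ} (hK : IsCompact K)
    (hu : ContinuousOn u K) (hq : Continuous q) (hsupp : tsupport q ⊆ K) :
    Integrable (fun x => u x * q x) μ :=
  integrable_of_continuousOn_of_support_subset hK (hu.mul hq.continuousOn)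
    ((Function.support_mul_subset_right u q).trans ((subset_tsupport q).trans hsupp))

end Integration

section IntegrationByParts

variable {E : Type*} [NormedAddCommGroup E] [NormedSpace ℝ E] [MeasurableSpace E]
  {μ : Measure E} {u q : E → ℝ}

theorem integrable_mul_fderiv_of_tsupport [OpensMeasurableSpace E] [IsFiniteMeasureOnCompacts μ]
    (hu : ContinuousOn u (tsupport q)) (hq : ContDiff ℝ 1 q) (hc : HasCompactSupport q)
    (v : E) : Integrable (fun x => u x * fderiv ℝ q x v) μ :=
  integrable_mul_of_continuousOn_of_tsupport_subset hc.isCompact hu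
    ((hq.continuous_fderiv one_ne_zero).clm_apply continuous_const)
    (tsupport_fderiv_apply_subset ℝ v)

theorem integrable_fderiv_mul_of_tsupport [OpensMeasurableSpace E] [IsFiniteMeasureOnCompacts μ]
    (hu : ∀ x ∈ tsupport q, ContDiffAt ℝ 1 u x) (hq : Continuous q) (hc : HasCompactSupport q)
    (v : E) : Integrable (fun x => fderiv ℝ u x v * q x) μ :=
  integrable_mul_of_continuousOn_of_tsupport_subset hc.isCompact
    (fun x hx => ((hu x hx).continuousAt_fderiv one_ne_zero).clm_apply continuousAt_const
      |>.continuousWithinAt) hq subset_rfl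

theorem integral_mul_fderiv_add_fderiv_mul_eq_zero [BorelSpace E] [FiniteDimensional ℝ E]
    [μ.IsAddHaarMeasure] (hu : ∀ x ∈ tsupport q, ContDiffAt ℝ 1 u x) (hq : ContDiff ℝ 1 q)
    (hc : HasCompactSupport q) (v : E) :
    ∫ x, (u x * fderiv ℝ q x v + fderiv ℝ u x v * q x) ∂μ = 0 := by
  have hcont : ContinuousOn u (tsupport q) := fun x hx => (hu x hx).continuousAt.continuousWithinAt
  have hleft := integrable_mul_fderiv_of_tsupport (μ := μ) hcont hq hc v
  have hright := integrable_fderiv_mul_of_tsupport (μ := μ) hu hq.continuous hc v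
  have hparts := integral_mul_fderiv_eq_neg_fderiv_mul_of_integrable hright hleft
    (integrable_mul_of_continuousOn_of_tsupport_subset hc.isCompact hcont hq.continuous subset_rfl)
    (fun x hx => (hu x hx).differentiableAt one_ne_zero)
    (fun x _ => hq.differentiable one_ne_zero x)
  rw [integral_add hleft hright, hparts, neg_add_cancel]

end IntegrationByParts

section MagneticDerivative

variable {E : Type*} [NormedAddCommGroup E] [InnerProductSpace ℝ E]
  {A : E → E} {φ : E → ℝ} {g : E → ℂ} {x : E}

/-- The magnetic gradient `(∇ - iA)ψ` at `x`, encoded by its component `(∂ᵥ - iAᵥ)ψ` in each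
direction `v`; the vector potential `A` enters through `Aᵥ = ⟪A, v⟫`. -/
noncomputable def magneticDeriv (A : E → E) (ψ : E → ℂ) (x v : E) : ℂ :=
  fderiv ℝ ψ x v - Complex.I * (⟪A x, v⟫_ℝ : ℝ) * ψ x

theorem magneticDeriv_of_notMem_tsupport (hx : x ∉ tsupport g) (v : E) :
    magneticDeriv A g x v = 0 := by
  simp [magneticDeriv, fderiv_of_notMem_tsupport ℝ hx, image_eq_zero_of_notMem_tsupport hx]

theorem magneticDeriv_ofReal_mul (hφ : DifferentiableAt ℝ φ x) (hg : DifferentiableAt ℝ g x)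
    (v : E) :
    magneticDeriv A (fun y => (φ y : ℂ) * g y) x v
      = φ x * magneticDeriv A g x v + fderiv ℝ φ x v * g x := by
  have hmul : HasFDerivAt (fun y => (φ y : ℂ) * g y) _ x := hφ.hasFDerivAt.smul hg.hasFDerivAt
  simp only [magneticDeriv, hmul.fderiv, add_apply, smul_apply, Complex.real_smul,
    ContinuousLinearMap.smulRight_apply]
  ring

theorem fderiv_norm_sq_eq_inner_magneticDeriv (hg : DifferentiableAt ℝ g x) (v : E) :
    fderiv ℝ (fun y => ‖g y‖ ^ 2) x v = 2 * ⟪g x, magneticDeriv A g x v⟫_ℝ := by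
  have hpotential (r : ℝ) : ⟪g x, Complex.I * r * g x⟫_ℝ = 0 := by
    simp [Complex.inner, mul_assoc, mul_comm (g x).im]
  rw [magneticDeriv, inner_sub_right, hpotential, sub_zero, hg.hasFDerivAt.norm_sq.fderiv]
  simp [mul_add]

theorem norm_sq_magneticDeriv_ofReal_mul (hφ : DifferentiableAt ℝ φ x)
    (hg : DifferentiableAt ℝ g x) (v : E) :
    ‖magneticDeriv A (fun y => (φ y : ℂ) * g y) x v‖ ^ 2
      = φ x ^ 2 * ‖magneticDeriv A g x v‖ ^ 2
        + φ x * fderiv ℝ φ x v * fderiv ℝ (fun y => ‖g y‖ ^ 2) x v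
        + fderiv ℝ φ x v ^ 2 * ‖g x‖ ^ 2 := by
  rw [magneticDeriv_ofReal_mul hφ hg, fderiv_norm_sq_eq_inner_magneticDeriv (A := A) hg,
    ← Complex.real_smul, ← Complex.real_smul, norm_add_sq_real, norm_smul, norm_smul, mul_pow,
    mul_pow, norm_eq_abs, norm_eq_abs, sq_abs, sq_abs, real_inner_smul_left,
    real_inner_smul_right, real_inner_comm]
  ring

theorem contDiffAt_mul_fderiv_apply (hφ : ContDiffAt ℝ 2 φ x) (v : E) :
    ContDiffAt ℝ 1 (fun y => φ y * fderiv ℝ φ y v) x :=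
  (hφ.of_le one_le_two).mul
    ((hφ.fderiv_right (m := 1) (by norm_num)).clm_apply contDiffAt_const)

theorem fderiv_mul_fderiv_apply (hφ : ContDiffAt ℝ 2 φ x) (v : E) :
    fderiv ℝ (fun y => φ y * fderiv ℝ φ y v) x v
      = fderiv ℝ φ x v ^ 2 + φ x * fderiv ℝ (fderiv ℝ φ) x v v := by
  have hfderiv : DifferentiableAt ℝ (fderiv ℝ φ) x :=
    (hφ.fderiv_right (m := 1) (by norm_num)).differentiableAt one_ne_zero
  have hmul := (hφ.differentiableAt two_ne_zero).hasFDerivAt.fun_mul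
    (hfderiv.hasFDerivAt.clm_apply (hasFDerivAt_const v x))
  rw [HasFDerivAt.fderiv hmul]
  simp only [ContinuousLinearMap.comp_zero, zero_add, add_apply, smul_apply,
    ContinuousLinearMap.flip_apply, smul_eq_mul]
  ring

theorem norm_sq_magneticDeriv_ofReal_mul_add (hφ : ∀ x ∈ tsupport g, ContDiffAt ℝ 2 φ x)
    (hg : Differentiable ℝ g) (x v : E) :
    ‖magneticDeriv A (fun y => (φ y : ℂ) * g y) x v‖ ^ 2
        + φ x * fderiv ℝ (fderiv ℝ φ) x v v * ‖g x‖ ^ 2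
      = φ x ^ 2 * ‖magneticDeriv A g x v‖ ^ 2
        + (φ x * fderiv ℝ φ x v * fderiv ℝ (fun y => ‖g y‖ ^ 2) x v
          + fderiv ℝ (fun y => φ y * fderiv ℝ φ y v) x v * ‖g x‖ ^ 2) := by
  by_cases hx : x ∈ tsupport g
  · rw [norm_sq_magneticDeriv_ofReal_mul ((hφ x hx).differentiableAt two_ne_zero) (hg x),
      fderiv_mul_fderiv_apply (hφ x hx)]
    ring
  · have hmul : x ∉ tsupport fun y => (φ y : ℂ) * g y := fun h => hx (tsupport_mul_subset_right h)
    simp [magneticDeriv_of_notMem_tsupport hx, magneticDeriv_of_notMem_tsupport hmul,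
      image_eq_zero_of_notMem_tsupport hx, fderiv_norm_sq_eq_inner_magneticDeriv (A := 0) (hg x)]

end MagneticDerivative

section GroundState

variable {E : Type*} [NormedAddCommGroup E] [InnerProductSpace ℝ E] [MeasurableSpace E]
  {μ : Measure E} {A : E → E} {φ w : E → ℝ} {g : E → ℂ}

theorem integrable_mul_norm_sq_magneticDeriv [OpensMeasurableSpace E] [IsFiniteMeasureOnCompacts μ]
    (hw : ContinuousOn w (tsupport g)) (hA : ContinuousOn A (tsupport g)) (hg : ContDiff ℝ 1 g)
    (hc : HasCompactSupport g) (v : E) :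
    Integrable (fun x => w x * ‖magneticDeriv A g x v‖ ^ 2) μ := by
  refine integrable_of_continuousOn_of_support_subset hc.isCompact ?_ fun x => ?_
  · have := hg.continuous
    have := hg.continuous_fderiv one_ne_zero
    unfold magneticDeriv
    fun_prop
  · contrapose
    intro hx
    simp [magneticDeriv_of_notMem_tsupport hx]

theorem integrable_mul_fderiv_fderiv_mul_norm_sq
    [OpensMeasurableSpace E] [IsFiniteMeasureOnCompacts μ]
    (hφ : ∀ x ∈ tsupport g, ContDiffAt ℝ 2 φ x) (hg : Continuous g) (hc : HasCompactSupport g)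
    (v : E) : Integrable (fun x => φ x * fderiv ℝ (fderiv ℝ φ) x v v * ‖g x‖ ^ 2) μ := by
  refine integrable_of_continuousOn_of_support_subset hc.isCompact ?_ fun x => ?_
  · have hφ0 : ContinuousOn φ (tsupport g) := fun x hx =>
      (hφ x hx).continuousAt.continuousWithinAt
    have hφ2 : ContinuousOn (fderiv ℝ (fderiv ℝ φ)) (tsupport g) := fun x hx =>
      ((hφ x hx).fderiv_right (m := 1) (by norm_num)).continuousAt_fderiv one_ne_zero
        |>.continuousWithinAt
    fun_prop
  · contrapose
    intro hx
    simp [image_eq_zero_of_notMem_tsupport hx]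

theorem integrable_norm_sq_magneticDeriv_ofReal_mul
    [OpensMeasurableSpace E] [IsFiniteMeasureOnCompacts μ]
    (hφ : ∀ x ∈ tsupport g, ContDiffAt ℝ 2 φ x) (hA : ContinuousOn A (tsupport g))
    (hg : ContDiff ℝ 1 g) (hc : HasCompactSupport g) (v : E) :
    Integrable (fun x => ‖magneticDeriv A (fun y => (φ y : ℂ) * g y) x v‖ ^ 2) μ := by
  have hφ0 : ContinuousOn φ (tsupport g) := fun x hx =>
    (hφ x hx).continuousAt.continuousWithinAt
  have hφ1 : ContinuousOn (fderiv ℝ φ) (tsupport g) := fun x hx =>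
    ((hφ x hx).continuousAt_fderiv two_ne_zero).continuousWithinAt
  have := hg.continuous
  have := hg.continuous_fderiv one_ne_zero
  refine integrable_of_continuousOn_of_support_subset hc.isCompact ?_ fun x => ?_
  · have hcont : ContinuousOn (fun x => φ x * magneticDeriv A g x v + fderiv ℝ φ x v * g x)
        (tsupport g) := by
      unfold magneticDeriv
      fun_prop
    refine (hcont.norm.pow 2).congr fun x hx => ?_
    simp only [Pi.pow_apply, magneticDeriv_ofReal_mul
      ((hφ x hx).differentiableAt two_ne_zero) (hg.differentiable one_ne_zero x)]
  · contrapose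
    intro hx
    have hmul : x ∉ tsupport fun y => (φ y : ℂ) * g y := fun h => hx (tsupport_mul_subset_right h)
    simp [magneticDeriv_of_notMem_tsupport hmul]

variable [BorelSpace E] [FiniteDimensional ℝ E] [μ.IsAddHaarMeasure]

theorem integral_norm_sq_magneticDeriv_ofReal_mul_add (hφ : ∀ x ∈ tsupport g, ContDiffAt ℝ 2 φ x)
    (hA : ContinuousOn A (tsupport g)) (hg : ContDiff ℝ 1 g) (hc : HasCompactSupport g) (v : E) :
    ∫ x, ‖magneticDeriv A (fun y => (φ y : ℂ) * g y) x v‖ ^ 2 ∂μ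
        + ∫ x, φ x * fderiv ℝ (fderiv ℝ φ) x v v * ‖g x‖ ^ 2 ∂μ
      = ∫ x, φ x ^ 2 * ‖magneticDeriv A g x v‖ ^ 2 ∂μ := by
  have hφ0 : ContinuousOn φ (tsupport g) := fun x hx => (hφ x hx).continuousAt.continuousWithinAt
  have hflux : ∀ x ∈ tsupport fun y => ‖g y‖ ^ 2,
      ContDiffAt ℝ 1 (fun y => φ y * fderiv ℝ φ y v) x := fun x hx =>
    contDiffAt_mul_fderiv_apply (hφ x (tsupport_norm_sq g ▸ hx)) v
  have hq : ContDiff ℝ 1 fun y => ‖g y‖ ^ 2 := hg.norm_sq ℝ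
  have hqc : HasCompactSupport fun y => ‖g y‖ ^ 2 := by rwa [HasCompactSupport, tsupport_norm_sq]
  have hfluxint := (integrable_mul_fderiv_of_tsupport (μ := μ)
    (fun x hx => (hflux x hx).continuousAt.continuousWithinAt) hq hqc v).fun_add
    (integrable_fderiv_mul_of_tsupport hflux hq.continuous hqc v)
  rw [← integral_add (integrable_norm_sq_magneticDeriv_ofReal_mul hφ hA hg hc v)
    (integrable_mul_fderiv_fderiv_mul_norm_sq hφ hg.continuous hc v)]
  simp only [norm_sq_magneticDeriv_ofReal_mul_add hφ (hg.differentiable one_ne_zero)]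
  rw [integral_add (integrable_mul_norm_sq_magneticDeriv (hφ0.fun_pow 2) hA hg hc v) hfluxint,
    integral_mul_fderiv_add_fderiv_mul_eq_zero hflux hq hqc, add_zero]

theorem integral_sum_norm_sq_magneticDeriv_ofReal_mul_add_laplacian {ι : Type*} [Fintype ι]
    (b : OrthonormalBasis ι ℝ E) (hφ : ∀ x ∈ tsupport g, ContDiffAt ℝ 2 φ x)
    (hA : ContinuousOn A (tsupport g)) (hg : ContDiff ℝ 1 g) (hc : HasCompactSupport g) :
    ∫ x, ∑ j, ‖magneticDeriv A (fun y => (φ y : ℂ) * g y) x (b j)‖ ^ 2 ∂μ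
        + ∫ x, φ x * Laplacian.laplacian φ x * ‖g x‖ ^ 2 ∂μ
      = ∫ x, φ x ^ 2 * ∑ j, ‖magneticDeriv A g x (b j)‖ ^ 2 ∂μ := by
  have hφ0 : ContinuousOn φ (tsupport g) := fun x hx => (hφ x hx).continuousAt.continuousWithinAt
  simp only [InnerProductSpace.laplacian_eq_iteratedFDeriv_orthonormalBasis φ b,
    iteratedFDeriv_two_apply, Matrix.cons_val_zero, Matrix.cons_val_one, Finset.mul_sum,
    Finset.sum_mul]
  rw [integral_finsetSum _ fun j _ => integrable_norm_sq_magneticDeriv_ofReal_mul hφ hA hg hc (b j),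
    integral_finsetSum _ fun j _ =>
      integrable_mul_fderiv_fderiv_mul_norm_sq hφ hg.continuous hc (b j),
    integral_finsetSum _ fun j _ =>
      integrable_mul_norm_sq_magneticDeriv (hφ0.fun_pow 2) hA hg hc (b j),
    ← Finset.sum_add_distrib]
  exact Finset.sum_congr rfl fun j _ =>
    integral_norm_sq_magneticDeriv_ofReal_mul_add hφ hA hg hc (b j)

end GroundState

theorem stmt9_general {E : Type*} [NormedAddCommGroup E] [InnerProductSpace ℝ E]
    [FiniteDimensional ℝ E] [MeasurableSpace E] [BorelSpace E] (μ : Measure E)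
    [μ.IsAddHaarMeasure] {ι : Type*} [Fintype ι] (b : OrthonormalBasis ι ℝ E) (p : ℝ) {A : E → E}
    (hA : ContinuousOn A {0}ᶜ) {g : E → ℂ} (hg : ContDiff ℝ 1 g) (hsupp : HasCompactSupport g)
    (hvan : ∀ᶠ x in nhds (0 : E), g x = 0) :
    ∫ x, ∑ j, ‖magneticDeriv A (fun y => (‖y‖ ^ p : ℝ) * g y) x (b j)‖ ^ 2 ∂μ
        + p * (p + Module.finrank ℝ E - 2) * ∫ x, ‖(‖x‖ ^ p : ℝ) * g x‖ ^ 2 / ‖x‖ ^ 2 ∂μ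
      = ∫ x, (∑ j, ‖magneticDeriv A g x (b j)‖ ^ 2) * ‖x‖ ^ (2 * p) ∂μ := by
  have hne : ∀ x ∈ tsupport g, x ≠ 0 := fun x hx h =>
    notMem_tsupport_iff_eventuallyEq.mpr hvan (h ▸ hx)
  have hhardy (x : E) : ‖x‖ ^ p * Laplacian.laplacian (fun y : E => ‖y‖ ^ p) x * ‖g x‖ ^ 2
      = p * (p + Module.finrank ℝ E - 2) * (‖(‖x‖ ^ p : ℝ) * g x‖ ^ 2 / ‖x‖ ^ 2) := by
    by_cases hx : x = 0
    · simp [hx, hvan.self_of_nhds]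
    · rw [laplacian_norm_rpow hx, rpow_sub (norm_pos_iff.mpr hx), rpow_ofNat, norm_mul, mul_pow,
        Complex.norm_real, norm_eq_abs, sq_abs]
      ring
  have hground := integral_sum_norm_sq_magneticDeriv_ofReal_mul_add_laplacian (μ := μ) b
    (fun x hx => contDiffAt_norm_rpow (hne x hx) p) (hA.mono hne) hg hsupp
  simp only [hhardy, integral_const_mul] at hground
  have hweight (x : E) : ‖x‖ ^ (2 * p) = (‖x‖ ^ p) ^ 2 := by
    rw [mul_comm, rpow_mul (norm_nonneg x), rpow_ofNat]
  simpa only [hweight, mul_comm (∑ _, _)] using hground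

theorem stmt9 (d : ℕ) (hd : 2 ≤ d)
    (A : EuclideanSpace ℝ (Fin d) → EuclideanSpace ℝ (Fin d)) (hA : ContDiff ℝ (⊤ : ℕ∞) A)
    (g : EuclideanSpace ℝ (Fin d) → ℂ) (hg : ContDiff ℝ (⊤ : ℕ∞) g)
    (hsupp : HasCompactSupport g) (hvan : ∀ᶠ x in nhds (0 : EuclideanSpace ℝ (Fin d)), g x = 0) :
    (∫ x, ∑ j, ‖fderiv ℝ (fun y => (‖y‖ ^ (-(((d:ℝ) - 2)/2)) : ℝ) * g y) x
            (EuclideanSpace.single j (1:ℝ))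
          - Complex.I * (A x j : ℝ) * ((‖x‖ ^ (-(((d:ℝ) - 2)/2)) : ℝ) * g x)‖ ^ 2)
      - ((d - 2 : ℝ)/2)^2 *
          (∫ x, ‖(‖x‖ ^ (-(((d:ℝ) - 2)/2)) : ℝ) * g x‖^2 / ‖x‖^2)
    = ∫ x, (∑ j, ‖fderiv ℝ g x (EuclideanSpace.single j (1:ℝ))
              - Complex.I * (A x j : ℝ) * g x‖ ^ 2) * ‖x‖ ^ (-((d:ℝ) - 2)) := by
  have hconst : -(((d:ℝ) - 2)/2) * (-(((d:ℝ) - 2)/2) + d - 2) = -(((d:ℝ) - 2)/2)^2 := by ring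
  have hexp : 2 * -(((d:ℝ) - 2)/2) = -((d:ℝ) - 2) := by ring
  simpa [magneticDeriv, EuclideanSpace.inner_single_right, hconst, hexp, ← sub_eq_add_neg] using
    stmt9_general volume (EuclideanSpace.basisFun (Fin d) ℝ) (-(((d:ℝ) - 2)/2))
      hA.continuous.continuousOn (hg.of_le (mod_cast le_top)) hsupp hvan
end
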